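/- arXiv:2505.13371 — 9 statements merged into one kernel-verified Lean document; each statement's English description precedes it below -/
import Mathlib

section
/- There exists an absolute constant c > 0 with the following property. For every integer n ≥ 2 and every simple graph G on n vertices whose average degree d := 2·e(G)/n satisfies d ≥ (log n)⁴, there exists a nonempty set S of vertices of G such that the induced subgraph G[S] has average degree at least c·(log d / log n)·d and maximum degree at most 2·d^{3/2}. -/
open scoped Classical

/-!
Pass to a vertex set `U` of maximum density `D ≥ d`, let `L` be the vertices of `U` of degree at
most `s * D` with `s = d ^ (1 / 8)`, and let `H` be the remaining ones; by maximality no subset of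
`U` is denser than `U`. If `L` spans a constant proportion of the edges, then keeping its vertices
with probability `d / D` leaves an average degree of order `d`. Otherwise a constant proportion of
the edges runs between `L` and `H`. Split `H` into `K ≈ log n / log s` classes according to the
scale `Δ ≤ · < s * Δ` of the degree into `L`; one class carries a `1 / K` proportion of those
edges. By maximality few of its vertices have large degree inside the class, and these are dropped;
then keeping the rest with probability `d / D` and the vertices of `L` with probability `d / Δ`
balances the degrees on the two sides. In both cases expected degrees are at most `2 * d * s ^ 2`,
so a second moment bound shows that the vertices of the sample of degree above `12 * d * s ^ 2`
can be deleted at the cost of at most half of the edges.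
-/

namespace AlmostRegular

open Finset

variable {V : Type*} {G : SimpleGraph V} {A B L S T U : Finset V} {v : V}

/-- The number of neighbours of `v` in `S`, as a real number; for `v ∈ S` this is the degree of
`v` in `G[S]`. -/
noncomputable def degIn (G : SimpleGraph V) (S : Finset V) (v : V) : ℝ :=
  ((S.filter fun w => G.Adj v w).card : ℝ)

/-- The number `e(S, T)` of adjacent pairs in `S × T`. In `e(S, S)` every edge of `G[S]` is counted
twice, so that `e(S, S)` is `S.card` times the average degree of `G[S]`. -/
noncomputable def adjCount (G : SimpleGraph V) (S T : Finset V) : ℝ :=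
  ∑ v ∈ S, degIn G T v

/-- Some nonempty vertex set induces a subgraph of average degree at least `r` and of maximum
degree at most `t`. -/
def HasDenseInducedSubgraph (G : SimpleGraph V) (r t : ℝ) : Prop :=
  ∃ S : Finset V, S.Nonempty ∧ r ≤ (∑ v ∈ S, degIn G S v) / S.card ∧ ∀ v ∈ S, degIn G S v ≤ t

lemma degIn_nonneg : 0 ≤ degIn G S v :=
  Nat.cast_nonneg _

lemma degIn_mono (h : S ⊆ T) : degIn G S v ≤ degIn G T v :=
  Nat.cast_le.mpr (card_le_card (filter_subset_filter _ h))

lemma degIn_le_card : degIn G S v ≤ S.card :=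
  Nat.cast_le.mpr (card_filter_le _ _)

lemma degIn_eq_sum : degIn G S v = ∑ w ∈ S, if G.Adj v w then (1 : ℝ) else 0 := by
  simp [degIn]

lemma degIn_eq_add_sdiff (h : A ⊆ S) : degIn G S v = degIn G A v + degIn G (S \ A) v := by
  simp only [degIn_eq_sum]
  rw [add_comm, sum_sdiff h]

lemma degIn_eq_sum_adj [Fintype V] :
    degIn G S v = ∑ w with G.Adj v w, if w ∈ S then (1 : ℝ) else 0 := by
  simp only [sum_filter, ← ite_and, degIn_eq_sum, and_comm (a := G.Adj _ _)]
  simp [ite_and]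

lemma adjCount_nonneg : 0 ≤ adjCount G S T :=
  sum_nonneg fun _ _ => degIn_nonneg

lemma adjCount_comm : adjCount G S T = adjCount G T S := by
  simp only [adjCount, degIn_eq_sum]
  rw [sum_comm]
  simp only [G.adj_comm]

lemma adjCount_mono (hAB : A ⊆ B) (hST : S ⊆ T) : adjCount G A S ≤ adjCount G B T :=
  (sum_le_sum fun _ _ => degIn_mono hST).trans
    (sum_le_sum_of_subset_of_nonneg hAB fun _ _ _ => degIn_nonneg)

lemma adjCount_eq_add_sdiff_left (h : A ⊆ S) :
    adjCount G S T = adjCount G A T + adjCount G (S \ A) T := by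
  rw [add_comm]
  exact (sum_sdiff h).symm

lemma adjCount_eq_add_sdiff_right (h : A ⊆ S) :
    adjCount G T S = adjCount G T A + adjCount G T (S \ A) := by
  simp only [adjCount, degIn_eq_add_sdiff h, sum_add_distrib]

lemma adjCount_self_eq_add_sdiff (h : A ⊆ S) :
    adjCount G S S = adjCount G A A + 2 * adjCount G (S \ A) A + adjCount G (S \ A) (S \ A) := by
  rw [adjCount_eq_add_sdiff_left h, adjCount_eq_add_sdiff_right h, adjCount_eq_add_sdiff_right h,
    adjCount_comm (S := A) (T := S \ A)]
  ring

lemma adjCount_le_card_mul_card : adjCount G S T ≤ S.card * T.card := by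
  simpa [adjCount] using sum_le_card_nsmul S (degIn G T) T.card fun _ _ => degIn_le_card

lemma adjCount_univ [Fintype V] : adjCount G univ univ = 2 * (Nat.card G.edgeSet : ℝ) := by
  have hdeg (v : V) : degIn G univ v = (G.degree v : ℝ) := by
    rw [degIn, ← G.card_neighborFinset_eq_degree, G.neighborFinset_eq_filter]
  have hsum := G.sum_degrees_eq_twice_card_edges
  rw [SimpleGraph.edgeFinset_card, ← Nat.card_eq_fintype_card] at hsum
  simp only [adjCount, hdeg]
  exact_mod_cast hsum

lemma mul_card_le_sum_of_subset {ι : Type*} {s t : Finset ι} {f : ι → ℝ} {a : ℝ} (hts : t ⊆ s)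
    (hf : ∀ i ∈ s, 0 ≤ f i) (ha : ∀ i ∈ t, a ≤ f i) : a * t.card ≤ ∑ i ∈ s, f i :=
  calc a * t.card ≤ ∑ i ∈ t, f i := by
        simpa [mul_comm] using card_nsmul_le_sum t f a ha
    _ ≤ ∑ i ∈ s, f i := sum_le_sum_of_subset_of_nonneg hts fun i hi _ => hf i hi

lemma adjCount_sub_le_adjCount_filter {t : ℝ} (ht : 0 < t) :
    adjCount G S S - 2 / t * ∑ v ∈ S, degIn G S v ^ 2 ≤
      adjCount G (S.filter fun v => degIn G S v ≤ t) (S.filter fun v => degIn G S v ≤ t) := by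
  set A := S.filter fun v => degIn G S v ≤ t with hA
  have hAS : A ⊆ S := filter_subset _ _
  have hsplit := adjCount_self_eq_add_sdiff (G := G) hAS
  have hremoved := adjCount_eq_add_sdiff_right (G := G) (T := S \ A) hAS
  have hnonneg : 0 ≤ adjCount G (S \ A) (S \ A) := adjCount_nonneg
  have hmarkov : adjCount G (S \ A) S ≤ 1 / t * ∑ v ∈ S, degIn G S v ^ 2 := by
    rw [mul_sum]
    refine (sum_le_sum fun v hv => ?_).trans
      (sum_le_sum_of_subset_of_nonneg sdiff_subset fun v _ _ => by positivity)
    have hv : t < degIn G S v := by simpa [hA, (mem_sdiff.mp hv).1] using (mem_sdiff.mp hv).2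
    rw [one_div, le_inv_mul_iff₀ ht, sq]
    exact mul_le_mul_of_nonneg_right hv.le degIn_nonneg
  have hdouble : 2 / t * ∑ v ∈ S, degIn G S v ^ 2 = 2 * (1 / t * ∑ v ∈ S, degIn G S v ^ 2) := by
    ring
  linarith

namespace HasDenseInducedSubgraph

variable {r r' t t' : ℝ}

lemma mono (h : HasDenseInducedSubgraph G r t) (hr : r' ≤ r) (ht : t ≤ t') :
    HasDenseInducedSubgraph G r' t' :=
  let ⟨S, hS, havg, hmax⟩ := h
  ⟨S, hS, hr.trans havg, fun v hv => (hmax v hv).trans ht⟩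

lemma of_vertex (G : SimpleGraph V) (v : V) : HasDenseInducedSubgraph G 0 0 :=
  ⟨{v}, singleton_nonempty v, by simp [degIn, filter_singleton],
    by simp [degIn, filter_singleton]⟩

lemma of_adj {u v : V} (h : G.Adj u v) : HasDenseInducedSubgraph G 1 1 := by
  have hdeg : ∀ w ∈ ({u, v} : Finset V), degIn G {u, v} w = 1 := by
    simp [degIn_eq_sum, sum_pair h.ne, h, h.symm]
  refine ⟨{u, v}, insert_nonempty _ _, ?_, fun w hw => (hdeg w hw).le⟩
  rw [sum_congr rfl hdeg]
  simp [card_pair h.ne]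

end HasDenseInducedSubgraph

/-! ### Random vertex subsets -/

lemma prod_triple_le {p : V → ℝ} (h0 : ∀ v, 0 ≤ p v) {u v w : V} (huv : u ≠ v) (huw : u ≠ w) :
    ∏ x ∈ {u, v, w}, p x ≤ p u * p v * (p w + if v = w then 1 else 0) := by
  have huv0 : 0 ≤ p u * p v := mul_nonneg (h0 u) (h0 v)
  rcases eq_or_ne v w with rfl | hvw
  · rw [pair_eq_singleton, prod_pair huv, if_pos rfl]
    exact le_mul_of_one_le_right huv0 (le_add_of_nonneg_left (h0 v))
  · rw [prod_insert (by simp [huv, huw]), prod_pair hvw, if_neg hvw, add_zero, mul_assoc]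

section Sampling

variable [Fintype V] {p : V → ℝ} {u : V}

/-- The probability of the set `S` when each vertex `v` is kept independently with
probability `p v`. -/
noncomputable def sampleWeight (p : V → ℝ) (S : Finset V) : ℝ :=
  (∏ v ∈ S, p v) * ∏ v ∈ Sᶜ, (1 - p v)

/-- The expectation of a function of the random set containing each vertex `v` independently
with probability `p v`. -/
noncomputable def sampleExp (p : V → ℝ) : (Finset V → ℝ) →ₗ[ℝ] ℝ :=
  ∑ S, sampleWeight p S • LinearMap.proj S

/-- The total weight of the neighbours of `u`: the expected number of neighbours of `u` in a
random set containing each vertex `v` independently with probability `p v`. -/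
noncomputable def weightedDegree (G : SimpleGraph V) (p : V → ℝ) (u : V) : ℝ :=
  ∑ v with G.Adj u v, p v

lemma sampleExp_apply (f : Finset V → ℝ) : sampleExp p f = ∑ S, sampleWeight p S * f S := by
  simp [sampleExp]

lemma sampleWeight_nonneg (h0 : ∀ v, 0 ≤ p v) (h1 : ∀ v, p v ≤ 1) : 0 ≤ sampleWeight p S :=
  mul_nonneg (prod_nonneg fun v _ => h0 v) (prod_nonneg fun v _ => sub_nonneg.mpr (h1 v))

lemma exists_pos_of_sampleExp_pos (h0 : ∀ v, 0 ≤ p v) (h1 : ∀ v, p v ≤ 1) {f : Finset V → ℝ}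
    (hf : 0 < sampleExp p f) : ∃ S, 0 < f S := by
  by_contra! hneg
  rw [sampleExp_apply] at hf
  exact hf.not_ge (sum_nonpos fun S _ =>
    mul_nonpos_of_nonneg_of_nonpos (sampleWeight_nonneg h0 h1) (hneg S))

lemma sampleExp_subset (p : V → ℝ) (A : Finset V) :
    sampleExp p (fun S => if A ⊆ S then 1 else 0) = ∏ v ∈ A, p v := by
  have hweight (S : Finset V) : sampleWeight p S * (if A ⊆ S then 1 else 0) =
      (∏ v ∈ S, p v) * ∏ v ∈ Sᶜ, if v ∈ A then 0 else 1 - p v := by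
    split_ifs with hS
    · rw [mul_one, sampleWeight]
      congr 1
      exact prod_congr rfl fun v hv => (if_neg fun hvA => mem_compl.mp hv (hS hvA)).symm
    · obtain ⟨v, hvA, hvS⟩ := not_subset.mp hS
      have hzero : ∏ v ∈ Sᶜ, (if v ∈ A then 0 else 1 - p v) = 0 :=
        prod_eq_zero (mem_compl.mpr hvS) (if_pos hvA)
      rw [hzero, mul_zero, mul_zero]
  calc sampleExp p (fun S => if A ⊆ S then 1 else 0)
      = ∏ v, (p v + if v ∈ A then 0 else 1 - p v) := by
        rw [sampleExp_apply, Fintype.prod_add]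
        exact sum_congr rfl fun S _ => hweight S
    _ = ∏ v, if v ∈ A then p v else 1 := by
        refine prod_congr rfl fun v _ => ?_
        split_ifs <;> ring
    _ = ∏ v ∈ A, p v := by simp

lemma sampleExp_mem (p : V → ℝ) (u : V) :
    sampleExp p (fun S => if u ∈ S then 1 else 0) = p u := by
  simpa using sampleExp_subset p {u}

lemma sampleExp_degIn :
    sampleExp p (fun S => if u ∈ S then degIn G S u else 0) = p u * weightedDegree G p u := by
  have hcount : (fun S => if u ∈ S then degIn G S u else 0) =
      ∑ v with G.Adj u v, fun S => if {u, v} ⊆ S then (1 : ℝ) else 0 := by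
    ext S
    by_cases hu : u ∈ S <;> simp [hu, insert_subset_iff, degIn_eq_sum_adj]
  rw [hcount, map_sum, weightedDegree, mul_sum]
  refine sum_congr rfl fun v hv => ?_
  rw [sampleExp_subset, prod_pair (mem_filter.mp hv).2.ne]

lemma sampleExp_degIn_sq_le (h0 : ∀ v, 0 ≤ p v) :
    sampleExp p (fun S => if u ∈ S then degIn G S u ^ 2 else 0) ≤
      p u * (weightedDegree G p u * (weightedDegree G p u + 1)) := by
  have hcount : (fun S => if u ∈ S then degIn G S u ^ 2 else 0) =
      ∑ v with G.Adj u v, ∑ w with G.Adj u w,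
        fun S => if {u, v, w} ⊆ S then (1 : ℝ) else 0 := by
    ext S
    by_cases hu : u ∈ S <;>
      simp [hu, insert_subset_iff, degIn_eq_sum_adj, sq, ite_and]
  simp only [hcount, map_sum, sampleExp_subset]
  calc ∑ v with G.Adj u v, ∑ w with G.Adj u w, ∏ x ∈ {u, v, w}, p x
      ≤ ∑ v with G.Adj u v, ∑ w with G.Adj u w, p u * p v * (p w + if v = w then 1 else 0) :=
        sum_le_sum fun v hv => sum_le_sum fun w hw =>
          prod_triple_le h0 (mem_filter.mp hv).2.ne (mem_filter.mp hw).2.ne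
    _ = ∑ v with G.Adj u v, p u * p v * (weightedDegree G p u + 1) := by
        refine sum_congr rfl fun v hv => ?_
        rw [← mul_sum, sum_add_distrib, sum_ite_eq, if_pos hv, weightedDegree]
    _ = p u * (weightedDegree G p u * (weightedDegree G p u + 1)) := by
        rw [← sum_mul, ← mul_sum, mul_assoc, weightedDegree]

lemma le_sampleExp_sum_degIn_sub_sq (h0 : ∀ v, 0 ≤ p v) {a : ℝ} (ha : 0 ≤ a) (r : ℝ) :
    ∑ u, p u * (weightedDegree G p u -
        a * (weightedDegree G p u * (weightedDegree G p u + 1)) - r) ≤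
      sampleExp p fun S => ∑ u ∈ S, (degIn G S u - a * degIn G S u ^ 2 - r) := by
  have hlinear : (fun S => ∑ u ∈ S, (degIn G S u - a * degIn G S u ^ 2 - r)) =
      ∑ u, ((fun S => if u ∈ S then degIn G S u else 0) -
        a • (fun S => if u ∈ S then degIn G S u ^ 2 else 0) -
        r • fun S => if u ∈ S then (1 : ℝ) else 0) := by
    ext S
    simp [sum_sub_distrib]
  simp only [hlinear, map_sum, map_sub, map_smul, smul_eq_mul, sampleExp_degIn, sampleExp_mem]
  refine sum_le_sum fun u _ => ?_
  linarith [mul_le_mul_of_nonneg_left (sampleExp_degIn_sq_le (G := G) (u := u) h0) ha]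

end Sampling

namespace HasDenseInducedSubgraph

variable {r t : ℝ}

lemma of_sampling [Fintype V] {p : V → ℝ} (h0 : ∀ v, 0 ≤ p v) (h1 : ∀ v, p v ≤ 1) (ht : 0 < t)
    (hr : 0 ≤ r) (hdeg : ∀ u, 0 < p u → 4 * (weightedDegree G p u + 1) ≤ t)
    (hdense : r * ∑ u, p u < 1 / 2 * ∑ u, p u * weightedDegree G p u) :
    HasDenseInducedSubgraph G r t := by
  have hterm (u : V) : p u * (1 / 2 * weightedDegree G p u - r) ≤ p u * (weightedDegree G p u -
      2 / t * (weightedDegree G p u * (weightedDegree G p u + 1)) - r) := by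
    rcases (h0 u).eq_or_lt with hu | hu
    · simp [← hu]
    have hsq : 2 / t * (weightedDegree G p u * (weightedDegree G p u + 1)) ≤
        1 / 2 * weightedDegree G p u := by
      have hnonneg : 0 ≤ weightedDegree G p u := sum_nonneg fun v _ => h0 v
      rw [div_mul_eq_mul_div, div_le_iff₀ ht]
      linarith [mul_le_mul_of_nonneg_left (hdeg u hu) hnonneg]
    exact mul_le_mul_of_nonneg_left (by linarith) hu.le
  have hexp : 0 < ∑ u, p u * (1 / 2 * weightedDegree G p u - r) := by
    simp only [mul_sub, sum_sub_distrib, ← sum_mul, mul_left_comm _ (1 / 2 : ℝ), ← mul_sum]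
    linarith
  obtain ⟨S, hS⟩ := exists_pos_of_sampleExp_pos h0 h1 <| hexp.trans_le <|
    (sum_le_sum fun u _ => hterm u).trans
      (le_sampleExp_sum_degIn_sub_sq (G := G) h0 (div_nonneg zero_le_two ht.le) r)
  simp only [sum_sub_distrib, ← mul_sum, sum_const, nsmul_eq_mul] at hS
  set A := S.filter fun u => degIn G S u ≤ t with hA
  have htrim : adjCount G S S - 2 / t * ∑ v ∈ S, degIn G S v ^ 2 ≤ adjCount G A A :=
    adjCount_sub_le_adjCount_filter ht
  have hvol : (S.card : ℝ) * r < adjCount G A A := (sub_pos.mp hS).trans_le htrim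
  have hAne : A.Nonempty := by
    rw [nonempty_iff_ne_empty]
    intro hempty
    simp only [hempty, adjCount, sum_empty] at hvol
    exact hvol.not_ge (by positivity)
  refine ⟨A, hAne, ?_, fun v hv => (degIn_mono (filter_subset _ _)).trans (mem_filter.mp hv).2⟩
  have hcard : (A.card : ℝ) ≤ S.card := Nat.cast_le.mpr (card_filter_le _ _)
  rw [le_div_iff₀ (Nat.cast_pos.mpr hAne.card_pos), mul_comm]
  exact (mul_le_mul_of_nonneg_right hcard hr).trans hvol.le

lemma of_two_rates [Finite V] (hAB : Disjoint A B) {a b : ℝ} (ha0 : 0 ≤ a) (ha1 : a ≤ 1)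
    (hb0 : 0 ≤ b) (hb1 : b ≤ 1) (ht : 0 < t) (hr : 0 ≤ r)
    (hdeg : ∀ v ∈ A ∪ B, 4 * (a * degIn G A v + b * degIn G B v + 1) ≤ t)
    (hdense : r * (a * A.card + b * B.card) <
      1 / 2 * (a ^ 2 * adjCount G A A + 2 * (a * b * adjCount G A B) + b ^ 2 * adjCount G B B)) :
    HasDenseInducedSubgraph G r t := by
  cases nonempty_fintype V
  let p (v : V) : ℝ := a * (if v ∈ A then 1 else 0) + b * (if v ∈ B then 1 else 0)
  have hp {v : V} : 0 < p v → v ∈ A ∪ B := by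
    contrapose!
    simp +contextual [p]
  have hsum (f : V → ℝ) : ∑ v, p v * f v = a * ∑ v ∈ A, f v + b * ∑ v ∈ B, f v := by
    simp [p, add_mul, sum_add_distrib, ← mul_sum]
  have hwdeg (u : V) : weightedDegree G p u = a * degIn G A u + b * degIn G B u := by
    simp only [degIn_eq_sum, ← hsum, weightedDegree, sum_filter, mul_ite, mul_one, mul_zero]
  refine of_sampling (p := p) (fun v => by positivity) (fun v => ?_) ht hr
    (fun u hu => by simpa only [hwdeg] using hdeg u (hp hu)) ?_
  · by_cases hvA : v ∈ A
    · simpa [p, hvA, disjoint_left.mp hAB hvA] using ha1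
    · simp only [p, hvA, if_false, mul_zero, zero_add]
      split_ifs <;> linarith
  · have hmass : ∑ v, p v = a * A.card + b * B.card := by simpa using hsum fun _ => 1
    have hcomm : ∑ v ∈ B, degIn G A v = adjCount G A B := adjCount_comm
    rw [hmass, hsum]
    simp only [hwdeg, sum_add_distrib, ← mul_sum, hcomm]
    exact hdense.trans_eq (by simp only [adjCount]; ring)

lemma of_degIn_le [Finite V] {D d s : ℝ} (hs : 1 ≤ s) (hd : 1 ≤ d) (hdD : d ≤ D) (hr : 0 ≤ r)
    (hdeg : ∀ v ∈ L, degIn G L v ≤ s * D) (hdense : 2 * r * (D * L.card) < d * adjCount G L L) :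
    HasDenseInducedSubgraph G r (12 * d * s ^ 2) := by
  have hD0 : 0 < D := by linarith
  have hds : 1 ≤ d * s ^ 2 := one_le_mul_of_one_le_of_one_le hd (one_le_pow₀ hs)
  refine of_two_rates (disjoint_empty_right L) (a := d / D) (b := 0) (by positivity)
    ((div_le_one hD0).mpr hdD) le_rfl zero_le_one (by positivity) hr (fun v hv => ?_) ?_
  · have hv : d / D * degIn G L v ≤ d / D * (s * D) :=
      mul_le_mul_of_nonneg_left (hdeg v (by simpa using hv)) (by positivity)
    have hcancel : d / D * (s * D) = d * s := by field_simp
    have hss : d * s ≤ d * s ^ 2 := by gcongr; exact le_self_pow₀ hs two_ne_zero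
    linarith
  · have hscaled := mul_lt_mul_of_pos_left hdense (show 0 < d / (2 * D ^ 2) by positivity)
    calc r * (d / D * L.card + 0 * (∅ : Finset V).card)
        = d / (2 * D ^ 2) * (2 * r * (D * L.card)) := by field_simp; ring
      _ < d / (2 * D ^ 2) * (d * adjCount G L L) := hscaled
      _ = _ := by ring

lemma of_bipartite [Finite V] (hdisj : Disjoint L B) {D d s Δ N : ℝ} (hs : 1 ≤ s) (hd : 1 ≤ d)
    (hdD : d ≤ D) (hDΔ : D ≤ Δ) (hr : 0 < r) (hN : 0 < N) (hLcard : L.card ≤ N)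
    (hBcard : Δ * B.card ≤ D * N)
    (hLL : ∀ v ∈ L, degIn G L v ≤ s * D) (hLB : ∀ v ∈ L, degIn G B v ≤ s * D)
    (hBL : ∀ v ∈ B, degIn G L v ≤ s * Δ) (hBB : ∀ v ∈ B, degIn G B v ≤ s ^ 2 * D)
    (hdense : 3 * r * (D * N) ≤ d * adjCount G B L) :
    HasDenseInducedSubgraph G r (12 * d * s ^ 2) := by
  have hD0 : 0 < D := by linarith
  have hΔ0 : 0 < Δ := by linarith
  have hds : 1 ≤ d * s ^ 2 := one_le_mul_of_one_le_of_one_le hd (one_le_pow₀ hs)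
  have hss : d * s ≤ d * s ^ 2 := by gcongr; exact le_self_pow₀ hs two_ne_zero
  refine of_two_rates hdisj (a := d / Δ) (b := d / D) (by positivity)
    ((div_le_one hΔ0).mpr (hdD.trans hDΔ)) (by positivity) ((div_le_one hD0).mpr hdD)
    (by positivity) hr.le (fun v hv => ?_) ?_
  · suffices d / Δ * degIn G L v ≤ d * s ∧ d / D * degIn G B v ≤ d * s ^ 2 by linarith
    simp only [div_mul_eq_mul_div, div_le_iff₀ hΔ0, div_le_iff₀ hD0, mul_assoc]
    rcases mem_union.mp hv with hv | hv
    · have hsD : s * D ≤ s * Δ := by gcongr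
      have hsD' : s * D ≤ s ^ 2 * D := by gcongr; exact le_self_pow₀ hs two_ne_zero
      exact ⟨by gcongr; exact (hLL v hv).trans hsD, by gcongr; exact (hLB v hv).trans hsD'⟩
    · exact ⟨by gcongr; exact hBL v hv, by gcongr; exact hBB v hv⟩
  · have hBrate : d / D * B.card ≤ d / Δ * N := by
      rw [div_mul_eq_mul_div, div_mul_eq_mul_div, div_le_div_iff₀ hD0 hΔ0]
      linarith [mul_le_mul_of_nonneg_left hBcard (zero_le_one.trans hd)]
    have hLrate : d / Δ * L.card ≤ d / Δ * N := by gcongr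
    calc r * (d / Δ * L.card + d / D * B.card)
        ≤ r * (2 * (d / Δ * N)) := by gcongr; linarith
      _ < 3 * r * (d / Δ * N) := by
          have : 0 < r * (d / Δ * N) := by positivity
          linarith
      _ = d / (Δ * D) * (3 * r * (D * N)) := by field_simp
      _ ≤ d / (Δ * D) * (d * adjCount G B L) := by gcongr
      _ = d / Δ * (d / D) * adjCount G L B := by rw [adjCount_comm]; field_simp
      _ ≤ _ := by
          have hL : 0 ≤ (d / Δ) ^ 2 * adjCount G L L := mul_nonneg (sq_nonneg _) adjCount_nonneg
          have hB : 0 ≤ (d / D) ^ 2 * adjCount G B B := mul_nonneg (sq_nonneg _) adjCount_nonneg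
          linarith

end HasDenseInducedSubgraph

/-! ### Degree classes in a set of maximum density -/

lemma exists_scale_sum_le {ι : Type*} {H : Finset ι} {f : ι → ℝ} {D s : ℝ} {K : ℕ} (hD : 0 < D)
    (hs : 1 < s) (hK : K ≠ 0) (hf : ∀ i ∈ H, f i < D * s ^ K) :
    ∃ Δ, D ≤ Δ ∧ ∑ i ∈ H, f i ≤ D * H.card +
      K * ∑ i ∈ H with Δ ≤ f i ∧ f i < s * Δ, f i := by
  let F (j : ℕ) (i : ι) : ℝ := if D * s ^ j ≤ f i ∧ f i < s * (D * s ^ j) then f i else 0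
  have hF (j : ℕ) (i : ι) : 0 ≤ F j i := by
    simp only [F]
    split_ifs with h
    · exact le_trans (by positivity) h.1
    · exact le_rfl
  have hpointwise : ∀ i ∈ H, f i ≤ D + ∑ j ∈ range K, F j i := by
    intro i hi
    rcases le_total (f i) D with hiD | hiD
    · exact hiD.trans (le_add_of_nonneg_right (sum_nonneg fun j _ => hF j i))
    obtain ⟨j, hj, hj'⟩ := exists_nat_pow_near ((one_le_div hD).mpr hiD) hs
    rw [le_div_iff₀' hD] at hj
    rw [div_lt_iff₀' hD, pow_succ', mul_left_comm] at hj'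
    have hjK : j < K := by
      rw [← pow_lt_pow_iff_right₀ hs, ← mul_lt_mul_iff_right₀ hD]
      exact hj.trans_lt (hf i hi)
    have hle : F j i ≤ ∑ j ∈ range K, F j i :=
      single_le_sum (fun j _ => hF j i) (mem_range.mpr hjK)
    have hFj : F j i = f i := if_pos ⟨hj, hj'⟩
    linarith
  obtain ⟨j, -, hj⟩ := exists_max_image (range K) (fun j => ∑ i ∈ H, F j i)
    (nonempty_range_iff.mpr hK)
  refine ⟨D * s ^ j, le_mul_of_one_le_right hD.le (one_le_pow₀ hs.le), ?_⟩
  calc ∑ i ∈ H, f i ≤ ∑ i ∈ H, (D + ∑ j ∈ range K, F j i) := sum_le_sum hpointwise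
    _ = D * H.card + ∑ j ∈ range K, ∑ i ∈ H, F j i := by
        rw [sum_add_distrib, sum_const, nsmul_eq_mul, mul_comm, sum_comm]
    _ ≤ D * H.card + K * ∑ i ∈ H, F j i := by
        gcongr
        simpa using sum_le_card_nsmul (range K) (fun j => ∑ i ∈ H, F j i) _ hj
    _ = _ := by simp only [F, sum_filter]

lemma exists_max_density [Finite V] [Nonempty V] (G : SimpleGraph V) :
    ∃ (U : Finset V) (D : ℝ), U.Nonempty ∧ adjCount G U U = D * U.card ∧
      ∀ A : Finset V, adjCount G A A ≤ D * A.card := by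
  cases nonempty_fintype V
  obtain ⟨U, hU, hmax⟩ := exists_max_image (univ.filter Finset.Nonempty)
    (fun A : Finset V => adjCount G A A / A.card) ⟨univ, by simp⟩
  have hUne : U.Nonempty := (mem_filter.mp hU).2
  refine ⟨U, adjCount G U U / U.card, hUne, ?_, fun A => ?_⟩
  · rw [div_mul_cancel₀ _ (Nat.cast_ne_zero.mpr hUne.card_ne_zero)]
  · rcases A.eq_empty_or_nonempty with rfl | hA
    · simp [adjCount]
    · rw [← div_le_iff₀ (Nat.cast_pos.mpr hA.card_pos)]
      exact hmax A (by simp [hA])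

lemma exists_subset_degIn_le {C : Finset V} {D s Δ : ℝ} (hD : 0 < D) (hs : 2 ≤ s) (hΔ : 0 ≤ Δ)
    (hlow : ∀ v ∈ C, Δ ≤ degIn G L v) (hhigh : ∀ v ∈ C, degIn G L v ≤ s * Δ)
    (hC : adjCount G C C ≤ D * C.card) :
    ∃ B ⊆ C, (∀ v ∈ B, degIn G C v ≤ s ^ 2 * D) ∧ adjCount G C L ≤ 2 * adjCount G B L := by
  set B := C.filter fun v => degIn G C v ≤ s ^ 2 * D with hB
  have hBC : B ⊆ C := filter_subset _ _
  refine ⟨B, hBC, fun v hv => (mem_filter.mp hv).2, ?_⟩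
  have hremoved : s ^ 2 * (C \ B).card ≤ C.card := by
    have hmarkov : s ^ 2 * D * (C \ B).card ≤ adjCount G C C := by
      refine mul_card_le_sum_of_subset sdiff_subset (fun _ _ => degIn_nonneg) fun v hv => ?_
      have hv : s ^ 2 * D < degIn G C v := by
        simpa [hB, (mem_sdiff.mp hv).1] using (mem_sdiff.mp hv).2
      exact hv.le
    refine le_of_mul_le_mul_left ?_ hD
    linarith
  have hhalf : 2 * adjCount G (C \ B) L ≤ adjCount G C L :=
    calc 2 * adjCount G (C \ B) L ≤ s * ((C \ B).card * (s * Δ)) := by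
          gcongr
          · exact adjCount_nonneg
          · simpa [adjCount] using sum_le_card_nsmul (C \ B) (degIn G L) (s * Δ) fun v hv =>
              hhigh v (sdiff_subset hv)
      _ = Δ * (s ^ 2 * (C \ B).card) := by ring
      _ ≤ Δ * C.card := by gcongr
      _ ≤ adjCount G C L := mul_card_le_sum_of_subset subset_rfl (fun _ _ => degIn_nonneg) hlow
  linarith [adjCount_eq_add_sdiff_left (G := G) (T := L) hBC]

lemma adjCount_le_or_exists_scale {D s : ℝ} {K : ℕ} (hs : 16 ≤ s) (hD : 0 < D)
    (hvol : adjCount G U U = D * U.card) (hmax : ∀ A ⊆ U, adjCount G A A ≤ D * A.card)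
    (hK : K ≠ 0) (hUK : U.card < D * s ^ K) (hL : L = U.filter fun v => degIn G U v ≤ s * D) :
    D * U.card ≤ 4 * adjCount G L L ∨ ∃ Δ, D ≤ Δ ∧ ∃ C ⊆ U \ L,
      (∀ v ∈ C, Δ ≤ degIn G L v ∧ degIn G L v ≤ s * Δ) ∧
        D * U.card ≤ 4 * (K * adjCount G C L) := by
  rw [or_iff_not_imp_left, not_le]
  intro hsparse
  have hLU : L ⊆ U := hL ▸ filter_subset _ _
  have hHcard : 16 * ((U \ L).card : ℝ) ≤ U.card := by
    have hmarkov : s * D * (U \ L).card ≤ adjCount G U U := by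
      refine mul_card_le_sum_of_subset sdiff_subset (fun _ _ => degIn_nonneg) fun v hv => ?_
      have hv : s * D < degIn G U v := by
        simpa [hL, (mem_sdiff.mp hv).1] using (mem_sdiff.mp hv).2
      exact hv.le
    refine le_of_mul_le_mul_left ?_ hD
    calc D * (16 * (U \ L).card) ≤ D * (s * (U \ L).card) := by gcongr
      _ ≤ D * U.card := by linarith
  have hdegL : ∀ v ∈ U \ L, degIn G L v < D * s ^ K := fun v _ =>
    (degIn_le_card.trans (Nat.cast_le.mpr (card_le_card hLU))).trans_lt hUK
  obtain ⟨Δ, hΔ, hscale⟩ := exists_scale_sum_le hD (by linarith) hK hdegL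
  set C := (U \ L).filter fun v => Δ ≤ degIn G L v ∧ degIn G L v < s * Δ
  change adjCount G (U \ L) L ≤ D * (U \ L).card + K * adjCount G C L at hscale
  refine ⟨Δ, hΔ, C, filter_subset _ _, fun v hv => ?_, ?_⟩
  · obtain ⟨hlow, hhigh⟩ := (mem_filter.mp hv).2
    exact ⟨hlow, hhigh.le⟩
  · have hsplit := adjCount_self_eq_add_sdiff (G := G) hLU
    have hHmax := hmax (U \ L) sdiff_subset
    have hDH : D * (16 * (U \ L).card) ≤ D * U.card := by gcongr
    have hvol0 : 0 ≤ D * (U.card : ℝ) := by positivity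
    linarith

namespace HasDenseInducedSubgraph

lemma of_max_density [Finite V] (hU : U.Nonempty) {D d s : ℝ} {K : ℕ} (hs : 16 ≤ s) (hd : 1 ≤ d)
    (hdD : d ≤ D) (hvol : adjCount G U U = D * U.card)
    (hmax : ∀ A ⊆ U, adjCount G A A ≤ D * A.card) (hK : K ≠ 0) (hUK : U.card < D * s ^ K) :
    HasDenseInducedSubgraph G (d / (24 * K)) (12 * d * s ^ 2) := by
  have hs1 : 1 ≤ s := by linarith
  have : 0 < d := by linarith
  have hD0 : 0 < D := by linarith
  have hN : (0 : ℝ) < U.card := Nat.cast_pos.mpr hU.card_pos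
  have hK1 : (1 : ℝ) ≤ K := Nat.one_le_cast.mpr (Nat.one_le_iff_ne_zero.mpr hK)
  set L := U.filter fun v => degIn G U v ≤ s * D with hL
  have hLU : L ⊆ U := filter_subset _ _
  have hLcard : (L.card : ℝ) ≤ U.card := Nat.cast_le.mpr (card_le_card hLU)
  have hLdeg {A : Finset V} (hA : A ⊆ U) : ∀ v ∈ L, degIn G A v ≤ s * D := fun v hv =>
    (degIn_mono hA).trans (mem_filter.mp hv).2
  rcases adjCount_le_or_exists_scale hs hD0 hvol hmax hK hUK hL with
    hdense | ⟨Δ, hDΔ, C, hC, hscale, hdense⟩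
  · refine of_degIn_le hs1 hd hdD (by positivity) (hLdeg hLU) ?_
    calc 2 * (d / (24 * K)) * (D * L.card) ≤ 2 * (d / (24 * 1)) * (D * U.card) := by gcongr
      _ < d * (D * U.card / 4) := by
          have : 0 < d * (D * U.card) := by positivity
          linarith
      _ ≤ d * adjCount G L L := by gcongr; linarith
  · have hCU : C ⊆ U := hC.trans sdiff_subset
    obtain ⟨B, hBC, hBdeg, hBL⟩ := exists_subset_degIn_le hD0 (by linarith) (hD0.le.trans hDΔ)
      (fun v hv => (hscale v hv).1) (fun v hv => (hscale v hv).2) (hmax C hCU)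
    have hBcard : Δ * B.card ≤ D * U.card :=
      calc Δ * B.card ≤ adjCount G B L := mul_card_le_sum_of_subset subset_rfl
            (fun _ _ => degIn_nonneg) fun v hv => (hscale v (hBC hv)).1
        _ ≤ D * U.card := (adjCount_mono (hBC.trans hCU) hLU).trans_eq hvol
    refine of_bipartite (disjoint_sdiff.mono_right (hBC.trans hC)) hs1 hd hdD hDΔ
      (by positivity) hN hLcard hBcard (hLdeg hLU) (hLdeg (hBC.trans hCU))
      (fun v hv => (hscale v (hBC hv)).2) (fun v hv => (degIn_mono hBC).trans (hBdeg v hv)) ?_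
    calc 3 * (d / (24 * K)) * (D * U.card)
        ≤ 3 * (d / (24 * K)) * (4 * (K * (2 * adjCount G B L))) := by
          have hdenseB : D * U.card ≤ 4 * (K * (2 * adjCount G B L)) := hdense.trans (by gcongr)
          gcongr
      _ = d * adjCount G B L := by field_simp; norm_num

lemma of_adjCount_univ [Fintype V] [Nonempty V] {d s : ℝ} {K : ℕ} (hs : 16 ≤ s) (hd : 1 ≤ d)
    (hvol : adjCount G univ univ = d * Fintype.card V) (hK : K ≠ 0)
    (hVK : Fintype.card V < s ^ K) :
    HasDenseInducedSubgraph G (d / (24 * K)) (12 * d * s ^ 2) := by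
  obtain ⟨U, D, hU, hUvol, hmax⟩ := exists_max_density G
  have hdD : d ≤ D := by
    refine le_of_mul_le_mul_right ?_ (Nat.cast_pos.mpr (Fintype.card_pos (α := V)))
    simpa only [hvol, card_univ] using hmax univ
  refine of_max_density hU hs hd hdD hUvol (fun A _ => hmax A) hK ?_
  calc (U.card : ℝ) ≤ Fintype.card V := Nat.cast_le.mpr (card_le_univ U)
    _ < s ^ K := hVK
    _ ≤ D * s ^ K := le_mul_of_one_le_left (by positivity) (hd.trans hdD)

/-- With `s = d ^ (1 / 8)` the maximum degree `12 * d * s ^ 2` is at most `2 * d ^ (3 / 2)`, and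
`K ≈ 8 * log n / log d` scales suffice. -/
lemma of_le_average_degree [Fintype V] [Nonempty V] {d : ℝ} (hd : 16 ^ 8 ≤ d)
    (hvol : adjCount G univ univ = d * Fintype.card V) (hdV : d ≤ Fintype.card V) :
    HasDenseInducedSubgraph G (1 / 216 * (Real.log d / Real.log (Fintype.card V)) * d)
      (2 * d ^ ((3 : ℝ) / 2)) := by
  have hd1 : 1 < d := by linarith
  have hd0 : 0 < d := by linarith
  set n : ℝ := (Fintype.card V : ℝ)
  set s : ℝ := d ^ ((1 : ℝ) / 8) with hs
  have hs8 : s ^ 8 = d := by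
    rw [hs, ← Real.rpow_mul_natCast hd0.le]
    norm_num
  have hs16 : 16 ≤ s :=
    le_of_pow_le_pow_left₀ (by norm_num) (Real.rpow_nonneg hd0.le _) (hs8.symm ▸ hd)
  have hs12 : d ^ ((3 : ℝ) / 2) = s ^ 12 := by
    rw [hs, ← Real.rpow_mul_natCast hd0.le]
    norm_num
  obtain ⟨k, hk, hVK⟩ := exists_nat_pow_near (hd1.le.trans hdV) (by linarith : 1 < s)
  have hlogn : 0 < Real.log n := Real.log_pos (hd1.trans_le hdV)
  have hscales : ((k + 1 : ℕ) : ℝ) * Real.log d ≤ 9 * Real.log n := by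
    have hlogk : k * Real.log s ≤ Real.log n := by
      rw [← Real.log_pow]
      exact Real.log_le_log (by positivity) hk
    have hlogd : Real.log d = 8 * Real.log s := by
      rw [← hs8, Real.log_pow]
      norm_num
    have hlogle : Real.log d ≤ Real.log n := Real.log_le_log hd0 hdV
    rw [hlogd] at hlogle ⊢
    push_cast
    linarith
  refine (of_adjCount_univ hs16 hd1.le hvol k.succ_ne_zero hVK).mono ?_ ?_
  · have hratio : Real.log d / Real.log n ≤ 9 / (k + 1 : ℕ) := by
      rw [div_le_div_iff₀ hlogn (by positivity)]
      linarith
    calc 1 / 216 * (Real.log d / Real.log n) * d ≤ 1 / 216 * (9 / (k + 1 : ℕ)) * d := by gcongr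
      _ = d / (24 * (k + 1 : ℕ)) := by field_simp; norm_num
  · have hs2 : 6 ≤ s ^ 2 := by nlinarith
    calc 12 * d * s ^ 2 = 6 * (2 * s ^ 10) := by rw [← hs8]; ring
      _ ≤ s ^ 2 * (2 * s ^ 10) := by gcongr
      _ = 2 * d ^ ((3 : ℝ) / 2) := by rw [hs12]; ring

lemma of_average_degree_lt {u v : V} (huv : G.Adj u v) {d n : ℝ} (hd0 : 0 < d) (hd : d < 16 ^ 8)
    (hdn : d ≤ n) (hn : 1 ≤ n) :
    HasDenseInducedSubgraph G (1 / 16 ^ 8 * (Real.log d / Real.log n) * d)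
      (2 * d ^ ((3 : ℝ) / 2)) := by
  have hlogn : 0 ≤ Real.log n := Real.log_nonneg hn
  rcases le_or_gt d 1 with hd1 | hd1
  · have hratio : Real.log d / Real.log n ≤ 0 :=
      div_nonpos_of_nonpos_of_nonneg (Real.log_nonpos hd0.le hd1) hlogn
    refine (of_vertex G u).mono (mul_nonpos_of_nonpos_of_nonneg ?_ hd0.le) (by positivity)
    exact mul_nonpos_of_nonneg_of_nonpos (by positivity) hratio
  · have hratio : Real.log d / Real.log n ≤ 1 :=
      div_le_one_of_le₀ (Real.log_le_log hd0 hdn) hlogn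
    refine (of_adj huv).mono ?_ ?_
    · calc 1 / 16 ^ 8 * (Real.log d / Real.log n) * d ≤ 1 / 16 ^ 8 * 1 * 16 ^ 8 := by gcongr
        _ = 1 := by norm_num
    · linarith [Real.one_le_rpow hd1.le (show (0 : ℝ) ≤ 3 / 2 by norm_num)]

end HasDenseInducedSubgraph

end AlmostRegular

open AlmostRegular in
theorem dense_almost_regular_induced_subgraph_general {V : Type*} [Finite V] {G : SimpleGraph V}
    {n : ℕ} (hn : Nat.card V = n) {d : ℝ} (hd : d = 2 * (Nat.card G.edgeSet : ℝ) / n)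
    (hd0 : 0 < d) :
    HasDenseInducedSubgraph G (1 / 16 ^ 8 * (Real.log d / Real.log n) * d)
      (2 * d ^ ((3 : ℝ) / 2)) := by
  cases nonempty_fintype V
  rw [Nat.card_eq_fintype_card] at hn
  subst hn
  have hG : G ≠ ⊥ := by
    rintro rfl
    simp [hd] at hd0
  obtain ⟨u, v, huv⟩ := G.ne_bot_iff_exists_adj.mp hG
  have : Nonempty V := ⟨u⟩
  have hn0 : (0 : ℝ) < Fintype.card V := Nat.cast_pos.mpr Fintype.card_pos
  have hvol : adjCount G Finset.univ Finset.univ = d * Fintype.card V := by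
    rw [adjCount_univ, hd, div_mul_cancel₀ _ hn0.ne']
  have hdn : d ≤ Fintype.card V :=
    le_of_mul_le_mul_right (hvol ▸ adjCount_le_card_mul_card) hn0
  rcases le_or_gt (16 ^ 8) d with hlarge | hsmall
  · have hratio : 0 ≤ Real.log d / Real.log (Fintype.card V) :=
      div_nonneg (Real.log_nonneg (by linarith)) (Real.log_natCast_nonneg _)
    exact (HasDenseInducedSubgraph.of_le_average_degree hlarge hvol hdn).mono
      (by gcongr; norm_num) le_rfl
  · exact .of_average_degree_lt huv hd0 hsmall hdn (Nat.one_le_cast.mpr Fintype.card_pos)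

/-- **Lemma 6.2 of the paper.** There is an absolute constant `c > 0` such that every
graph `G` on `n ≥ 2` vertices with average degree `d = 2·e(G)/n ≥ (log n)⁴` contains a
nonempty vertex set `S` such that the induced subgraph `G[S]` has average degree at least
`c·(log d/log n)·d` and maximum degree at most `2·d^{3/2}`.
(Here the degree of `v ∈ S` in `G[S]` is the number of neighbours of `v` lying in `S`.) -/
theorem dense_almost_regular_induced_subgraph :
    ∃ c : ℝ, 0 < c ∧
      ∀ n : ℕ, 2 ≤ n →
        ∀ G : SimpleGraph (Fin n),
          ∀ d : ℝ, d = 2 * (Nat.card G.edgeSet : ℝ) / n →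
            (Real.log n) ^ 4 ≤ d →
            ∃ S : Finset (Fin n), S.Nonempty ∧
              c * (Real.log d / Real.log n) * d ≤
                (∑ v ∈ S, ((S.filter fun w => G.Adj v w).card : ℝ)) / S.card ∧
              ∀ v ∈ S, ((S.filter fun w => G.Adj v w).card : ℝ) ≤ 2 * d ^ ((3 : ℝ) / 2) :=
  ⟨1 / 16 ^ 8, by positivity, fun n hn _ _ hd hlog =>
    dense_almost_regular_induced_subgraph_general (Nat.card_fin n) hd
      ((pow_pos (Real.log_pos (by exact_mod_cast hn)) 4).trans_le hlog)⟩
end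

section
/- Let O and G' be graphs on a finite vertex set V with O ∩ G' = ∅, and let e = xy ∈ O be an edge such that there is no vertex v with both xv ∈ G' and yv ∈ G'. Let p ∈ [0,1] and let G₁ be a random subgraph of O in which each edge of O is included independently with probability p. Define O' = { f ∈ O \ G₁ : f does not form a triangle with two edges of G' ∪ G₁ }. Then the probability that e ∈ O' equals (1−p²)^{X(e)} · (1−p)^{Y(e)}. -/
/-!
No triangle has `e` as one edge and two edges of `G'` as the others, so an open edge `e` survives
exactly when `G₁` contains no pair in `𝒳(e)` and no edge in `𝒴(e)`. In a triangle on `e`, either of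
the other two edges determines the third: hence distinct pairs in `𝒳(e)` share no edge and, since
`O` and `G'` are disjoint, no edge of such a pair lies in `𝒴(e)`. So `e ∈ O'` is the intersection of
the events that `G₁` does not contain the block `A`, for `A` ranging over pairwise disjoint blocks:
the `X(e)` pairs and the singletons of the `Y(e)` edges. These events are independent, with
probabilities `1 - p ^ 2` and `1 - p`.
-/

open scoped Classical

namespace Stmt4

variable {V : Type*}

/-- `e`, `f`, `g` are the three edges of a triangle.  (With this parametrization the
predicate is symmetric in `f` and `g`.) -/
def FormTriangle (e f g : Sym2 V) : Prop :=
  ∃ x y z : V, x ≠ y ∧ x ≠ z ∧ y ≠ z ∧ e = s(x, y) ∧ f = s(x, z) ∧ g = s(y, z)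

/-- `𝒳(e)`: the set of unordered pairs `{f, g} ⊆ O` such that `e, f, g` form an open
triangle. -/
def openTrianglePairs (O : Set (Sym2 V)) (e : Sym2 V) : Set (Sym2 (Sym2 V)) :=
  {p | ∃ f g : Sym2 V, p = s(f, g) ∧ f ∈ O ∧ g ∈ O ∧ FormTriangle e f g}

/-- `X(e) = |𝒳(e)|`. -/
noncomputable def X (O : Set (Sym2 V)) (e : Sym2 V) : ℕ := (openTrianglePairs O e).ncard

/-- `e` and `f ∈ O` span a clopen triangle: the third edge of the triangle lies in `G'`. -/
def SpanClopen (O G' : Set (Sym2 V)) (e f : Sym2 V) : Prop :=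
  f ∈ O ∧ ∃ g ∈ G', FormTriangle e f g

/-- `𝒴(e) = {f ∈ O : e, f span a clopen triangle} ∪ {e}`. -/
def Yset (O G' : Set (Sym2 V)) (e : Sym2 V) : Set (Sym2 V) :=
  {f | SpanClopen O G' e f} ∪ {e}

/-- `Y(e) = |𝒴(e)|`. -/
noncomputable def Y (O G' : Set (Sym2 V)) (e : Sym2 V) : ℕ := (Yset O G' e).ncard

/-- The edge `f = uv` forms a triangle with two edges of `H`: there is a vertex `w` with
`uw ∈ H` and `vw ∈ H`. -/
def Closes (f : Sym2 V) (H : Finset (Sym2 V)) : Prop :=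
  ∃ x y w : V, x ≠ y ∧ f = s(x, y) ∧ s(x, w) ∈ H ∧ s(y, w) ∈ H

/-- `O' = {f ∈ O \ G₁ : f does not form a triangle with two edges of G' ∪ G₁}`,
for the realisation `G₁ = S`. -/
noncomputable def Opp [DecidableEq V] (O G' S : Finset (Sym2 V)) : Finset (Sym2 V) :=
  (O \ S).filter fun f => ¬ Closes f (G' ∪ S)

section RandomSubset

variable {α ι R : Type*} [DecidableEq α] [CommRing R]

/-- The probability that a random subset of `O`, in which each element is included independently
with probability `p`, satisfies `P`. Being a polynomial in `p`, it makes sense for `p` in any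
commutative ring. -/
def randomSubsetProb (O : Finset α) (p : R) (P : Finset α → Prop) [DecidablePred P] : R :=
  ∑ S ∈ O.powerset, if P S then p ^ S.card * (1 - p) ^ (O \ S).card else 0

theorem randomSubsetProb_congr {O : Finset α} {p : R} {P Q : Finset α → Prop} [DecidablePred P]
    [DecidablePred Q] (h : ∀ S ⊆ O, (P S ↔ Q S)) :
    randomSubsetProb O p P = randomSubsetProb O p Q :=
  Finset.sum_congr rfl fun S hS => by simp only [h S (Finset.mem_powerset.1 hS)]

theorem randomSubsetProb_superset {O B : Finset α} (hB : B ⊆ O) (p : R) :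
    randomSubsetProb O p (B ⊆ ·) = p ^ B.card := by
  have hIcc : O.powerset.filter (B ⊆ ·) = (O \ B).powerset.image (B ∪ ·) := by
    rw [← Finset.Icc_eq_image_powerset hB]
    ext S
    simp only [Finset.mem_filter, Finset.mem_powerset, Finset.mem_Icc, and_comm]
  have hdisj {T : Finset α} (hT : T ∈ (O \ B).powerset) : Disjoint B T :=
    Finset.disjoint_sdiff.mono_right (Finset.mem_powerset.1 hT)
  have hinj : Set.InjOn (B ∪ ·) ((O \ B).powerset : Set (Finset α)) := fun T hT U hU h => by
    rw [← Finset.union_sdiff_cancel_left (hdisj hT), ← Finset.union_sdiff_cancel_left (hdisj hU)]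
    exact congrArg (· \ B) h
  calc randomSubsetProb O p (B ⊆ ·)
      = ∑ T ∈ (O \ B).powerset, p ^ (B ∪ T).card * (1 - p) ^ (O \ (B ∪ T)).card := by
        rw [randomSubsetProb, ← Finset.sum_filter, hIcc, Finset.sum_image hinj]
    _ = ∑ T ∈ (O \ B).powerset,
          p ^ B.card * (p ^ T.card * (1 - p) ^ ((O \ B).card - T.card)) := by
        refine Finset.sum_congr rfl fun T hT => ?_
        rw [Finset.card_union_of_disjoint (hdisj hT), ← Finset.sup_eq_union, ← sdiff_sdiff_left,
          Finset.card_sdiff_of_subset (Finset.mem_powerset.1 hT), pow_add, mul_assoc]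
    _ = p ^ B.card := by
        rw [← Finset.mul_sum, Finset.sum_pow_mul_eq_add_pow, add_sub_cancel, one_pow, mul_one]

theorem ite_forall_not_eq_sum_powerset (I : Finset ι) (P : ι → Prop) [DecidablePred P] (c : R) :
    (if ∀ i ∈ I, ¬ P i then c else 0) =
      ∑ J ∈ I.powerset, (-1) ^ J.card * if ∀ i ∈ J, P i then c else 0 := by
  have hprod : (if ∀ i ∈ I, ¬ P i then 1 else 0) = ∏ i ∈ I, (1 - if P i then (1 : R) else 0) := by
    rw [← Finset.prod_boole]
    exact Finset.prod_congr rfl fun i _ => by split_ifs <;> simp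
  rw [← one_mul c, ← zero_mul c, ← ite_mul, hprod, Finset.prod_sub, Finset.sum_mul]
  simp only [Finset.prod_const_one, Finset.prod_boole, mul_one, mul_assoc, ite_mul]

theorem randomSubsetProb_forall_not_subset {O : Finset α} {I : Finset ι} {A : ι → Finset α}
    (hA : ∀ i ∈ I, A i ⊆ O) (hI : (I : Set ι).PairwiseDisjoint A) (p : R) :
    randomSubsetProb O p (fun S => ∀ i ∈ I, ¬ A i ⊆ S) = ∏ i ∈ I, (1 - p ^ (A i).card) := by
  have hsup {J : Finset ι} (hJ : J ∈ I.powerset) :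
      randomSubsetProb O p (fun S => ∀ i ∈ J, A i ⊆ S) = ∏ i ∈ J, p ^ (A i).card := by
    have hJI := Finset.mem_powerset.1 hJ
    rw [Finset.prod_pow_eq_pow_sum, ← Finset.card_biUnion (hI.subset (Finset.coe_subset.2 hJI)),
      ← randomSubsetProb_superset (Finset.biUnion_subset.2 fun i hi => hA i (hJI hi))]
    exact randomSubsetProb_congr fun S _ => Finset.biUnion_subset.symm
  calc randomSubsetProb O p (fun S => ∀ i ∈ I, ¬ A i ⊆ S)
      = ∑ J ∈ I.powerset,
          (-1) ^ J.card * randomSubsetProb O p (fun S => ∀ i ∈ J, A i ⊆ S) := by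
        simp only [randomSubsetProb, ite_forall_not_eq_sum_powerset, Finset.mul_sum]
        exact Finset.sum_comm
    _ = ∑ J ∈ I.powerset, (-1) ^ J.card * ∏ i ∈ J, p ^ (A i).card :=
        Finset.sum_congr rfl fun J hJ => by rw [hsup hJ]
    _ = ∏ i ∈ I, (1 - p ^ (A i).card) := by
        simp only [Finset.prod_sub, Finset.prod_const_one, mul_one]

theorem randomSubsetProb_avoids_pairs_and_elements {O F : Finset α} {P : Finset (Sym2 α)}
    (hPO : ∀ q ∈ P, q.toFinset ⊆ O) (hFO : F ⊆ O) (hPdiag : ∀ q ∈ P, ¬ q.IsDiag)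
    (hP : (P : Set (Sym2 α)).PairwiseDisjoint Sym2.toFinset)
    (hPF : ∀ q ∈ P, Disjoint q.toFinset F) (p : R) :
    randomSubsetProb O p (fun S => (∀ q ∈ P, ¬ q.toFinset ⊆ S) ∧ ∀ f ∈ F, f ∉ S)
      = (1 - p ^ 2) ^ P.card * (1 - p) ^ F.card := by
  let A : Sym2 α ⊕ α → Finset α := Sum.elim Sym2.toFinset singleton
  have hAO : ∀ i ∈ P.disjSum F, A i ⊆ O := by
    rintro (q | f) hi
    · exact hPO q (Finset.inl_mem_disjSum.1 hi)
    · exact Finset.singleton_subset_iff.2 (hFO (Finset.inr_mem_disjSum.1 hi))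
  have hAdisj : (P.disjSum F : Set (Sym2 α ⊕ α)).PairwiseDisjoint A := by
    have hqf {q : Sym2 α} {f : α} (hq : q ∈ P) (hf : f ∈ F) : Disjoint q.toFinset {f} :=
      (hPF q hq).mono_right (Finset.singleton_subset_iff.2 hf)
    rintro (q | f) hi (r | g) hj hne <;>
      simp only [Finset.mem_coe, Finset.inl_mem_disjSum, Finset.inr_mem_disjSum] at hi hj
    · exact hP hi hj fun h => hne (congrArg Sum.inl h)
    · exact hqf hi hj
    · exact (hqf hj hi).symm
    · exact Finset.disjoint_singleton.2 fun h => hne (congrArg Sum.inr h)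
  have hpairs : ∏ q ∈ P, (1 - p ^ q.toFinset.card) = (1 - p ^ 2) ^ P.card :=
    Finset.prod_eq_pow_card fun q hq => by rw [Sym2.card_toFinset_of_not_isDiag q (hPdiag q hq)]
  calc randomSubsetProb O p (fun S => (∀ q ∈ P, ¬ q.toFinset ⊆ S) ∧ ∀ f ∈ F, f ∉ S)
      = randomSubsetProb O p (fun S => ∀ i ∈ P.disjSum F, ¬ A i ⊆ S) :=
        randomSubsetProb_congr fun S _ => by simp [A]
    _ = ∏ i ∈ P.disjSum F, (1 - p ^ (A i).card) := randomSubsetProb_forall_not_subset hAO hAdisj p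
    _ = (1 - p ^ 2) ^ P.card * (1 - p) ^ F.card := by
        simp only [A, Finset.prod_disjSum, Sum.elim_inl, Sum.elim_inr, Finset.card_singleton,
          pow_one, Finset.prod_const, hpairs]

end RandomSubset

theorem FormTriangle.symm {e f g : Sym2 V} : FormTriangle e f g → FormTriangle e g f := by
  rintro ⟨x, y, z, hxy, hxz, hyz, rfl, rfl, rfl⟩
  exact ⟨y, x, z, hxy.symm, hyz, hxz, Sym2.eq_swap, rfl, rfl⟩

theorem FormTriangle.ne_left {e f g : Sym2 V} : FormTriangle e f g → e ≠ f := by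
  rintro ⟨x, y, z, -, -, hyz, rfl, rfl, -⟩ h
  exact hyz (Sym2.congr_right.1 h)

theorem FormTriangle.ne_sides {e f g : Sym2 V} : FormTriangle e f g → f ≠ g := by
  rintro ⟨x, y, z, hxy, -, -, -, rfl, rfl⟩ h
  exact hxy (Sym2.congr_left.1 h)

theorem FormTriangle.third_side_unique {e f g h : Sym2 V} :
    FormTriangle e f g → FormTriangle e f h → g = h := by
  rintro ⟨x, y, z, hxy, hxz, hyz, rfl, rfl, rfl⟩ ⟨a, b, c, -, -, -, he, hf, rfl⟩
  simp only [Sym2.eq_iff] at he hf ⊢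
  grind

theorem exists_formTriangle_of_mem_openTrianglePairs {O : Set (Sym2 V)} {e f : Sym2 V}
    {q : Sym2 (Sym2 V)} (hq : q ∈ openTrianglePairs O e) (hf : f ∈ q) :
    ∃ g, q = s(f, g) ∧ f ∈ O ∧ g ∈ O ∧ FormTriangle e f g := by
  obtain ⟨a, b, rfl, ha, hb, htri⟩ := hq
  rcases Sym2.mem_iff.1 hf with rfl | rfl
  · exact ⟨b, rfl, ha, hb, htri⟩
  · exact ⟨a, Sym2.eq_swap, hb, ha, htri.symm⟩

theorem not_isDiag_of_mem_openTrianglePairs {O : Set (Sym2 V)} {e : Sym2 V} {q : Sym2 (Sym2 V)}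
    (hq : q ∈ openTrianglePairs O e) : ¬ q.IsDiag := by
  obtain ⟨f, g, rfl, -, -, htri⟩ := hq
  exact htri.ne_sides

theorem pairwiseDisjoint_openTrianglePairs [DecidableEq V] (O : Set (Sym2 V)) (e : Sym2 V) :
    (openTrianglePairs O e).PairwiseDisjoint Sym2.toFinset := fun q hq r hr hne =>
  Finset.disjoint_left.2 fun f hfq hfr => hne <| by
    obtain ⟨g, rfl, -, -, hg⟩ :=
      exists_formTriangle_of_mem_openTrianglePairs hq (Sym2.mem_toFinset.1 hfq)
    obtain ⟨h, rfl, -, -, hh⟩ :=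
      exists_formTriangle_of_mem_openTrianglePairs hr (Sym2.mem_toFinset.1 hfr)
    rw [hg.third_side_unique hh]

theorem notMem_Yset_of_mem_openTrianglePairs {O G' : Set (Sym2 V)} (hdisj : Disjoint O G')
    {e f : Sym2 V} {q : Sym2 (Sym2 V)} (hq : q ∈ openTrianglePairs O e) (hf : f ∈ q) :
    f ∉ Yset O G' e := by
  obtain ⟨g, -, -, hgO, hg⟩ := exists_formTriangle_of_mem_openTrianglePairs hq hf
  rintro (⟨-, h, hhG', hh⟩ | rfl)
  · exact Set.disjoint_left.1 hdisj hgO (hg.third_side_unique hh ▸ hhG')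
  · exact hg.ne_left rfl

theorem Yset_subset {O : Set (Sym2 V)} {e : Sym2 V} (he : e ∈ O) (G' : Set (Sym2 V)) :
    Yset O G' e ⊆ O :=
  Set.union_subset (fun _ h => h.1) (Set.singleton_subset_iff.2 he)

theorem toFinset_subset_of_mem_openTrianglePairs [DecidableEq V] {O : Finset (Sym2 V)}
    {e : Sym2 V} {q : Sym2 (Sym2 V)} (hq : q ∈ openTrianglePairs (O : Set (Sym2 V)) e) :
    q.toFinset ⊆ O := fun _ hf =>
  have ⟨_, _, hfO, _⟩ := exists_formTriangle_of_mem_openTrianglePairs hq (Sym2.mem_toFinset.1 hf)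
  hfO

theorem finite_openTrianglePairs (O : Finset (Sym2 V)) (e : Sym2 V) :
    (openTrianglePairs (O : Set (Sym2 V)) e).Finite :=
  O.sym2.finite_toSet.subset fun _ hq => Finset.mem_sym2_iff.2 fun _ hf =>
    toFinset_subset_of_mem_openTrianglePairs hq (Sym2.mem_toFinset.2 hf)

theorem closes_mk_iff {x y : V} (hxy : x ≠ y) {H : Finset (Sym2 V)} :
    Closes s(x, y) H ↔ ∃ v, s(x, v) ∈ H ∧ s(y, v) ∈ H := by
  refine ⟨?_, fun ⟨v, hx, hy⟩ => ⟨x, y, v, hxy, rfl, hx, hy⟩⟩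
  rintro ⟨a, b, v, -, hab, ha, hb⟩
  rcases Sym2.eq_iff.1 hab with ⟨rfl, rfl⟩ | ⟨rfl, rfl⟩
  exacts [⟨v, ha, hb⟩, ⟨v, hb, ha⟩]

theorem closes_iff_exists_formTriangle {e : Sym2 V} {H : Finset (Sym2 V)} (he : e ∉ H) :
    Closes e H ↔ ∃ f ∈ H, ∃ g ∈ H, FormTriangle e f g := by
  constructor
  · rintro ⟨x, y, w, hxy, rfl, hx, hy⟩
    -- If `w` were an end of `s(x, y)`, then one of the two edges at `w` would be `s(x, y)` itself.
    have hxw : x ≠ w := by rintro rfl; exact he (Sym2.eq_swap ▸ hy)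
    have hyw : y ≠ w := by rintro rfl; exact he hx
    exact ⟨_, hx, _, hy, x, y, w, hxy, hxw, hyw, rfl, rfl, rfl⟩
  · rintro ⟨_, hf, _, hg, x, y, z, hxy, -, -, rfl, rfl, rfl⟩
    exact ⟨x, y, z, hxy, rfl, hf, hg⟩

theorem mem_Opp_iff [DecidableEq V] {O G' S : Finset (Sym2 V)} (hdisj : Disjoint O G')
    (hS : S ⊆ O) {e : Sym2 V} (he : e ∈ O) (hG' : ¬ Closes e G') :
    e ∈ Opp O G' S ↔
      (∀ q ∈ openTrianglePairs (O : Set (Sym2 V)) e, ¬ q.toFinset ⊆ S) ∧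
        ∀ f ∈ Yset (O : Set (Sym2 V)) G' e, f ∉ S := by
  have heG' : e ∉ G' := Finset.disjoint_left.1 hdisj he
  rw [closes_iff_exists_formTriangle heG'] at hG'
  by_cases heS : e ∈ S
  · exact iff_of_false (by simp [Opp, heS]) fun h => h.2 e (Or.inr rfl) heS
  have heH : e ∉ G' ∪ S := Finset.notMem_union.2 ⟨heG', heS⟩
  have hOpp : e ∈ Opp O G' S ↔ ¬ ∃ f ∈ G' ∪ S, ∃ g ∈ G' ∪ S, FormTriangle e f g := by
    simp only [Opp, Finset.mem_filter, Finset.mem_sdiff, he, heS, not_false_eq_true, true_and,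
      closes_iff_exists_formTriangle heH]
  rw [hOpp]
  constructor
  · refine fun hno => ⟨?_, ?_⟩
    · rintro _ ⟨f, g, rfl, -, -, htri⟩ hfg
      rw [Sym2.toFinset_mk_eq, Finset.insert_subset_iff, Finset.singleton_subset_iff] at hfg
      exact hno ⟨f, Finset.mem_union_right _ hfg.1, g, Finset.mem_union_right _ hfg.2, htri⟩
    · rintro f (⟨-, g, hg, htri⟩ | rfl) hfS
      · exact hno ⟨f, Finset.mem_union_right _ hfS, g, Finset.mem_union_left _ hg, htri⟩
      · exact heS hfS
  · rintro ⟨hX, hY⟩ ⟨f, hf, g, hg, htri⟩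
    rcases Finset.mem_union.1 hf with hf | hf <;> rcases Finset.mem_union.1 hg with hg | hg
    · exact hG' ⟨f, hf, g, hg, htri⟩
    · exact hY g (Or.inl ⟨hS hg, f, hf, htri.symm⟩) hg
    · exact hY f (Or.inl ⟨hS hf, g, hg, htri⟩) hf
    · refine hX s(f, g) ⟨f, g, rfl, hS hf, hS hg, htri⟩ ?_
      rw [Sym2.toFinset_mk_eq, Finset.insert_subset_iff, Finset.singleton_subset_iff]
      exact ⟨hf, hg⟩

theorem prob_edge_stays_open_general {R : Type*} [CommRing R] [DecidableEq V]
    {O G' : Finset (Sym2 V)} (hdisj : Disjoint O G') {e : Sym2 V} (he : e ∈ O)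
    (hG' : ¬ Closes e G') (p : R) :
    randomSubsetProb O p (e ∈ Opp O G' ·)
      = (1 - p ^ 2) ^ X (O : Set (Sym2 V)) e * (1 - p) ^ Y (O : Set (Sym2 V)) G' e := by
  have hX := finite_openTrianglePairs O e
  have hYO : Yset (O : Set (Sym2 V)) G' e ⊆ O := Yset_subset he _
  have hY := O.finite_toSet.subset hYO
  rw [X, Y, Set.ncard_eq_toFinset_card _ hX, Set.ncard_eq_toFinset_card _ hY,
    ← randomSubsetProb_avoids_pairs_and_elements (O := O)]
  · exact randomSubsetProb_congr fun S hS => by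
      simpa only [Set.Finite.mem_toFinset] using mem_Opp_iff hdisj hS he hG'
  · exact fun q hq => toFinset_subset_of_mem_openTrianglePairs (hX.mem_toFinset.1 hq)
  · exact hY.toFinset_subset.2 hYO
  · exact fun q hq => not_isDiag_of_mem_openTrianglePairs (hX.mem_toFinset.1 hq)
  · rw [hX.coe_toFinset]
    exact pairwiseDisjoint_openTrianglePairs _ e
  · exact fun q hq => Finset.disjoint_left.2 fun f hfq hfY =>
      notMem_Yset_of_mem_openTrianglePairs (Finset.disjoint_coe.2 hdisj) (hX.mem_toFinset.1 hq)
        (Sym2.mem_toFinset.1 hfq) (hY.mem_toFinset.1 hfY)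

/-- **The exact survival probability of an open edge (cf. (3.14) of the paper).**
Let `O, G'` be disjoint graphs on a finite vertex set, and let `e = xy ∈ O` be an edge
that does not form a triangle with two edges of `G'`.  If `G₁` is a `p`-random subgraph
of `O`, then the probability that `e` lies in
`O' = {f ∈ O \ G₁ : f forms no triangle with two edges of G' ∪ G₁}` is exactly
`(1−p²)^{X(e)}·(1−p)^{Y(e)}`.  (The probability is written as a sum over all
realisations `S ⊆ O` of `G₁`.) -/
theorem prob_edge_stays_open [Fintype V] [DecidableEq V]
    (O G' : Finset (Sym2 V)) (hdisj : O ∩ G' = ∅)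
    (hOgraph : ∀ a ∈ O, ¬ a.IsDiag) (hG'graph : ∀ a ∈ G', ¬ a.IsDiag)
    (x y : V) (hxy : x ≠ y) (he : s(x, y) ∈ O)
    (hnoG' : ¬ ∃ v : V, s(x, v) ∈ G' ∧ s(y, v) ∈ G')
    (p : ℝ) (hp0 : 0 ≤ p) (hp1 : p ≤ 1) :
    (∑ S ∈ O.powerset,
        if s(x, y) ∈ Opp O G' S then p ^ S.card * (1 - p) ^ (O \ S).card else 0)
      = (1 - p ^ 2) ^ X (↑O : Set (Sym2 V)) (s(x, y))
          * (1 - p) ^ Y (↑O : Set (Sym2 V)) (↑G' : Set (Sym2 V)) (s(x, y)) :=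
  prob_edge_stays_open_general (Finset.disjoint_iff_inter_eq_empty.2 hdisj) he
    ((closes_mk_iff hxy).not.2 hnoG') p

end Stmt4
end

section
/- Fix δ ∈ (0,1/8). There exists n₀ = n₀(δ) such that the following holds for all n ≥ n₀. Let V = [n] be partitioned into parts V₁,…,V_m, and let O and G' be graphs on V with O ∩ G' = ∅ satisfying: (i) no edge of O forms a triangle with two edges of G'; (ii) O contains no edges within a part and at most one edge between any two distinct parts; (iii) |N_{G'}(x) ∩ N_{G'}(y)| ≤ (log n)^{10} − 2 whenever x and y lie in distinct parts. Let p ∈ (0, n^{−δ}] and suppose p²·X(e) + p·Y(e) ≤ (log n)^{−9} for every e ∈ O. Let G₁ be a p-random subgraph of O (each edge independently with probability p), set O'' = { f ∈ O \ G₁ : f forms no triangle with two edges of G' ∪ G₁ }, put s = min_{f∈O} P(f ∈ O''), for each e ∈ O put q_e = s / P(e ∈ O''), let Q ⊆ O be a random subgraph, independent of G₁, in which each e ∈ O is included independently with probability q_e, and set O₁ = Q ∩ O''. Then for all graphs H, K ⊆ O with Δ(H) ≤ n^{δ/4}, Δ(K) ≤ n^{δ/4} and Δ(G'[V(H)]) ≤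 n^{δ/4}: P( H ⊆ O₁ and K ⊆ G₁ ) ≤ (1 + n^{−δ/4})^{e(H)} · s^{e(H)} · p^{e(K)}. -/
open scoped Classical

namespace Stmt5

variable {V : Type*}

/-- `e`, `f`, `g` are the three edges of a triangle.  (With this parametrization the
predicate is symmetric in `f` and `g`.) -/
def FormTriangle (e f g : Sym2 V) : Prop :=
  ∃ x y z : V, x ≠ y ∧ x ≠ z ∧ y ≠ z ∧ e = s(x, y) ∧ f = s(x, z) ∧ g = s(y, z)

/-- `𝒳(e)`: the set of unordered pairs `{f, g} ⊆ O` such that `e, f, g` form an open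
triangle. -/
def openTrianglePairs (O : Set (Sym2 V)) (e : Sym2 V) : Set (Sym2 (Sym2 V)) :=
  {p | ∃ f g : Sym2 V, p = s(f, g) ∧ f ∈ O ∧ g ∈ O ∧ FormTriangle e f g}

/-- `X(e) = |𝒳(e)|`. -/
noncomputable def X (O : Set (Sym2 V)) (e : Sym2 V) : ℕ := (openTrianglePairs O e).ncard

/-- `e` and `f ∈ O` span a clopen triangle: the third edge of the triangle lies in `G'`. -/
def SpanClopen (O G' : Set (Sym2 V)) (e f : Sym2 V) : Prop :=
  f ∈ O ∧ ∃ g ∈ G', FormTriangle e f g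

/-- `𝒴(e) = {f ∈ O : e, f span a clopen triangle} ∪ {e}`. -/
def Yset (O G' : Set (Sym2 V)) (e : Sym2 V) : Set (Sym2 V) :=
  {f | SpanClopen O G' e f} ∪ {e}

/-- `Y(e) = |𝒴(e)|`. -/
noncomputable def Y (O G' : Set (Sym2 V)) (e : Sym2 V) : ℕ := (Yset O G' e).ncard

/-- The edge `f = uv` forms a triangle with two edges of `H`: there is a vertex `w` with
`uw ∈ H` and `vw ∈ H`. -/
def Closes (f : Sym2 V) (H : Finset (Sym2 V)) : Prop :=
  ∃ x y w : V, x ≠ y ∧ f = s(x, y) ∧ s(x, w) ∈ H ∧ s(y, w) ∈ H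

/-- `O'' = {f ∈ O \ G₁ : f forms no triangle with two edges of G' ∪ G₁}`,
for the realisation `G₁ = S`. -/
noncomputable def Opp [DecidableEq V] (O G' S : Finset (Sym2 V)) : Finset (Sym2 V) :=
  (O \ S).filter fun f => ¬ Closes f (G' ∪ S)

/-- `P(f ∈ O'')` for a `p`-random subgraph `G₁ ⊆ O`, as a sum over realisations. -/
noncomputable def pOpen [Fintype V] [DecidableEq V] (O G' : Finset (Sym2 V)) (p : ℝ)
    (f : Sym2 V) : ℝ :=
  ∑ S ∈ O.powerset,
    if f ∈ Opp O G' S then p ^ S.card * (1 - p) ^ (O \ S).card else 0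

/-- The joint probability of an event `E G₁ Q`, where `G₁ ⊆ O` is a `p`-random subgraph
and, independently, `Q ⊆ O` contains each `e ∈ O` with probability `q e`; written as a
double sum over the realisations `S` of `G₁` and `T` of `Q`. -/
noncomputable def jointProb [Fintype V] [DecidableEq V] (O : Finset (Sym2 V)) (p : ℝ)
    (q : Sym2 V → ℝ) (E : Finset (Sym2 V) → Finset (Sym2 V) → Prop) : ℝ :=
  ∑ S ∈ O.powerset, ∑ T ∈ O.powerset,
    (p ^ S.card * (1 - p) ^ (O \ S).card) *
      ((∏ e ∈ T, q e) * ∏ e ∈ O \ T, (1 - q e)) *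
      (if E S T then 1 else 0)

/-- The degree of `x` in the graph (edge set) `H`. -/
noncomputable def degF [Fintype V] (H : Finset (Sym2 V)) (x : V) : ℕ :=
  (Finset.univ.filter fun y => s(x, y) ∈ H).card

/-- The maximum degree `Δ(H)`. -/
noncomputable def maxDeg [Fintype V] (H : Finset (Sym2 V)) : ℕ :=
  Finset.univ.sup (degF H)

/-- `V(H)`: the set of vertices covered by the edges of `H`. -/
noncomputable def verts [Fintype V] (H : Finset (Sym2 V)) : Finset V :=
  Finset.univ.filter fun x => ∃ y, s(x, y) ∈ H

/-- `G[S]`: the subgraph of `G` induced on the vertex set `S`. -/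
noncomputable def induce (G : Finset (Sym2 V)) (S : Finset V) : Finset (Sym2 V) :=
  G.filter fun a => ∀ x ∈ a, x ∈ S

/-! The event `H ⊆ O''` is decreasing and `K ⊆ G₁` is increasing in `G₁`, so by the Harris
inequality requiring `K ⊆ G₁` multiplies the probability by at most `p ^ e(K)`. An edge `e` lies in
`O''` if and only if `G₁` contains none of its blockers: the singletons from `𝒴(e)` and the pairs
in `𝒳(e)`. Harris bounds the probability of avoiding all blockers of one edge from below by the
product over the blockers, and Janson's inequality bounds the probability of avoiding the blockers
of every edge of `H` from above by the same product up to a factor `exp (2σ)`, where `σ` sums the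
probabilities `P(A ∪ B ⊆ G₁)` over overlapping blockers `A`, `B`. Hence `P(H ⊆ O'') ≤ exp (2σ) * ∏
e ∈ H, P(e ∈ O'')`, and the probabilities `q` turn each `P(e ∈ O'')` into `s`.

Distinct overlapping blockers have a union larger than one of them, so in `σ` they gain a factor
`p` over `∑ e ∈ H, (p² X(e) + p Y(e))`, and each edge lies in few blockers because `H` has small
degrees. Only a singleton can block two edges of `H` at once, and the number of such repetitions is
controlled by the codegrees in `G'` and the degrees in `G'[V(H)]`. -/

open scoped Finset

section RandomSubset

variable {α ι : Type*} [DecidableEq α]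

/-- The probability that a random subset of `O`, containing each `a ∈ O` independently with
probability `q a`, equals `S`. -/
noncomputable def weight (O : Finset α) (q : α → ℝ) (S : Finset α) : ℝ :=
  (∏ a ∈ S, q a) * ∏ a ∈ O \ S, (1 - q a)

/-- The probability of the event `E` for a random subset of `O` containing each `a ∈ O`
independently with probability `q a`. -/
noncomputable def prob (O : Finset α) (q : α → ℝ) (E : Finset α → Prop) : ℝ :=
  ∑ S ∈ O.powerset with E S, weight O q S

variable {O A S : Finset α} {q : α → ℝ} {E F : Finset α → Prop} {a : α}

lemma weight_nonneg (hq0 : 0 ≤ q) (hq1 : q ≤ 1) (S : Finset α) : 0 ≤ weight O q S :=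
  mul_nonneg (Finset.prod_nonneg fun a _ => hq0 a)
    (Finset.prod_nonneg fun a _ => sub_nonneg.2 (hq1 a))

lemma weight_mul_weight (O : Finset α) (q : α → ℝ) (S T : Finset α) :
    weight O q S * weight O q T = weight O q (S ∩ T) * weight O q (S ∪ T) := by
  have hprod := Finset.prod_union_inter (s₁ := S) (s₂ := T) (f := q)
  have hcompl := Finset.prod_union_inter (s₁ := O \ S) (s₂ := O \ T) (f := fun a => 1 - q a)
  rw [← Finset.sdiff_inter_distrib_right, ← Finset.sdiff_union_distrib] at hcompl
  simp only [weight]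
  linear_combination -(∏ a ∈ O \ S, (1 - q a)) * (∏ a ∈ O \ T, (1 - q a)) * hprod
    - (∏ a ∈ S ∪ T, q a) * (∏ a ∈ S ∩ T, q a) * hcompl

lemma weight_insert (ha : a ∉ O) (hS : S ⊆ O) :
    weight (insert a O) q S = (1 - q a) * weight O q S := by
  have haS : a ∉ S := fun h => ha (hS h)
  rw [weight, weight, Finset.insert_sdiff_of_notMem _ haS,
    Finset.prod_insert fun h => ha (Finset.mem_sdiff.1 h).1]
  ring

lemma weight_insert_insert (ha : a ∉ O) (hS : S ⊆ O) :
    weight (insert a O) q (insert a S) = q a * weight O q S := by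
  rw [weight, weight, Finset.insert_sdiff_insert, Finset.sdiff_insert_of_notMem ha,
    Finset.prod_insert fun h => ha (hS h), mul_assoc]

lemma prob_insert (ha : a ∉ O) (E : Finset α → Prop) :
    prob (insert a O) q E =
      q a * prob O q (fun S => E (insert a S)) + (1 - q a) * prob O q E := by
  simp only [prob, Finset.sum_filter, Finset.sum_powerset_insert ha, Finset.mul_sum, mul_ite,
    mul_zero]
  rw [add_comm]
  congr 1 <;> refine Finset.sum_congr rfl fun S hS => if_congr Iff.rfl ?_ rfl
  · exact weight_insert_insert ha (Finset.mem_powerset.1 hS)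
  · exact weight_insert ha (Finset.mem_powerset.1 hS)

lemma prob_congr (h : ∀ S ⊆ O, (E S ↔ F S)) : prob O q E = prob O q F :=
  Finset.sum_congr (Finset.filter_congr fun S hS => h S (Finset.mem_powerset.1 hS)) fun _ _ => rfl

lemma prob_true (O : Finset α) (q : α → ℝ) : prob O q (fun _ => True) = 1 := by
  simp only [prob, weight, Finset.filter_true, ← Finset.prod_add, add_sub_cancel,
    Finset.prod_const_one]

lemma prob_and_add_prob_and_not (E F : Finset α → Prop) :
    prob O q (fun S => E S ∧ F S) + prob O q (fun S => E S ∧ ¬ F S) = prob O q E := by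
  simp only [prob, ← Finset.filter_filter, Finset.sum_filter_add_sum_filter_not]

lemma prob_not (F : Finset α → Prop) : prob O q (fun S => ¬ F S) = 1 - prob O q F := by
  have h := prob_and_add_prob_and_not (O := O) (q := q) (fun _ => True) F
  simp only [true_and, prob_true] at h
  linarith

lemma prob_subset_and (hA : A ⊆ O) (hE : ∀ a ∈ A, ∀ S, E (insert a S) ↔ E S) :
    prob O q (fun S => A ⊆ S ∧ E S) = (∏ a ∈ A, q a) * prob O q E := by
  induction A using Finset.induction_on with
  | empty => simp
  | insert a A haA ih =>
    obtain ⟨haO, hAO⟩ := Finset.insert_subset_iff.1 hA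
    simp only [Finset.forall_mem_insert] at hE
    obtain ⟨U, haU, rfl⟩ : ∃ U, a ∉ U ∧ insert a U = O :=
      ⟨O.erase a, Finset.notMem_erase a O, Finset.insert_erase haO⟩
    have hout : prob U q (fun S => insert a A ⊆ S ∧ E S) = 0 := by
      refine Finset.sum_eq_zero fun S hS => ?_
      simp only [Finset.mem_filter, Finset.mem_powerset] at hS
      exact absurd (hS.1 (hS.2.1 (Finset.mem_insert_self a A))) haU
    have hin : ∀ S, insert a A ⊆ insert a S ↔ A ⊆ S := fun S =>
      Finset.insert_subset_insert_iff haA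
    have hA' : ∀ S, A ⊆ insert a S ↔ A ⊆ S := fun S => Finset.subset_insert_iff_of_notMem haA
    have ih' := ih hAO hE.2
    rw [prob_insert haU] at ih'
    simp only [hA', hE.1] at ih'
    rw [prob_insert haU, hout, Finset.prod_insert haA, mul_assoc, ← ih']
    simp only [hin, hE.1]
    ring

lemma prob_subset (hA : A ⊆ O) : prob O q (fun S => A ⊆ S) = ∏ a ∈ A, q a := by
  simpa only [and_true, prob_true, mul_one] using
    prob_subset_and (q := q) (E := fun _ => True) hA fun _ _ _ => Iff.rfl

variable (hq0 : 0 ≤ q) (hq1 : q ≤ 1)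

include hq0 hq1

lemma prob_nonneg (O : Finset α) (E : Finset α → Prop) : 0 ≤ prob O q E :=
  Finset.sum_nonneg fun S _ => weight_nonneg hq0 hq1 S

lemma prob_mono (h : ∀ S, E S → F S) : prob O q E ≤ prob O q F :=
  Finset.sum_le_sum_of_subset_of_nonneg (Finset.monotone_filter_right _ fun S _ => h S)
    fun S _ _ => weight_nonneg hq0 hq1 S

lemma prob_le_add_sum {I : Finset ι} {G : ι → Finset α → Prop}
    (h : ∀ S, E S → F S ∨ ∃ i ∈ I, G i S) :
    prob O q E ≤ prob O q F + ∑ i ∈ I, prob O q (G i) := by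
  simp only [prob, Finset.sum_filter]
  rw [Finset.sum_comm, ← Finset.sum_add_distrib]
  refine Finset.sum_le_sum fun S _ => ?_
  have hw : ∀ P : Prop, 0 ≤ if P then weight O q S else 0 := fun P =>
    ite_nonneg (weight_nonneg hq0 hq1 S) le_rfl
  by_cases hE : E S
  · rw [if_pos hE]
    rcases h S hE with hF | ⟨i, hi, hG⟩
    · rw [if_pos hF]
      exact le_add_of_nonneg_right (Finset.sum_nonneg fun i _ => hw _)
    · calc weight O q S = if G i S then weight O q S else 0 := (if_pos hG).symm
        _ ≤ ∑ i ∈ I, if G i S then weight O q S else 0 :=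
          Finset.single_le_sum (fun i _ => hw (G i S)) hi
        _ ≤ _ := le_add_of_nonneg_left (hw _)
  · rw [if_neg hE]
    exact add_nonneg (hw _) (Finset.sum_nonneg fun i _ => hw _)

open scoped FinsetFamily in
/-- **Harris inequality.** -/
lemma prob_mul_le_prob_and (hE : Antitone E) (hF : Antitone F) :
    prob O q E * prob O q F ≤ prob O q (fun S => E S ∧ F S) := by
  have hw := weight_nonneg (O := O) hq0 hq1
  have hmeet : ∀ U ∈ {S ∈ O.powerset | E S} ⊼ {S ∈ O.powerset | F S},
      U ∈ O.powerset ∧ E U ∧ F U := by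
    simp only [Finset.mem_infs, Finset.mem_filter, Finset.mem_powerset]
    rintro _ ⟨S, ⟨hS, hES⟩, T, ⟨-, hFT⟩, rfl⟩
    exact ⟨inf_le_left.trans hS, hE inf_le_left hES, hF inf_le_right hFT⟩
  have hjoin : {S ∈ O.powerset | E S} ⊻ {S ∈ O.powerset | F S} ⊆ O.powerset := by
    simp only [Finset.sups_subset_iff, Finset.mem_filter, Finset.mem_powerset]
    exact fun S hS T hT => sup_le hS.1 hT.1
  calc prob O q E * prob O q F
      ≤ (∑ S ∈ {S ∈ O.powerset | E S} ⊼ {S ∈ O.powerset | F S}, weight O q S) *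
          ∑ S ∈ {S ∈ O.powerset | E S} ⊻ {S ∈ O.powerset | F S}, weight O q S :=
        Finset.four_functions_theorem O hw hw hw hw
          (fun S _ T _ => (weight_mul_weight O q S T).le)
          (Finset.filter_subset _ _) (Finset.filter_subset _ _)
    _ ≤ prob O q (fun S => E S ∧ F S) * ∑ S ∈ O.powerset, weight O q S :=
        mul_le_mul (Finset.sum_le_sum_of_subset_of_nonneg
            (fun U hU => by simpa only [Finset.mem_filter] using hmeet U hU) fun S _ _ => hw S)
          (Finset.sum_le_sum_of_subset_of_nonneg hjoin fun S _ _ => hw S)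
          (Finset.sum_nonneg fun S _ => hw S) (prob_nonneg hq0 hq1 _ _)
    _ = prob O q (fun S => E S ∧ F S) := by
        have h := prob_true O q
        rw [prob, Finset.filter_true] at h
        rw [h, mul_one]

lemma prob_and_le_prob_mul (hE : Monotone E) (hF : Antitone F) :
    prob O q (fun S => E S ∧ F S) ≤ prob O q E * prob O q F := by
  have hharris := prob_mul_le_prob_and (O := O) hq0 hq1 hF
    (F := fun S => ¬ E S) fun _ _ hST => mt (hE hST)
  have hsplit := prob_and_add_prob_and_not (O := O) (q := q) F E
  simp only [and_comm (a := F _) (b := E _)] at hsplit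
  rw [prob_not] at hharris
  linarith

end RandomSubset

section Janson

variable {α ι κ : Type*}

/-- The event that `S` contains none of the sets `A i` with `i ∈ I`. -/
def Avoids (A : ι → Finset α) (I : Finset ι) (S : Finset α) : Prop :=
  ∀ i ∈ I, ¬ A i ⊆ S

lemma antitone_avoids (A : ι → Finset α) (I : Finset ι) : Antitone (Avoids A I) :=
  fun _ _ hST h i hi hS => h i hi (hS.trans hST)

lemma avoids_empty (A : ι → Finset α) : Avoids A ∅ = fun _ => True := by
  simp [Avoids, funext_iff]

lemma avoids_insert [DecidableEq ι] {A : ι → Finset α} {I : Finset ι} {i : ι} {S : Finset α} :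
    Avoids A (insert i I) S ↔ Avoids A I S ∧ ¬ A i ⊆ S := by
  simp only [Avoids, Finset.forall_mem_insert, and_comm]

variable [DecidableEq α]

/-- The contribution of the pair `A`, `B` to the correlation term of Janson's inequality: the
probability that a random set contains both, counted only if they overlap. -/
noncomputable def clash (q : α → ℝ) (A B : Finset α) : ℝ :=
  if Disjoint A B then 0 else ∏ a ∈ A ∪ B, q a

variable {O B : Finset α} {q : α → ℝ} {A : ι → Finset α} {I : Finset ι}

lemma clash_nonneg (hq0 : 0 ≤ q) (A B : Finset α) : 0 ≤ clash q A B :=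
  ite_nonneg le_rfl (Finset.prod_nonneg fun a _ => hq0 a)

lemma prod_one_sub_le_prob_avoids (hq0 : 0 ≤ q) (hq1 : q ≤ 1) (hA : ∀ i ∈ I, A i ⊆ O) :
    ∏ i ∈ I, (1 - ∏ a ∈ A i, q a) ≤ prob O q (Avoids A I) := by
  induction I using Finset.induction_on with
  | empty => simp [avoids_empty, prob_true]
  | insert i I hi ih =>
    simp only [Finset.forall_mem_insert] at hA
    have hprob : prob O q (fun S => ¬ A i ⊆ S) = 1 - ∏ a ∈ A i, q a := by
      rw [prob_not, prob_subset hA.1]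
    calc ∏ j ∈ insert i I, (1 - ∏ a ∈ A j, q a)
        = (∏ j ∈ I, (1 - ∏ a ∈ A j, q a)) * prob O q (fun S => ¬ A i ⊆ S) := by
          rw [Finset.prod_insert hi, mul_comm, hprob]
      _ ≤ prob O q (Avoids A I) * prob O q (fun S => ¬ A i ⊆ S) :=
          mul_le_mul_of_nonneg_right (ih hA.2) (prob_nonneg hq0 hq1 _ _)
      _ ≤ prob O q (fun S => Avoids A I S ∧ ¬ A i ⊆ S) :=
          prob_mul_le_prob_and hq0 hq1 (antitone_avoids A I) fun _ _ hST => mt hST.trans'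
      _ = prob O q (Avoids A (insert i I)) := prob_congr fun _ _ => avoids_insert.symm

/-- Conditionally on the members of the family disjoint from `B` being avoided, the event
`B ⊆ S` keeps its probability, and each of the other members is contained at the cost of a
clash by the Harris inequality. -/
lemma prob_avoids_mul_le (hq0 : 0 ≤ q) (hq1 : q ≤ 1) (hA : ∀ i ∈ I, A i ⊆ O) (hB : B ⊆ O) :
    prob O q (Avoids A I) * (∏ a ∈ B, q a - ∑ i ∈ I, clash q B (A i))
      ≤ prob O q (fun S => Avoids A I S ∧ B ⊆ S) := by
  rcases le_total (∏ a ∈ B, q a - ∑ i ∈ I, clash q B (A i)) 0 with hneg | hpos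
  · exact (mul_nonpos_of_nonneg_of_nonpos (prob_nonneg hq0 hq1 _ _) hneg).trans
      (prob_nonneg hq0 hq1 _ _)
  set J := {i ∈ I | Disjoint B (A i)}
  have hindep : prob O q (fun S => B ⊆ S ∧ Avoids A J S) =
      (∏ a ∈ B, q a) * prob O q (Avoids A J) := by
    refine prob_subset_and hB fun b hb S => forall₂_congr fun i hi => ?_
    rw [Finset.subset_insert_iff_of_notMem
      (Finset.disjoint_left.1 (Finset.mem_filter.1 hi).2 hb)]
  have hunion : prob O q (fun S => B ⊆ S ∧ Avoids A J S) ≤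
      prob O q (fun S => Avoids A I S ∧ B ⊆ S) +
        ∑ i ∈ I with ¬ Disjoint B (A i), prob O q (fun S => B ∪ A i ⊆ S ∧ Avoids A J S) := by
    refine prob_le_add_sum hq0 hq1 fun S ⟨hBS, hS⟩ => or_iff_not_imp_left.2 fun h => ?_
    obtain ⟨i, hi, hiS⟩ : ∃ i ∈ I, A i ⊆ S := by
      simpa [Avoids, hBS] using h
    exact ⟨i, Finset.mem_filter.2 ⟨hi, fun hd => hS i (Finset.mem_filter.2 ⟨hi, hd⟩) hiS⟩,
      Finset.union_subset hBS hiS, hS⟩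
  have hclash : ∑ i ∈ I with ¬ Disjoint B (A i), prob O q (fun S => B ∪ A i ⊆ S ∧ Avoids A J S)
      ≤ (∑ i ∈ I, clash q B (A i)) * prob O q (Avoids A J) := by
    rw [Finset.sum_filter, Finset.sum_mul]
    refine Finset.sum_le_sum fun i hi => ?_
    by_cases hd : Disjoint B (A i)
    · simp [hd, clash]
    · rw [if_pos hd, clash, if_neg hd, ← prob_subset (Finset.union_subset hB (hA i hi))]
      exact prob_and_le_prob_mul hq0 hq1 (fun _ _ hST h => h.trans hST) (antitone_avoids A J)
  have hIJ : prob O q (Avoids A I) ≤ prob O q (Avoids A J) :=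
    prob_mono hq0 hq1 fun S h i hi => h i (Finset.mem_filter.1 hi).1
  linarith [mul_le_mul_of_nonneg_right hIJ hpos]

lemma prob_avoids_insert_le [DecidableEq ι] (hq0 : 0 ≤ q) (hq1 : q ≤ 1) {i : ι}
    (hA : ∀ j ∈ insert i I, A j ⊆ O) :
    prob O q (Avoids A (insert i I)) ≤
      prob O q (Avoids A I) * (1 - ∏ a ∈ A i, q a + ∑ j ∈ I, clash q (A i) (A j)) := by
  rw [Finset.forall_mem_insert] at hA
  rw [prob_congr fun S _ => avoids_insert]
  linarith [prob_avoids_mul_le hq0 hq1 hA.2 hA.1,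
    prob_and_add_prob_and_not (O := O) (q := q) (Avoids A I) (fun S => A i ⊆ S)]

/-- **Janson's inequality**, in product form. -/
lemma prob_avoids_le_prod_mul_exp [DecidableEq ι] (hq0 : 0 ≤ q) (hq1 : q ≤ 1)
    (hA : ∀ i ∈ I, A i ⊆ O) (hhalf : ∀ i ∈ I, ∏ a ∈ A i, q a ≤ 1 / 2) :
    prob O q (Avoids A I) ≤ (∏ i ∈ I, (1 - ∏ a ∈ A i, q a)) *
      Real.exp (2 * ∑ i ∈ I, ∑ j ∈ I.erase i, clash q (A i) (A j)) := by
  induction I using Finset.induction_on with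
  | empty => simp [avoids_empty, prob_true]
  | insert i I hi ih =>
    have hstep := prob_avoids_insert_le hq0 hq1 hA
    simp only [Finset.forall_mem_insert] at hA hhalf
    have hclash := fun j => clash_nonneg hq0 (A i) (A j)
    set d := ∑ j ∈ I, clash q (A i) (A j)
    set r := ∏ a ∈ A i, q a
    have hd : 0 ≤ d := Finset.sum_nonneg fun j _ => hclash j
    have hr : 0 ≤ 1 - r := by linarith [hhalf.1]
    have hfactor : 1 - r + d ≤ (1 - r) * Real.exp (2 * d) := by
      nlinarith [Real.add_one_le_exp (2 * d), hhalf.1]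
    have hsum : (∑ k ∈ I, ∑ j ∈ I.erase k, clash q (A k) (A j)) + d ≤
        ∑ k ∈ insert i I, ∑ j ∈ (insert i I).erase k, clash q (A k) (A j) := by
      rw [Finset.sum_insert hi, Finset.erase_insert hi, add_comm]
      gcongr with k
      · exact fun _ _ _ => clash_nonneg hq0 _ _
      · exact Finset.subset_insert _ _
    have hprod : 0 ≤ ∏ j ∈ I, (1 - ∏ a ∈ A j, q a) :=
      Finset.prod_nonneg fun j hj => by linarith [hhalf.2 j hj]
    calc prob O q (Avoids A (insert i I))
        ≤ prob O q (Avoids A I) * (1 - r + d) := hstep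
      _ ≤ ((∏ j ∈ I, (1 - ∏ a ∈ A j, q a)) *
          Real.exp (2 * ∑ k ∈ I, ∑ j ∈ I.erase k, clash q (A k) (A j))) *
          ((1 - r) * Real.exp (2 * d)) := by
        gcongr
        exact ih hA.2 hhalf.2
      _ = ((1 - r) * ∏ j ∈ I, (1 - ∏ a ∈ A j, q a)) *
          Real.exp (2 * ((∑ k ∈ I, ∑ j ∈ I.erase k, clash q (A k) (A j)) + d)) := by
        rw [mul_add, Real.exp_add]
        ring
      _ ≤ _ := by
        rw [Finset.prod_insert hi]
        gcongr

lemma prob_forall_avoids_le {E : Finset κ} {𝓕 : κ → Finset (Finset α)} [DecidableEq κ]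
    (hq0 : 0 ≤ q) (hq1 : q ≤ 1) (hO : ∀ e ∈ E, ∀ A ∈ 𝓕 e, A ⊆ O)
    (hhalf : ∀ e ∈ E, ∀ A ∈ 𝓕 e, ∏ a ∈ A, q a ≤ 1 / 2) :
    prob O q (fun S => ∀ e ∈ E, Avoids id (𝓕 e) S) ≤
      (∏ e ∈ E, prob O q (Avoids id (𝓕 e))) *
        Real.exp (2 * ∑ i ∈ E.sigma 𝓕, ∑ j ∈ (E.sigma 𝓕).erase i, clash q i.2 j.2) :=
  calc prob O q (fun S => ∀ e ∈ E, Avoids id (𝓕 e) S)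
      = prob O q (Avoids Sigma.snd (E.sigma 𝓕)) := by
        refine prob_congr fun S _ => ?_
        simp only [Avoids, Sigma.forall, Finset.mem_sigma, and_imp, id]
        exact ⟨fun h e A he => h e he A, fun h e he A => h e A he⟩
    _ ≤ (∏ i ∈ E.sigma 𝓕, (1 - ∏ a ∈ i.2, q a)) *
        Real.exp (2 * ∑ i ∈ E.sigma 𝓕, ∑ j ∈ (E.sigma 𝓕).erase i, clash q i.2 j.2) :=
        prob_avoids_le_prod_mul_exp hq0 hq1
          (fun i hi => hO _ (Finset.mem_sigma.1 hi).1 _ (Finset.mem_sigma.1 hi).2)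
          fun i hi => hhalf _ (Finset.mem_sigma.1 hi).1 _ (Finset.mem_sigma.1 hi).2
    _ ≤ _ := by
        rw [Finset.prod_sigma]
        gcongr with e he
        · exact fun e he => Finset.prod_nonneg fun A hA => by linarith [hhalf e he A hA]
        · exact prod_one_sub_le_prob_avoids hq0 hq1 (hO e he)

end Janson

section ClashSum

variable {α ι : Type*} [DecidableEq α] {I : Finset ι} {A : ι → Finset α} {k d : ℕ}

lemma sum_card_inter_le (hk : ∀ i ∈ I, #(A i) ≤ k) (hd : ∀ a, #{j ∈ I | a ∈ A j} ≤ d)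
    {i : ι} (hi : i ∈ I) : ∑ j ∈ I, #(A i ∩ A j) ≤ k * d :=
  calc ∑ j ∈ I, #(A i ∩ A j)
      = ∑ a ∈ A i, #{j ∈ I | a ∈ A j} := by
        simp only [Finset.card_eq_sum_ones, Finset.sum_filter, ← Finset.filter_mem_eq_inter]
        exact Finset.sum_comm
    _ ≤ #(A i) * d := by
        simpa only [smul_eq_mul] using Finset.sum_le_card_nsmul _ _ _ fun a _ => hd a
    _ ≤ k * d := Nat.mul_le_mul_right d (hk i hi)

lemma sum_card_filter_sigma_eq {β κ : Type*} [DecidableEq β] [DecidableEq κ] (E : Finset κ)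
    (𝓕 : κ → Finset β) :
    ∑ i ∈ E.sigma 𝓕, #{j ∈ (E.sigma 𝓕).erase i | i.2 = j.2} =
      ∑ e ∈ E, ∑ e' ∈ E.erase e, #(𝓕 e ∩ 𝓕 e') := by
  rw [Finset.sum_sigma]
  refine Finset.sum_congr rfl fun e _ => ?_
  calc ∑ A ∈ 𝓕 e, #{j ∈ (E.sigma 𝓕).erase ⟨e, A⟩ | A = j.2}
      = ∑ A ∈ 𝓕 e, #{e' ∈ E.erase e | A ∈ 𝓕 e'} := by
        refine Finset.sum_congr rfl fun A _ => ?_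
        refine Finset.card_nbij' Sigma.fst (fun e' => ⟨e', A⟩) ?_ ?_ ?_ fun _ _ => rfl
        · rintro ⟨e', _⟩ hj
          simp only [Finset.coe_filter, Finset.mem_erase, Finset.mem_sigma,
            Set.mem_ofPred_eq] at hj ⊢
          obtain ⟨⟨hne, he', hA'⟩, rfl⟩ := hj
          exact ⟨⟨fun h => hne (h ▸ rfl), he'⟩, hA'⟩
        · intro e' he'
          simp only [Finset.coe_filter, Finset.mem_erase, Finset.mem_sigma,
            Set.mem_ofPred_eq] at he' ⊢
          exact ⟨⟨fun h => he'.1.1 (congrArg Sigma.fst h), he'.1.2, he'.2⟩, trivial⟩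
        · rintro ⟨e', _⟩ hj
          obtain rfl := (Finset.mem_filter.1 hj).2
          rfl
    _ = ∑ e' ∈ E.erase e, #{A ∈ 𝓕 e | A ∈ 𝓕 e'} :=
        Finset.sum_card_bipartiteAbove_eq_sum_card_bipartiteBelow fun A e' => A ∈ 𝓕 e'
    _ = ∑ e' ∈ E.erase e, #(𝓕 e ∩ 𝓕 e') := by
        simp only [Finset.filter_mem_eq_inter]

variable {p : ℝ} (hp0 : 0 ≤ p) (hp1 : p ≤ 1)

include hp0 hp1

lemma clash_self_le (A : Finset α) : clash (fun _ => p) A A ≤ p := by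
  simp only [clash, disjoint_self, Finset.bot_eq_empty, Finset.union_self, Finset.prod_const]
  split_ifs with h
  · exact hp0
  · exact pow_le_of_le_one hp0 hp1 (Finset.card_ne_zero.2 (Finset.nonempty_iff_ne_empty.2 h))

/-- One of two distinct sets is properly contained in their union. -/
lemma clash_le_of_ne {A B : Finset α} (h : A ≠ B) :
    clash (fun _ => p) A B ≤ p * (#(A ∩ B) * (p ^ #A + p ^ #B)) := by
  rw [clash, Finset.prod_const]
  split_ifs with hdisj
  · positivity
  have hinter : (1 : ℝ) ≤ #(A ∩ B) := by
    exact_mod_cast Finset.card_pos.2 (Finset.not_disjoint_iff_nonempty_inter.1 hdisj)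
  have hpow : ∀ C ⊂ A ∪ B, p ^ #(A ∪ B) ≤ p * p ^ #C := fun C hC => by
    rw [← pow_succ']
    exact pow_le_pow_of_le_one hp0 hp1 (Finset.card_lt_card hC)
  have hA : 0 ≤ p ^ #A := by positivity
  have hB : 0 ≤ p ^ #B := by positivity
  calc p ^ #(A ∪ B) ≤ p * (p ^ #A + p ^ #B) := by
        by_cases hAB : A = A ∪ B
        · have := hpow B (Finset.subset_union_right.ssubset_of_ne (hAB ▸ h.symm))
          nlinarith
        · have := hpow A (Finset.subset_union_left.ssubset_of_ne hAB)
          nlinarith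
    _ ≤ p * (#(A ∩ B) * (p ^ #A + p ^ #B)) := by
        gcongr
        exact le_mul_of_one_le_left (by positivity) hinter

lemma clash_le (A B : Finset α) :
    clash (fun _ => p) A B ≤
      p * (#(A ∩ B) * p ^ #A + #(B ∩ A) * p ^ #B + if A = B then 1 else 0) := by
  split_ifs with h
  · rw [h]
    refine (clash_self_le hp0 hp1 _).trans (le_mul_of_one_le_right hp0 ?_)
    exact le_add_of_nonneg_left (by positivity)
  · rw [add_zero, Finset.inter_comm B, ← mul_add]
    exact clash_le_of_ne hp0 hp1 h

lemma sum_clash_le [DecidableEq ι] (hk : ∀ i ∈ I, #(A i) ≤ k)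
    (hd : ∀ a, #{j ∈ I | a ∈ A j} ≤ d) :
    ∑ i ∈ I, ∑ j ∈ I.erase i, clash (fun _ => p) (A i) (A j) ≤
      p * (2 * (k * d * ∑ i ∈ I, p ^ #(A i)) + ∑ i ∈ I, #{j ∈ I.erase i | A i = A j}) := by
  have hrow : ∀ i ∈ I, ∑ j ∈ I, (#(A i ∩ A j) : ℝ) * p ^ #(A i) ≤ k * d * p ^ #(A i) :=
    fun i hi => by
      rw [← Finset.sum_mul]
      gcongr
      exact_mod_cast sum_card_inter_le hk hd hi
  have hrows := Finset.sum_le_sum hrow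
  rw [← Finset.mul_sum] at hrows
  have hcols : ∑ i ∈ I, ∑ j ∈ I, (#(A j ∩ A i) : ℝ) * p ^ #(A j) ≤
      k * d * ∑ i ∈ I, p ^ #(A i) := Finset.sum_comm.trans_le hrows
  calc ∑ i ∈ I, ∑ j ∈ I.erase i, clash (fun _ => p) (A i) (A j)
      ≤ ∑ i ∈ I, ∑ j ∈ I.erase i, p * (#(A i ∩ A j) * p ^ #(A i) + #(A j ∩ A i) * p ^ #(A j)
          + if A i = A j then 1 else 0) :=
        Finset.sum_le_sum fun i _ => Finset.sum_le_sum fun j _ => clash_le hp0 hp1 _ _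
    _ = p * (∑ i ∈ I, ∑ j ∈ I.erase i, (#(A i ∩ A j) : ℝ) * p ^ #(A i)
          + ∑ i ∈ I, ∑ j ∈ I.erase i, (#(A j ∩ A i) : ℝ) * p ^ #(A j)
          + ∑ i ∈ I, #{j ∈ I.erase i | A i = A j}) := by
        simp only [← Finset.mul_sum, Finset.sum_add_distrib, Finset.sum_boole, Nat.cast_sum]
    _ ≤ p * (∑ i ∈ I, ∑ j ∈ I, (#(A i ∩ A j) : ℝ) * p ^ #(A i)
          + ∑ i ∈ I, ∑ j ∈ I, (#(A j ∩ A i) : ℝ) * p ^ #(A j)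
          + ∑ i ∈ I, #{j ∈ I.erase i | A i = A j}) := by
        gcongr <;> exact Finset.erase_subset _ _
    _ ≤ _ := by
        gcongr
        linarith

end ClashSum

section Triangle

variable {e e' f g g' : Sym2 V}

lemma FormTriangle.symm (h : FormTriangle e f g) : FormTriangle e g f := by
  obtain ⟨x, y, z, hxy, hxz, hyz, rfl, rfl, rfl⟩ := h
  exact ⟨y, x, z, hxy.symm, hyz, hxz, Sym2.eq_swap, rfl, rfl⟩

lemma FormTriangle.swap (h : FormTriangle e f g) : FormTriangle f e g := by
  obtain ⟨x, y, z, hxy, hxz, hyz, rfl, rfl, rfl⟩ := h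
  exact ⟨x, z, y, hxz, hxy, hyz.symm, rfl, rfl, Sym2.eq_swap⟩

lemma FormTriangle.ne (h : FormTriangle e f g) : e ≠ f := by
  obtain ⟨x, y, z, -, -, hyz, rfl, rfl, rfl⟩ := h
  exact fun h => hyz (Sym2.congr_right.1 h)

lemma FormTriangle.eq_third (h : FormTriangle e f g) (h' : FormTriangle e f g') : g = g' := by
  obtain ⟨x, y, z, hxy, hxz, hyz, rfl, rfl, rfl⟩ := h
  obtain ⟨x', y', z', -, -, -, he, hf, rfl⟩ := h'
  simp only [Sym2.eq_iff] at he hf ⊢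
  grind

lemma FormTriangle.eq_first (h : FormTriangle e f g) (h' : FormTriangle e' f g) : e = e' :=
  h.swap.symm.eq_third h'.swap.symm

lemma closes_iff_exists_formTriangle {H : Finset (Sym2 V)} (he : e ∉ H) :
    Closes e H ↔ ∃ f ∈ H, ∃ g ∈ H, FormTriangle e f g := by
  constructor
  · rintro ⟨x, y, z, hxy, rfl, hxz, hyz⟩
    refine ⟨_, hxz, _, hyz, x, y, z, hxy, ?_, ?_, rfl, rfl, rfl⟩
    · rintro rfl
      exact he (Sym2.eq_swap ▸ hyz)
    · rintro rfl
      exact he hxz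
  · rintro ⟨_, hf, _, hg, x, y, z, hxy, -, -, rfl, rfl, rfl⟩
    exact ⟨x, y, z, hxy, rfl, hf, hg⟩

lemma exists_of_mem_Yset {O G' : Set (Sym2 V)} (hf : f ∈ Yset O G' e) :
    ∃ x y z, e = s(x, y) ∧ f = s(x, z) ∧ (z = y ∨ s(y, z) ∈ G') := by
  rcases hf with ⟨-, g, hg, x, y, z, -, -, -, rfl, rfl, rfl⟩ | rfl
  · exact ⟨x, y, z, rfl, rfl, Or.inr hg⟩
  · induction f with
    | _ x y => exact ⟨x, y, y, rfl, rfl, Or.inl rfl⟩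

end Triangle

lemma antitone_subset_Opp [DecidableEq V] (O G' H : Finset (Sym2 V)) :
    Antitone fun S => H ⊆ Opp O G' S := by
  refine fun S T hST h => h.trans fun f hf => ?_
  simp only [Opp, Finset.mem_filter, Finset.mem_sdiff] at hf ⊢
  refine ⟨⟨hf.1.1, fun hfS => hf.1.2 (hST hfS)⟩, ?_⟩
  rintro ⟨x, y, w, hxy, rfl, hxw, hyw⟩
  exact hf.2 ⟨x, y, w, hxy, rfl, Finset.union_subset_union_right hST hxw,
    Finset.union_subset_union_right hST hyw⟩

section Blockers

variable [Fintype V] [DecidableEq V] {O G' S A B : Finset (Sym2 V)}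
  {e e' f : Sym2 V}

/-- The minimal sets of edges of `O` whose presence in the random graph `G₁` keeps `e` out of
`O''`: the singletons from `𝒴(e)` and the pairs in `𝒳(e)`. -/
noncomputable def blockers (O G' : Finset (Sym2 V)) (e : Sym2 V) : Finset (Finset (Sym2 V)) :=
  (Yset (O : Set (Sym2 V)) G' e).toFinset.image singleton ∪
    (openTrianglePairs (O : Set (Sym2 V)) e).toFinset.image Sym2.toFinset

lemma mem_blockers : A ∈ blockers O G' e ↔
    (∃ f ∈ Yset (O : Set (Sym2 V)) G' e, A = {f}) ∨
      ∃ f ∈ O, ∃ g ∈ O, FormTriangle e f g ∧ A = {f, g} := by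
  simp only [blockers, Finset.mem_union, Finset.mem_image, Set.mem_toFinset, eq_comm (b := A)]
  refine or_congr Iff.rfl ⟨?_, ?_⟩
  · rintro ⟨_, ⟨f, g, rfl, hf, hg, h⟩, hA⟩
    exact ⟨f, hf, g, hg, h, hA.trans Sym2.toFinset_mk_eq⟩
  · rintro ⟨f, hf, g, hg, h, hA⟩
    exact ⟨s(f, g), ⟨f, g, rfl, hf, hg, h⟩, hA.trans Sym2.toFinset_mk_eq.symm⟩

lemma mem_Yset_or_formTriangle_of_mem_blockers (hA : A ∈ blockers O G' e) (hf : f ∈ A) :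
    f ∈ Yset (O : Set (Sym2 V)) G' e ∧ A = {f} ∨ ∃ g ∈ O, FormTriangle e f g ∧ A = {f, g} := by
  rcases mem_blockers.1 hA with ⟨f', hf', rfl⟩ | ⟨f', hf', g', hg', h, rfl⟩
  · obtain rfl := Finset.mem_singleton.1 hf
    exact Or.inl ⟨hf', rfl⟩
  · rcases Finset.mem_insert.1 hf with rfl | hf
    · exact Or.inr ⟨g', hg', h, rfl⟩
    · obtain rfl := Finset.mem_singleton.1 hf
      exact Or.inr ⟨f', hf', h.symm, Finset.pair_comm _ _⟩

lemma subset_of_mem_blockers (he : e ∈ O) (hA : A ∈ blockers O G' e) : A ⊆ O := by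
  rcases mem_blockers.1 hA with ⟨f, hf | rfl, rfl⟩ | ⟨f, hf, g, hg, -, rfl⟩
  · exact Finset.singleton_subset_iff.2 hf.1
  · exact Finset.singleton_subset_iff.2 he
  · exact Finset.insert_subset hf (Finset.singleton_subset_iff.2 hg)

lemma nonempty_of_mem_blockers (hA : A ∈ blockers O G' e) : A.Nonempty := by
  rcases mem_blockers.1 hA with ⟨f, -, rfl⟩ | ⟨f, -, g, -, -, rfl⟩
  · exact Finset.singleton_nonempty f
  · exact Finset.insert_nonempty f {g}

lemma card_le_two_of_mem_blockers (hA : A ∈ blockers O G' e) : #A ≤ 2 := by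
  rcases mem_blockers.1 hA with ⟨f, -, rfl⟩ | ⟨f, -, g, -, -, rfl⟩
  · simp
  · exact Finset.card_le_two

lemma eq_of_mem_blockers (hOG : Disjoint O G') (hA : A ∈ blockers O G' e)
    (hB : B ∈ blockers O G' e) (hfA : f ∈ A) (hfB : f ∈ B) : A = B := by
  have hnot : ∀ g ∈ O, FormTriangle e f g → f ∉ Yset (O : Set (Sym2 V)) G' e := by
    rintro g hg hefg (⟨-, h, hh, hefh⟩ | rfl)
    · exact Finset.disjoint_left.1 hOG hg (hefg.eq_third hefh ▸ hh)
    · exact hefg.ne rfl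
  rcases mem_Yset_or_formTriangle_of_mem_blockers hA hfA with ⟨hf, rfl⟩ | ⟨g, hg, hefg, rfl⟩ <;>
    rcases mem_Yset_or_formTriangle_of_mem_blockers hB hfB with ⟨hf', rfl⟩ | ⟨h, hh, hefh, rfl⟩
  · rfl
  · exact absurd hf (hnot h hh hefh)
  · exact absurd hf' (hnot g hg hefg)
  · rw [hefg.eq_third hefh]

lemma exists_eq_singleton_of_mem_blockers (hee' : e ≠ e') (hA : A ∈ blockers O G' e)
    (hA' : A ∈ blockers O G' e') :
    ∃ f ∈ Yset (O : Set (Sym2 V)) G' e, f ∈ Yset (O : Set (Sym2 V)) G' e' ∧ A = {f} := by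
  have hpair : ∀ {e f g}, FormTriangle e f g → ({f, g} : Finset (Sym2 V)) ≠ {f} := fun h hfg =>
    h.swap.symm.ne (Finset.mem_singleton.1 (hfg ▸ by simp)).symm
  obtain ⟨f, hf⟩ := nonempty_of_mem_blockers hA
  rcases mem_Yset_or_formTriangle_of_mem_blockers hA hf with ⟨hfe, rfl⟩ | ⟨g, -, h, rfl⟩ <;>
    rcases mem_Yset_or_formTriangle_of_mem_blockers hA' hf with ⟨hfe', hA'⟩ | ⟨g', -, h', hA'⟩
  · exact ⟨f, hfe, hfe', rfl⟩
  · exact absurd hA'.symm (hpair h')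
  · exact absurd hA' (hpair h)
  · have hg : g ∈ ({f, g'} : Finset (Sym2 V)) := hA' ▸ by simp
    obtain rfl : g = g' := by
      simpa [h.swap.symm.ne.symm] using hg
    exact absurd (h.eq_first h') hee'

lemma sum_pow_card_blockers_le {p : ℝ} (hp0 : 0 ≤ p) :
    ∑ A ∈ blockers O G' e, p ^ #A ≤
      p ^ 2 * (X (O : Set (Sym2 V)) e : ℝ) + p * (Y (O : Set (Sym2 V)) G' e : ℝ) := by
  have hY : ∑ A ∈ (Yset (O : Set (Sym2 V)) G' e).toFinset.image singleton, p ^ #A ≤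
      p * (Y (O : Set (Sym2 V)) G' e : ℝ) := by
    rw [Finset.sum_image Finset.singleton_injective.injOn, Y, Set.ncard_eq_toFinset_card']
    simp [mul_comm]
  have hX : ∑ A ∈ (openTrianglePairs (O : Set (Sym2 V)) e).toFinset.image Sym2.toFinset,
      p ^ #A ≤ p ^ 2 * (X (O : Set (Sym2 V)) e : ℝ) := by
    rw [X, Set.ncard_eq_toFinset_card', mul_comm, ← nsmul_eq_mul]
    refine (Finset.sum_le_card_nsmul _ _ (p ^ 2) fun A hA => ?_).trans
      (nsmul_le_nsmul_left (by positivity) Finset.card_image_le)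
    simp only [Finset.mem_image, Set.mem_toFinset] at hA
    obtain ⟨_, ⟨f, g, rfl, -, -, h⟩, rfl⟩ := hA
    rw [Sym2.toFinset_mk_eq, Finset.card_pair h.swap.symm.ne]
  have hinter : 0 ≤ ∑ A ∈ (Yset (O : Set (Sym2 V)) G' e).toFinset.image singleton ∩
      (openTrianglePairs (O : Set (Sym2 V)) e).toFinset.image Sym2.toFinset, p ^ #A :=
    Finset.sum_nonneg fun A _ => by positivity
  rw [blockers]
  linarith [Finset.sum_union_inter (f := fun A : Finset (Sym2 V) => p ^ #A)
    (s₁ := (Yset (O : Set (Sym2 V)) G' e).toFinset.image singleton)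
    (s₂ := (openTrianglePairs (O : Set (Sym2 V)) e).toFinset.image Sym2.toFinset)]

lemma mem_Opp_iff_avoids (hOG : Disjoint O G') (hcl : ∀ f ∈ O, ¬ Closes f G') (he : e ∈ O)
    (hS : S ⊆ O) : e ∈ Opp O G' S ↔ Avoids id (blockers O G' e) S := by
  have heG : e ∉ G' := Finset.disjoint_left.1 hOG he
  by_cases heS : e ∈ S
  · have hblocked : {e} ∈ blockers O G' e := mem_blockers.2 (Or.inl ⟨e, Or.inr rfl, rfl⟩)
    simp only [Opp, Finset.mem_filter, Finset.mem_sdiff, heS, not_true, and_false, false_and,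
      false_iff]
    exact fun h => h _ hblocked (Finset.singleton_subset_iff.2 heS)
  have hcl' := hcl e he
  rw [closes_iff_exists_formTriangle heG] at hcl'
  simp only [Opp, Finset.mem_filter, Finset.mem_sdiff, he, heS, not_false_eq_true, and_self,
    true_and, Avoids, id]
  rw [← not_iff_not, not_not, closes_iff_exists_formTriangle (by simp [heG, heS])]
  push Not
  constructor
  · rintro ⟨f, hf, g, hg, h⟩
    have hclopen : ∀ {f g}, f ∈ S → g ∈ G' → FormTriangle e f g →
        ∃ A ∈ blockers O G' e, A ⊆ S := fun {f g} hf hg h =>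
      ⟨{f}, mem_blockers.2 (Or.inl ⟨f, Or.inl ⟨hS hf, g, hg, h⟩, rfl⟩),
        Finset.singleton_subset_iff.2 hf⟩
    rcases Finset.mem_union.1 hf with hf | hf <;> rcases Finset.mem_union.1 hg with hg | hg
    · exact absurd ⟨f, hf, g, hg, h⟩ hcl'
    · exact hclopen hg hf h.symm
    · exact hclopen hf hg h
    · exact ⟨{f, g}, mem_blockers.2 (Or.inr ⟨f, hS hf, g, hS hg, h, rfl⟩),
        Finset.insert_subset hf (Finset.singleton_subset_iff.2 hg)⟩
  · rintro ⟨A, hA, hAS⟩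
    rcases mem_blockers.1 hA with ⟨f, ⟨-, g, hg, h⟩ | rfl, rfl⟩ | ⟨f, -, g, -, h, rfl⟩
    · exact ⟨f, Finset.mem_union_right _ (Finset.singleton_subset_iff.1 hAS), g,
        Finset.mem_union_left _ hg, h⟩
    · exact absurd (Finset.singleton_subset_iff.1 hAS) heS
    · obtain ⟨hf, hg⟩ := Finset.insert_subset_iff.1 hAS
      exact ⟨f, Finset.mem_union_right _ hf, g,
        Finset.mem_union_right _ (Finset.singleton_subset_iff.1 hg), h⟩

end Blockers

section Degree

variable [Fintype V] {G H : Finset (Sym2 V)}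

/-- The neighbourhood of `x` in the graph with edge set `H`. -/
noncomputable def nbrs (H : Finset (Sym2 V)) (x : V) : Finset V := {y | s(x, y) ∈ H}

lemma mem_nbrs {x y : V} : y ∈ nbrs H x ↔ s(x, y) ∈ H := by
  simp [nbrs]

lemma card_nbrs_le (H : Finset (Sym2 V)) (x : V) : #(nbrs H x) ≤ maxDeg H :=
  Finset.le_sup (f := degF H) (Finset.mem_univ x)

lemma mk_mem_induce_verts {x y z w : V} (hx : s(x, z) ∈ H) (hy : s(y, w) ∈ H)
    (h : s(x, y) ∈ G) : s(x, y) ∈ induce G (verts H) := by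
  simp only [induce, verts, Finset.mem_filter, Sym2.mem_iff, forall_eq_or_imp, forall_eq,
    Finset.mem_univ, true_and]
  exact ⟨h, ⟨z, hx⟩, w, hy⟩

variable [DecidableEq V] {O G' : Finset (Sym2 V)} {e f : Sym2 V} {A : Finset (Sym2 V)}

lemma exists_mem_of_mem_blockers (hA : A ∈ blockers O G' e) (hf : f ∈ A) :
    ∃ x, x ∈ e ∧ x ∈ f := by
  rcases mem_Yset_or_formTriangle_of_mem_blockers hA hf with
    ⟨⟨-, g, -, x, y, z, -, -, -, rfl, rfl, -⟩ | rfl, -⟩ | ⟨g, -, ⟨x, y, z, -, -, -, rfl, rfl, -⟩, -⟩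
  · exact ⟨x, Sym2.mem_mk_left x y, Sym2.mem_mk_left x z⟩
  · exact ⟨_, f.out_fst_mem, f.out_fst_mem⟩
  · exact ⟨x, Sym2.mem_mk_left x y, Sym2.mem_mk_left x z⟩

lemma card_filter_incident_le (H : Finset (Sym2 V)) (f : Sym2 V) :
    #{e ∈ H | ∃ x, x ∈ e ∧ x ∈ f} ≤ 2 * maxDeg H := by
  induction f with
  | _ a b =>
    have hsub : {e ∈ H | ∃ x, x ∈ e ∧ x ∈ s(a, b)} ⊆
        (nbrs H a).image (fun y => s(a, y)) ∪ (nbrs H b).image (fun y => s(b, y)) := by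
      intro e he
      obtain ⟨heH, x, ⟨y, rfl⟩, hx⟩ := Finset.mem_filter.1 he
      rcases Sym2.mem_iff.1 hx with rfl | rfl
      · exact Finset.mem_union_left _ (Finset.mem_image_of_mem _ (mem_nbrs.2 heH))
      · exact Finset.mem_union_right _ (Finset.mem_image_of_mem _ (mem_nbrs.2 heH))
    calc #{e ∈ H | ∃ x, x ∈ e ∧ x ∈ s(a, b)}
        ≤ #(nbrs H a) + #(nbrs H b) :=
          (Finset.card_le_card hsub).trans <| (Finset.card_union_le _ _).trans <|
            add_le_add Finset.card_image_le Finset.card_image_le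
      _ ≤ 2 * maxDeg H := by
          linarith [card_nbrs_le H a, card_nbrs_le H b]

lemma card_filter_mem_blockers_le (hOG : Disjoint O G') (H : Finset (Sym2 V)) (f : Sym2 V) :
    #{j ∈ H.sigma (blockers O G') | f ∈ j.2} ≤ 2 * maxDeg H := by
  refine le_trans ?_ (card_filter_incident_le H f)
  refine Finset.card_le_card_of_injOn Sigma.fst ?_ ?_
  · rintro ⟨e, A⟩ hA
    simp only [Finset.coe_filter, Finset.mem_sigma, Set.mem_ofPred_eq] at hA ⊢
    exact ⟨hA.1.1, exists_mem_of_mem_blockers hA.1.2 hA.2⟩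
  · rintro ⟨e, A⟩ hA ⟨_, B⟩ hB rfl
    simp only [Finset.coe_filter, Finset.mem_sigma, Set.mem_ofPred_eq] at hA hB
    rw [eq_of_mem_blockers hOG hA.1.2 hB.1.2 hA.2 hB.2]

end Degree

section Repeat

variable [Fintype V] [DecidableEq V] {O G' H : Finset (Sym2 V)} {e : Sym2 V} {L : ℕ}

/-- The repetitions of a blocker `{xz}` of the edge `xy` as a blocker of another edge `xw` of `H`
at the same vertex `x`. -/
noncomputable def starRepeats (G' H : Finset (Sym2 V)) (x y : V) :
    Finset (Σ _ : Sym2 V, Finset (Sym2 V)) :=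
  ((nbrs H x).erase y).biUnion fun w =>
    (insert y (insert w (nbrs G' y ∩ nbrs G' w))).image fun z => ⟨s(x, w), {s(x, z)}⟩

/-- The repetitions of a blocker `{xz}` of the edge `xy` as a blocker of an edge `zw` of `H`. -/
noncomputable def pathRepeats (G' H : Finset (Sym2 V)) (x y : V) :
    Finset (Σ _ : Sym2 V, Finset (Sym2 V)) :=
  (nbrs (induce G' (verts H)) y).biUnion fun z =>
    (nbrs H z).image fun w => ⟨s(z, w), {s(x, z)}⟩

lemma mem_starRepeats {x y z w : V} (hw : s(x, w) ∈ H) (hwy : w ≠ y)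
    (hzy : z = y ∨ s(y, z) ∈ G') (hzw : z = w ∨ s(w, z) ∈ G') :
    ⟨s(x, w), {s(x, z)}⟩ ∈ starRepeats G' H x y := by
  refine Finset.mem_biUnion.2 ⟨w, Finset.mem_erase.2 ⟨hwy, mem_nbrs.2 hw⟩,
    Finset.mem_image.2 ⟨z, ?_, rfl⟩⟩
  simp only [Finset.mem_insert, Finset.mem_inter, mem_nbrs]
  tauto

lemma mem_pathRepeats {x y z w : V} (hxy : s(x, y) ∈ H) (hzw : s(z, w) ∈ H)
    (hyz : s(y, z) ∈ G') : ⟨s(z, w), {s(x, z)}⟩ ∈ pathRepeats G' H x y :=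
  Finset.mem_biUnion.2 ⟨z, mem_nbrs.2 (mk_mem_induce_verts (Sym2.eq_swap ▸ hxy) hzw hyz),
    Finset.mem_image_of_mem _ (mem_nbrs.2 hzw)⟩

lemma card_starRepeats_le {x y : V}
    (hL : ∀ w, s(x, w) ∈ H → w ≠ y → #(nbrs G' y ∩ nbrs G' w) + 2 ≤ L) :
    #(starRepeats G' H x y) ≤ maxDeg H * L := by
  refine (Finset.card_biUnion_le_card_mul _ _ L fun w hw => ?_).trans
    (Nat.mul_le_mul_right L ((Finset.card_le_card (Finset.erase_subset _ _)).trans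
      (card_nbrs_le H x)))
  obtain ⟨hwy, hw⟩ := Finset.mem_erase.1 hw
  calc #((insert y (insert w (nbrs G' y ∩ nbrs G' w))).image _)
      ≤ #(insert y (insert w (nbrs G' y ∩ nbrs G' w))) := Finset.card_image_le
    _ ≤ #(nbrs G' y ∩ nbrs G' w) + 2 :=
        (Finset.card_insert_le _ _).trans (Nat.succ_le_succ (Finset.card_insert_le _ _))
    _ ≤ L := hL w (mem_nbrs.1 hw) hwy

lemma card_pathRepeats_le (G' H : Finset (Sym2 V)) (x y : V) :
    #(pathRepeats G' H x y) ≤ maxDeg H * maxDeg (induce G' (verts H)) := by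
  rw [mul_comm]
  exact (Finset.card_biUnion_le_card_mul _ _ _ fun z _ =>
    Finset.card_image_le.trans (card_nbrs_le H z)).trans
      (Nat.mul_le_mul_right _ (card_nbrs_le _ y))

lemma mem_repeats_of_mem_Yset {x y z : V} {e' : Sym2 V} (hxy : s(x, y) ∈ H) (he' : e' ∈ H)
    (hne : e' ≠ s(x, y)) (hyz : z = y ∨ s(y, z) ∈ G')
    (hf : s(x, z) ∈ Yset (O : Set (Sym2 V)) G' e') :
    ⟨e', {s(x, z)}⟩ ∈ (starRepeats G' H x y ∪ pathRepeats G' H x y) ∪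
      (starRepeats G' H y x ∪ pathRepeats G' H y x) := by
  obtain ⟨a, w, c, rfl, hac, hcw⟩ := exists_of_mem_Yset hf
  rcases Sym2.eq_iff.1 hac with ⟨rfl, rfl⟩ | ⟨rfl, rfl⟩
  · have hwy : w ≠ y := by
      rintro rfl
      exact hne rfl
    exact Finset.mem_union_left _ (Finset.mem_union_left _ (mem_starRepeats he' hwy hyz hcw))
  · rcases hyz with rfl | hyz
    · have hwx : w ≠ x := by
        rintro rfl
        exact hne Sym2.eq_swap
      rw [Sym2.eq_swap (a := x)]
      exact Finset.mem_union_right _ (Finset.mem_union_left _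
        (mem_starRepeats he' hwx (Or.inl rfl) hcw))
    · exact Finset.mem_union_left _ (Finset.mem_union_right _ (mem_pathRepeats hxy he' hyz))

lemma sigma_blockers_inter_subset {x y : V} (hxy : s(x, y) ∈ H) :
    ((H.erase s(x, y)).sigma fun e' => blockers O G' s(x, y) ∩ blockers O G' e') ⊆
      (starRepeats G' H x y ∪ pathRepeats G' H x y) ∪
        (starRepeats G' H y x ∪ pathRepeats G' H y x) := by
  rintro ⟨e', A⟩ hA
  simp only [Finset.mem_sigma, Finset.mem_erase, Finset.mem_inter] at hA
  obtain ⟨⟨hne, he'⟩, hA, hA'⟩ := hA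
  obtain ⟨f, hf, hf', rfl⟩ := exists_eq_singleton_of_mem_blockers hne.symm hA hA'
  obtain ⟨a, b, z, hab, rfl, hbz⟩ := exists_of_mem_Yset hf
  rw [hab] at hxy hne
  rcases Sym2.eq_iff.1 hab with ⟨rfl, rfl⟩ | ⟨rfl, rfl⟩
  · exact mem_repeats_of_mem_Yset hxy he' hne hbz hf'
  · rw [Finset.union_comm]
    exact mem_repeats_of_mem_Yset hxy he' hne hbz hf'

lemma sum_card_blockers_inter_le
    (hL : ∀ x y w, s(x, y) ∈ H → s(x, w) ∈ H → w ≠ y → #(nbrs G' y ∩ nbrs G' w) + 2 ≤ L)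
    (he : e ∈ H) :
    ∑ e' ∈ H.erase e, #(blockers O G' e ∩ blockers O G' e') ≤
      2 * (maxDeg H * (L + maxDeg (induce G' (verts H)))) := by
  induction e with
  | _ x y =>
    have hcard : ∀ {x y}, s(x, y) ∈ H → #(starRepeats G' H x y ∪ pathRepeats G' H x y) ≤
        maxDeg H * (L + maxDeg (induce G' (verts H))) := fun {x y} hxy =>
      (Finset.card_union_le _ _).trans <| by
        rw [mul_add]
        exact add_le_add (card_starRepeats_le (hL x y · hxy)) (card_pathRepeats_le G' H x y)
    rw [← Finset.card_sigma, two_mul]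
    exact (Finset.card_le_card (sigma_blockers_inter_subset he)).trans
      ((Finset.card_union_le _ _).trans (add_le_add (hcard he) (hcard (Sym2.eq_swap ▸ he))))

end Repeat

section Step

variable [Fintype V] [DecidableEq V] {O G' H K : Finset (Sym2 V)} {p : ℝ} {e : Sym2 V} {L : ℕ}

lemma sum_clash_blockers_le (hOG : Disjoint O G') (hp0 : 0 ≤ p) (hp1 : p ≤ 1)
    (hXY : ∀ e ∈ H, p ^ 2 * (X (O : Set (Sym2 V)) e : ℝ) + p * (Y (O : Set (Sym2 V)) G' e : ℝ) ≤ 1)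
    (hL : ∀ x y w, s(x, y) ∈ H → s(x, w) ∈ H → w ≠ y → #(nbrs G' y ∩ nbrs G' w) + 2 ≤ L) :
    ∑ i ∈ H.sigma (blockers O G'), ∑ j ∈ (H.sigma (blockers O G')).erase i,
        clash (fun _ => p) i.2 j.2 ≤
      #H * (p * (8 * maxDeg H + 2 * (maxDeg H * (L + maxDeg (induce G' (verts H)))))) := by
  have hclash := sum_clash_le (A := fun i : Σ _ : Sym2 V, Finset (Sym2 V) => i.2)
    (I := H.sigma (blockers O G')) hp0 hp1
    (fun i hi => card_le_two_of_mem_blockers (Finset.mem_sigma.1 hi).2)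
    (card_filter_mem_blockers_le hOG H)
  have hrepeat := Finset.sum_le_card_nsmul H _ _ fun e he =>
    sum_card_blockers_inter_le (O := O) hL he
  rw [← sum_card_filter_sigma_eq, smul_eq_mul] at hrepeat
  have hweight : ∑ i ∈ H.sigma (blockers O G'), p ^ #i.2 ≤ #H := by
    rw [Finset.sum_sigma, ← nsmul_one #H]
    exact Finset.sum_le_card_nsmul _ _ _ fun e he => (sum_pow_card_blockers_le hp0).trans (hXY e he)
  calc ∑ i ∈ H.sigma (blockers O G'), ∑ j ∈ (H.sigma (blockers O G')).erase i,
          clash (fun _ => p) i.2 j.2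
      ≤ p * (2 * ((2 : ℕ) * (2 * maxDeg H : ℕ) * #H)
          + (#H * (2 * (maxDeg H * (L + maxDeg (induce G' (verts H))))) : ℕ)) := by
        refine hclash.trans ?_
        gcongr
    _ = _ := by
        push_cast
        ring

lemma pOpen_eq_prob (hOG : Disjoint O G') (hcl : ∀ f ∈ O, ¬ Closes f G') (he : e ∈ O) :
    pOpen O G' p e = prob O (fun _ => p) (Avoids id (blockers O G' e)) := by
  rw [pOpen, prob, Finset.sum_filter]
  refine Finset.sum_congr rfl fun S hS => if_congr
    (mem_Opp_iff_avoids hOG hcl he (Finset.mem_powerset.1 hS)) ?_ rfl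
  rw [weight, Finset.prod_const, Finset.prod_const]

lemma pOpen_pos (hOG : Disjoint O G') (hcl : ∀ f ∈ O, ¬ Closes f G') (hp0 : 0 ≤ p) (hp1 : p < 1)
    (he : e ∈ O) : 0 < pOpen O G' p e := by
  rw [pOpen_eq_prob hOG hcl he]
  refine (Finset.prod_pos fun A hA => ?_).trans_le (prod_one_sub_le_prob_avoids
    (fun _ => hp0) (fun _ => hp1.le) fun A hA => subset_of_mem_blockers he hA)
  rw [Finset.prod_const, sub_pos]
  exact pow_lt_one₀ hp0 hp1 (nonempty_of_mem_blockers hA).card_ne_zero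

lemma prob_subset_Opp_le (hOG : Disjoint O G') (hcl : ∀ f ∈ O, ¬ Closes f G') (hHO : H ⊆ O)
    (hp0 : 0 ≤ p) (hp : p ≤ 1 / 2) :
    prob O (fun _ => p) (fun S => H ⊆ Opp O G' S) ≤ (∏ e ∈ H, pOpen O G' p e) *
      Real.exp (2 * ∑ i ∈ H.sigma (blockers O G'), ∑ j ∈ (H.sigma (blockers O G')).erase i,
        clash (fun _ => p) i.2 j.2) := by
  have hevent : prob O (fun _ => p) (fun S => H ⊆ Opp O G' S) =
      prob O (fun _ => p) (fun S => ∀ e ∈ H, Avoids id (blockers O G' e) S) :=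
    prob_congr fun S hS => forall₂_congr fun e he => mem_Opp_iff_avoids hOG hcl (hHO he) hS
  rw [hevent, Finset.prod_congr rfl fun e he => pOpen_eq_prob hOG hcl (hHO he)]
  refine prob_forall_avoids_le (fun _ => hp0) (fun _ => hp.trans (by norm_num))
    (fun e he A hA => subset_of_mem_blockers (hHO he) hA) fun e _ A hA => ?_
  rw [Finset.prod_const]
  exact (pow_le_of_le_one hp0 (hp.trans (by norm_num))
    (nonempty_of_mem_blockers hA).card_ne_zero).trans hp

lemma jointProb_and (O : Finset (Sym2 V)) (p : ℝ) (q : Sym2 V → ℝ)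
    (E F : Finset (Sym2 V) → Prop) :
    jointProb O p q (fun S T => E S ∧ F T) = prob O (fun _ => p) E * prob O q F := by
  simp only [jointProb, prob, Finset.sum_filter, Finset.sum_mul_sum, weight, Finset.prod_const]
  refine Finset.sum_congr rfl fun S _ => Finset.sum_congr rfl fun T _ => ?_
  by_cases hS : E S <;> by_cases hT : F T <;> simp [hS, hT]

lemma jointProb_subset_le (hHO : H ⊆ O) (hKO : K ⊆ O) (hp0 : 0 ≤ p) (hp1 : p ≤ 1)
    {q : Sym2 V → ℝ} (hq : ∀ e ∈ H, 0 ≤ q e) :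
    jointProb O p q (fun S T => H ⊆ T ∩ Opp O G' S ∧ K ⊆ S) ≤
      p ^ #K * prob O (fun _ => p) (fun S => H ⊆ Opp O G' S) * ∏ e ∈ H, q e := by
  have hevent : (fun S T => H ⊆ T ∩ Opp O G' S ∧ K ⊆ S) =
      fun S T => (K ⊆ S ∧ H ⊆ Opp O G' S) ∧ H ⊆ T := by
    simp only [Finset.subset_inter_iff]
    grind
  rw [hevent, jointProb_and, prob_subset hHO, ← Finset.prod_const, ← prob_subset hKO]
  gcongr
  · exact Finset.prod_nonneg hq
  · exact prob_and_le_prob_mul (fun _ => hp0) (fun _ => hp1) (fun _ _ hST h => h.trans hST)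
      (antitone_subset_Opp O G' H)

lemma jointProb_subset_le_exp (hOG : Disjoint O G') (hcl : ∀ f ∈ O, ¬ Closes f G')
    (hp0 : 0 ≤ p) (hp : p ≤ 1 / 2) (hO : O.Nonempty) (hHO : H ⊆ O) (hKO : K ⊆ O)
    (hXY : ∀ e ∈ H, p ^ 2 * (X (O : Set (Sym2 V)) e : ℝ) + p * (Y (O : Set (Sym2 V)) G' e : ℝ) ≤ 1)
    (hL : ∀ x y w, s(x, y) ∈ H → s(x, w) ∈ H → w ≠ y → #(nbrs G' y ∩ nbrs G' w) + 2 ≤ L) :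
    jointProb O p (fun e => O.inf' hO (pOpen O G' p) / pOpen O G' p e)
        (fun S T => H ⊆ T ∩ Opp O G' S ∧ K ⊆ S) ≤
      Real.exp (2 * (p * (8 * maxDeg H + 2 * (maxDeg H * (L + maxDeg (induce G' (verts H)))))))
        ^ #H * O.inf' hO (pOpen O G' p) ^ #H * p ^ #K := by
  have hpos : ∀ e ∈ O, 0 < pOpen O G' p e := fun e he =>
    pOpen_pos hOG hcl hp0 (by linarith) he
  have hmin : 0 < O.inf' hO (pOpen O G' p) := (Finset.lt_inf'_iff hO).2 hpos
  have hprod : 0 < ∏ e ∈ H, pOpen O G' p e := Finset.prod_pos fun e he => hpos e (hHO he)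
  have hopen := (prob_subset_Opp_le hOG hcl hHO hp0 hp).trans <| mul_le_mul_of_nonneg_left
    (Real.exp_le_exp.2 (mul_le_mul_of_nonneg_left
      (sum_clash_blockers_le hOG hp0 (by linarith) hXY hL) zero_le_two)) hprod.le
  rw [mul_left_comm, Real.exp_nat_mul] at hopen
  refine (jointProb_subset_le hHO hKO hp0 (by linarith)
    fun e he => (div_pos hmin (hpos e (hHO he))).le).trans ?_
  rw [Finset.prod_div_distrib, Finset.prod_const, mul_div_assoc', div_le_iff₀ hprod]
  have hscale := mul_le_mul_of_nonneg_left hopen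
    (by positivity : 0 ≤ p ^ #K * O.inf' hO (pOpen O G' p) ^ #H)
  linarith

lemma card_inter_nbrs_le_of_parts {ι : Type*} {c : V → ι} {ℓ : ℝ} (hHO : H ⊆ O)
    (hpart : ∀ f ∈ O, ∀ g ∈ O, Sym2.map c f = Sym2.map c g → f = g)
    (hcommon : ∀ x y, c x ≠ c y → (#{z | s(x, z) ∈ G' ∧ s(y, z) ∈ G'} : ℝ) ≤ ℓ - 2)
    {x y w : V} (hy : s(x, y) ∈ H) (hw : s(x, w) ∈ H) (hwy : w ≠ y) :
    #(nbrs G' y ∩ nbrs G' w) + 2 ≤ ⌊ℓ⌋₊ := by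
  have hc : c y ≠ c w := fun h => hwy <| Sym2.congr_right.1 <|
    hpart _ (hHO hw) _ (hHO hy) (by simp [h])
  have hinter : nbrs G' y ∩ nbrs G' w = ({z | s(y, z) ∈ G' ∧ s(w, z) ∈ G'} : Finset V) := by
    ext z
    simp [mem_nbrs]
  rw [hinter]
  refine Nat.le_floor ?_
  push_cast
  linarith [hcommon y w hc]

end Step

section Growth

lemma exp_le_one_add_inv {p D a b l : ℝ} (hp : p ≤ (D ^ 4)⁻¹) (hD : 24 ≤ D)
    (ha0 : 0 ≤ a) (ha : a ≤ D) (hb0 : 0 ≤ b) (hb : b ≤ D) (hl0 : 0 ≤ l) (hl : 24 * l ≤ D ^ 2) :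
    Real.exp (2 * (p * (8 * a + 2 * (a * (l + b))))) ≤ 1 + D⁻¹ := by
  have hD0 : 0 < D := by linarith
  have hexponent : 2 * (p * (8 * a + 2 * (a * (l + b)))) ≤ D⁻¹ / 2 :=
    calc 2 * (p * (8 * a + 2 * (a * (l + b))))
        ≤ 2 * ((D ^ 4)⁻¹ * (8 * D + 2 * (D * (l + D)))) := by gcongr
      _ = (D ^ 3)⁻¹ * (16 + 4 * l + 4 * D) := by
          field_simp
          ring
      _ ≤ (D ^ 3)⁻¹ * (D ^ 2 / 2) := by
          gcongr
          nlinarith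
      _ = D⁻¹ / 2 := by field_simp
  have hD1 : D⁻¹ ≤ 1 := inv_le_one_of_one_le₀ (by linarith)
  have hexp := Real.exp_bound_div_one_sub_of_interval (x := D⁻¹ / 2) (by positivity) (by linarith)
  calc Real.exp (2 * (p * (8 * a + 2 * (a * (l + b))))) ≤ Real.exp (D⁻¹ / 2) :=
        Real.exp_le_exp.2 hexponent
    _ ≤ 1 / (1 - D⁻¹ / 2) := hexp
    _ ≤ 1 + D⁻¹ := by
        rw [div_le_iff₀ (by linarith)]
        nlinarith [inv_pos.2 hD0]

lemma eventually_log_pow_le_rpow {ε : ℝ} (hε : 0 < ε) (k : ℕ) (C : ℝ) :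
    ∀ᶠ n : ℝ in Filter.atTop, C * Real.log n ^ k ≤ n ^ ε := by
  have hlog := ((isLittleO_log_rpow_rpow_atTop (k : ℝ) hε).const_mul_left C).bound one_pos
  filter_upwards [hlog, Filter.eventually_ge_atTop 0] with n hn hn0
  rw [one_mul, Real.rpow_natCast, Real.norm_of_nonneg (Real.rpow_nonneg hn0 ε)] at hn
  exact (Real.le_norm_self _).trans hn

lemma eventually_exp_le_one_add_rpow {δ : ℝ} (hδ : 0 < δ) (k : ℕ) :
    ∀ᶠ n : ℝ in Filter.atTop, ∀ p a b : ℝ, p ≤ n ^ (-δ) → 0 ≤ a → a ≤ n ^ (δ / 4) → 0 ≤ b →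
      b ≤ n ^ (δ / 4) →
      Real.exp (2 * (p * (8 * a + 2 * (a * (⌊Real.log n ^ k⌋₊ + b))))) ≤ 1 + n ^ (-(δ / 4)) := by
  filter_upwards [eventually_log_pow_le_rpow (half_pos hδ) k 24,
    (tendsto_rpow_atTop (by positivity : 0 < δ / 4)).eventually_ge_atTop 24,
    Filter.eventually_ge_atTop 1] with n hlog hD hn p a b hp ha0 ha hb0 hb
  have hn0 : 0 ≤ n := zero_le_one.trans hn
  have hD4 : (n ^ (δ / 4)) ^ 4 = n ^ δ := by
    rw [← Real.rpow_mul_natCast hn0, Nat.cast_ofNat, div_mul_cancel₀ δ four_ne_zero]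
  have hD2 : (n ^ (δ / 4)) ^ 2 = n ^ (δ / 2) := by
    rw [← Real.rpow_mul_natCast hn0]
    ring_nf
  rw [Real.rpow_neg hn0, ← hD4] at hp
  rw [Real.rpow_neg hn0]
  refine exp_le_one_add_inv hp hD ha0 ha hb0 hb (Nat.cast_nonneg _) ?_
  rw [hD2]
  exact (mul_le_mul_of_nonneg_left (Nat.floor_le (pow_nonneg (Real.log_nonneg hn) k))
    (by norm_num)).trans hlog

lemma eventually_inv_log_pow_le_one (k : ℕ) :
    ∀ᶠ n : ℝ in Filter.atTop, (Real.log n ^ k)⁻¹ ≤ 1 := by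
  filter_upwards [Real.tendsto_log_atTop.eventually_ge_atTop 1] with n hn
  exact inv_le_one_of_one_le₀ (one_le_pow₀ hn)

end Growth

theorem prob_small_subgraphs_general {δ : ℝ} (hδ : 0 < δ) :
    ∀ᶠ n : ℝ in Filter.atTop, ∀ {V : Type*} [Fintype V] [DecidableEq V] {ι : Type*} {c : V → ι}
      {O G' H K : Finset (Sym2 V)} {p : ℝ} (hO : O.Nonempty), Disjoint O G' →
      (∀ f ∈ O, ¬ Closes f G') →
      (∀ f ∈ O, ∀ g ∈ O, Sym2.map c f = Sym2.map c g → f = g) →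
      (∀ x y, c x ≠ c y → (#{z | s(x, z) ∈ G' ∧ s(y, z) ∈ G'} : ℝ) ≤ Real.log n ^ 10 - 2) →
      0 ≤ p → p ≤ n ^ (-δ) →
      (∀ e ∈ H, p ^ 2 * (X (O : Set (Sym2 V)) e : ℝ) + p * (Y (O : Set (Sym2 V)) G' e : ℝ) ≤ 1) →
      H ⊆ O → K ⊆ O →
      (maxDeg H : ℝ) ≤ n ^ (δ / 4) → (maxDeg (induce G' (verts H)) : ℝ) ≤ n ^ (δ / 4) →
      jointProb O p (fun e => O.inf' hO (pOpen O G' p) / pOpen O G' p e)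
          (fun S T => H ⊆ T ∩ Opp O G' S ∧ K ⊆ S) ≤
        (1 + n ^ (-(δ / 4))) ^ #H * O.inf' hO (pOpen O G' p) ^ #H * p ^ #K := by
  filter_upwards [(tendsto_rpow_neg_atTop hδ).eventually_le_const one_half_pos,
    eventually_exp_le_one_add_rpow hδ 10] with
    n hhalf hgrowth V _ _ ι c O G' H K p hO hOG hcl hpart hcommon hp0 hp hXY hHO hKO hΔH hΔG
  have hmin : 0 ≤ O.inf' hO (pOpen O G' p) :=
    Finset.le_inf' hO _ fun e he => (pOpen_pos hOG hcl hp0 (by linarith) he).le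
  refine (jointProb_subset_le_exp hOG hcl hp0 (hp.trans hhalf) hO hHO hKO hXY
    fun _ _ _ => card_inter_nbrs_le_of_parts hHO hpart hcommon).trans ?_
  gcongr
  exact hgrowth p _ _ hp (Nat.cast_nonneg _) hΔH (Nat.cast_nonneg _) hΔG

/-- **Lemma 5.1 of the paper (probability of small subgraphs).**
Fix `δ ∈ (0,1/8)`.  For all large `n`: let `[n]` be partitioned into parts (the fibres of
`c`), and let `O, G'` be disjoint graphs such that no edge of `O` forms a triangle with
two edges of `G'`, `O` has no edge inside a part and at most one edge between any two
parts, and `|N_{G'}(x) ∩ N_{G'}(y)| ≤ (log n)^{10} − 2` for `x, y` in distinct parts.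
Suppose `0 < p ≤ n^{−δ}` and `p²X(e) + pY(e) ≤ (log n)^{−9}` for every `e ∈ O`.  Run the
step of the process: `G₁ ⊆ O` is `p`-random, `O'' = {f ∈ O \ G₁ : f` forms no triangle
with two edges of `G' ∪ G₁}`, `s = min_{f∈O} P(f ∈ O'')`, `q_e = s/P(e ∈ O'')`, `Q ⊆ O`
is `q`-random independent of `G₁`, and `O₁ = Q ∩ O''`.  Then for all `H, K ⊆ O` with
`Δ(H), Δ(K) ≤ n^{δ/4}` and `Δ(G'[V(H)]) ≤ n^{δ/4}`,
`P(H ⊆ O₁ ∧ K ⊆ G₁) ≤ (1 + n^{−δ/4})^{e(H)}·s^{e(H)}·p^{e(K)}`. -/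
theorem prob_small_subgraphs :
    ∀ δ : ℝ, 0 < δ → δ < 1 / 8 →
      ∃ n₀ : ℕ, ∀ n : ℕ, n₀ ≤ n →
        ∀ (c : Fin n → ℕ) (O G' : Finset (Sym2 (Fin n))),
          O ∩ G' = ∅ →
          (∀ f ∈ O, ¬ Closes f G') →
          (∀ f ∈ O, ∀ x y : Fin n, f = s(x, y) → c x ≠ c y) →
          (∀ f ∈ O, ∀ g ∈ O, Sym2.map c f = Sym2.map c g → f = g) →
          (∀ x y : Fin n, c x ≠ c y →
            (((Finset.univ.filter fun z => s(x, z) ∈ G' ∧ s(y, z) ∈ G').card : ℝ))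
              ≤ (Real.log n) ^ 10 - 2) →
          ∀ p : ℝ, 0 < p → p ≤ (n : ℝ) ^ (-δ) →
            (∀ e ∈ O,
              p ^ 2 * (X (↑O : Set (Sym2 (Fin n))) e : ℝ)
                + p * (Y (↑O : Set (Sym2 (Fin n))) (↑G' : Set (Sym2 (Fin n))) e : ℝ)
                ≤ ((Real.log n) ^ 9)⁻¹) →
          ∀ hO : O.Nonempty,
          ∀ H K : Finset (Sym2 (Fin n)), H ⊆ O → K ⊆ O →
            (maxDeg H : ℝ) ≤ (n : ℝ) ^ (δ / 4) →
            (maxDeg K : ℝ) ≤ (n : ℝ) ^ (δ / 4) →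
            (maxDeg (induce G' (verts H)) : ℝ) ≤ (n : ℝ) ^ (δ / 4) →
            jointProb O p
                (fun e => O.inf' hO (pOpen O G' p) / pOpen O G' p e)
                (fun S T => H ⊆ T ∩ Opp O G' S ∧ K ⊆ S)
              ≤ (1 + (n : ℝ) ^ (-(δ / 4))) ^ H.card
                  * (O.inf' hO (pOpen O G' p)) ^ H.card * p ^ K.card := by
  intro δ hδ _
  obtain ⟨n₀, h⟩ := Filter.eventually_atTop.1 (tendsto_natCast_atTop_atTop.eventually
    ((prob_small_subgraphs_general hδ).and (eventually_inv_log_pow_le_one 9)))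
  exact ⟨n₀, fun n hn c O G' hOG hcl _ hpart hcommon p hp0 hp hXY hO H K hH hK hΔH _ hΔG =>
    (h n hn).1 hO (Finset.disjoint_iff_inter_eq_empty.2 hOG) hcl hpart hcommon hp0.le hp
      (fun e he => (hXY e (hH he)).trans (h n hn).2) hH hK hΔH hΔG⟩

end Stmt5
end

section
/- Fix δ ∈ (0,1/8). There exists n₀ = n₀(δ) such that the following holds for all n ≥ n₀. Let V = [n] be partitioned into parts V₁,…,V_m, and let O and G' be graphs on V with O ∩ G' = ∅ such that O contains no edges within a part and at most one edge between any two distinct parts, and |N_{G'}(y) ∩ N_{G'}(z)| ≤ (log n)^{10} − 2 whenever y and z lie in distinct parts. Let H ⊆ O be a subgraph with Δ(H) ≤ n^{δ/4} and Δ(G'[V(H)]) ≤ n^{δ/4}. Then for every e ∈ H: Σ_{f ∈ H, f ≠ e} |𝒴(e) ∩ 𝒴(f)| ≤ 8·n^{δ/2}. -/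
open scoped Classical

namespace Stmt6

variable {V : Type*}

/-- `e`, `f`, `g` are the three edges of a triangle.  (With this parametrization the
predicate is symmetric in `f` and `g`.) -/
def FormTriangle (e f g : Sym2 V) : Prop :=
  ∃ x y z : V, x ≠ y ∧ x ≠ z ∧ y ≠ z ∧ e = s(x, y) ∧ f = s(x, z) ∧ g = s(y, z)

/-- `e` and `f ∈ O` span a clopen triangle: the third edge of the triangle lies in `G'`. -/
def SpanClopen (O G' : Set (Sym2 V)) (e f : Sym2 V) : Prop :=
  f ∈ O ∧ ∃ g ∈ G', FormTriangle e f g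

/-- `𝒴(e) = {f ∈ O : e, f span a clopen triangle} ∪ {e}`. -/
def Yset (O G' : Set (Sym2 V)) (e : Sym2 V) : Set (Sym2 V) :=
  {f | SpanClopen O G' e f} ∪ {e}

/-- The degree of `x` in the graph (edge set) `H`. -/
noncomputable def degF [Fintype V] (H : Finset (Sym2 V)) (x : V) : ℕ :=
  (Finset.univ.filter fun y => s(x, y) ∈ H).card

/-- The maximum degree `Δ(H)`. -/
noncomputable def maxDeg [Fintype V] (H : Finset (Sym2 V)) : ℕ :=
  Finset.univ.sup (degF H)

/-- `V(H)`: the set of vertices covered by the edges of `H`. -/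
noncomputable def verts [Fintype V] (H : Finset (Sym2 V)) : Finset V :=
  Finset.univ.filter fun x => ∃ y, s(x, y) ∈ H

/-- `G[S]`: the subgraph of `G` induced on the vertex set `S`. -/
noncomputable def induce (G : Finset (Sym2 V)) (S : Finset V) : Finset (Sym2 V) :=
  G.filter fun a => ∀ x ∈ a, x ∈ S

/-!
Split the edges `f ≠ e` of `H` according to whether they meet `e`. If `e = xy` and `f = xz` share
a vertex, then besides `xy`, `xz` and `yz` the set `𝒴(e) ∩ 𝒴(f)` only contains edges `xw` with `w` a
common `G'`-neighbour of `y` and `z`, and there are at most `2 Δ(H)` such `f`. If `e` and `f` are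
disjoint, a common element of `𝒴(e)` and `𝒴(f)` has the form `ac` with `e = ab`, `f = cd` and
`bc, ad ∈ G'`. Hence the pair `(f, ac)` is determined by the endpoint `a` of `e`, a neighbour `c`
of `b` and a neighbour `d` of `a` in `G'[V(H)]`, so all these `f` together contribute at most
`2 Δ(G'[V(H)])²`.
-/

section Yset

variable {O G : Set (Sym2 V)} {e f k : Sym2 V}

lemma exists_of_mem_Yset_of_ne (hk : k ∈ Yset O G e) (hne : k ≠ e) :
    ∃ a b z, a ≠ b ∧ e = s(a, b) ∧ k = s(a, z) ∧ s(b, z) ∈ G := by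
  obtain ⟨-, _, hg, a, b, z, hab, -, -, he, hk, rfl⟩ := hk.resolve_right hne
  exact ⟨a, b, z, hab, he, hk, hg⟩

lemma exists_mem_and_mem_of_mem_Yset (hk : k ∈ Yset O G e) : ∃ v ∈ e, v ∈ k := by
  rcases eq_or_ne k e with rfl | hne
  · exact ⟨k.out.1, k.out_fst_mem, k.out_fst_mem⟩
  · obtain ⟨a, b, z, -, rfl, rfl, -⟩ := exists_of_mem_Yset_of_ne hk hne
    exact ⟨a, Sym2.mem_mk_left a b, Sym2.mem_mk_left a z⟩

lemma mk_mem_of_mk_mem_Yset {x y w : V} (hk : s(x, w) ∈ Yset O G s(x, y))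
    (hne : s(x, w) ≠ s(x, y)) : s(y, w) ∈ G := by
  obtain ⟨a, b, z, hab, he, hk, hbz⟩ := exists_of_mem_Yset_of_ne hk hne
  rcases Sym2.eq_iff.1 he with ⟨rfl, rfl⟩ | ⟨rfl, rfl⟩
  · rwa [Sym2.congr_right.1 hk]
  · rcases Sym2.eq_iff.1 hk with ⟨h, -⟩ | ⟨-, rfl⟩
    · exact absurd h.symm hab
    · exact absurd rfl hne

lemma Yset_inter_Yset_subset {x y z : V} (hyz : y ≠ z) :
    Yset O G s(x, y) ∩ Yset O G s(x, z) ⊆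
      (fun w => s(x, w)) '' {w | s(y, w) ∈ G ∧ s(z, w) ∈ G} ∪
        {s(x, y), s(x, z), s(y, z)} := by
  rintro k ⟨hky, hkz⟩
  by_contra hk
  simp only [Set.mem_union, Set.mem_insert_iff, Set.mem_singleton_iff, not_or] at hk
  obtain ⟨hcommon, hkxy, hkxz, hkyz⟩ := hk
  have hxk : x ∈ k := by
    by_contra hxk
    have hyk : y ∈ k := by simpa [hxk] using exists_mem_and_mem_of_mem_Yset hky
    have hzk : z ∈ k := by simpa [hxk] using exists_mem_and_mem_of_mem_Yset hkz
    exact hkyz ((Sym2.mem_and_mem_iff hyz).1 ⟨hyk, hzk⟩)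
  obtain ⟨w, rfl⟩ := hxk
  exact hcommon ⟨w, ⟨mk_mem_of_mk_mem_Yset hky hkxy, mk_mem_of_mk_mem_Yset hkz hkxz⟩, rfl⟩

lemma exists_of_mem_Yset_inter_of_disjoint (hef : ∀ v ∈ e, v ∉ f)
    (hke : k ∈ Yset O G e) (hkf : k ∈ Yset O G f) :
    ∃ a b c d, e = s(a, b) ∧ f = s(c, d) ∧ k = s(a, c) ∧ s(b, c) ∈ G ∧ s(a, d) ∈ G := by
  have hk_ne_e : k ≠ e := by
    rintro rfl
    obtain ⟨v, hvf, hvk⟩ := exists_mem_and_mem_of_mem_Yset hkf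
    exact hef v hvk hvf
  have hk_ne_f : k ≠ f := by
    rintro rfl
    obtain ⟨v, hve, hvk⟩ := exists_mem_and_mem_of_mem_Yset hke
    exact hef v hve hvk
  obtain ⟨a, b, u, -, rfl, rfl, hbu⟩ := exists_of_mem_Yset_of_ne hke hk_ne_e
  obtain ⟨c, d, v, -, rfl, hk, hdv⟩ := exists_of_mem_Yset_of_ne hkf hk_ne_f
  rcases Sym2.eq_iff.1 hk with ⟨rfl, -⟩ | ⟨rfl, rfl⟩
  · exact absurd (Sym2.mem_mk_left a d) (hef a (Sym2.mem_mk_left a b))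
  · exact ⟨a, b, u, d, rfl, rfl, rfl, hbu, Sym2.eq_swap ▸ hdv⟩

end Yset

section Degree

lemma mk_mem_induce {G : Finset (Sym2 V)} {S : Finset V} {a b : V} :
    s(a, b) ∈ induce G S ↔ s(a, b) ∈ G ∧ a ∈ S ∧ b ∈ S := by
  simp only [induce, Finset.mem_filter, Sym2.mem_iff, forall_eq_or_imp, forall_eq]

variable [Fintype V] {G H : Finset (Sym2 V)}

/-- The neighbourhood `N_G(x)` of `x` in the graph `G`; its cardinality is `degF G x`. -/
noncomputable def nbhd (G : Finset (Sym2 V)) (x : V) : Finset V :=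
  Finset.univ.filter fun y => s(x, y) ∈ G

lemma mem_nbhd {x y : V} : y ∈ nbhd G x ↔ s(x, y) ∈ G := by
  simp only [nbhd, Finset.mem_filter, Finset.mem_univ, true_and]

lemma card_nbhd (G : Finset (Sym2 V)) (x : V) : (nbhd G x).card = degF G x := rfl

lemma nbhd_inter_nbhd [DecidableEq V] (G : Finset (Sym2 V)) (y z : V) :
    nbhd G y ∩ nbhd G z = Finset.univ.filter fun w => s(y, w) ∈ G ∧ s(z, w) ∈ G := by
  ext w
  simp only [Finset.mem_inter, mem_nbhd, Finset.mem_filter, Finset.mem_univ, true_and]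

lemma degF_le_maxDeg (H : Finset (Sym2 V)) (x : V) : degF H x ≤ maxDeg H :=
  Finset.le_sup (f := degF H) (Finset.mem_univ x)

lemma card_filter_mem_eq_degF [DecidableEq V] (H : Finset (Sym2 V)) (x : V) :
    (H.filter (x ∈ ·)).card = degF H x := by
  have himage : H.filter (x ∈ ·) = (nbhd H x).image fun y => s(x, y) := by
    ext f
    simp only [Finset.mem_filter, Finset.mem_image, mem_nbhd]
    constructor
    · rintro ⟨hf, y, rfl⟩
      exact ⟨y, hf, rfl⟩
    · rintro ⟨y, hy, rfl⟩
      exact ⟨hy, Sym2.mem_mk_left x y⟩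
  rw [himage, Finset.card_image_of_injective _ fun _ _ => Sym2.congr_right.1, card_nbhd]

lemma left_mem_verts {a b : V} (h : s(a, b) ∈ H) : a ∈ verts H :=
  Finset.mem_filter.2 ⟨Finset.mem_univ a, b, h⟩

lemma right_mem_verts {a b : V} (h : s(a, b) ∈ H) : b ∈ verts H :=
  left_mem_verts (Sym2.eq_swap ▸ h)

end Degree

section Counting

variable [Fintype V] [DecidableEq V] {O : Set (Sym2 V)} {G H : Finset (Sym2 V)}

lemma ncard_Yset_inter_le_card_nbhd_inter_add_three {x y z : V} (hyz : y ≠ z) :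
    (Yset O G s(x, y) ∩ Yset O G s(x, z)).ncard ≤ (nbhd G y ∩ nbhd G z).card + 3 := by
  have hsub : Yset O G s(x, y) ∩ Yset O G s(x, z) ⊆
      ((nbhd G y ∩ nbhd G z).image (fun w => s(x, w)) ∪
        {s(x, y), s(x, z), s(y, z)} : Finset (Sym2 V)) := by
    simpa only [nbhd_inter_nbhd, Finset.coe_union, Finset.coe_image, Finset.coe_filter_univ,
      Finset.coe_insert, Finset.coe_singleton, Finset.mem_coe] using
      Yset_inter_Yset_subset (O := O) (G := (G : Set (Sym2 V))) (x := x) hyz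
  calc _ ≤ _ := Set.ncard_le_ncard hsub
    _ = _ := Set.ncard_coe_finset _
    _ ≤ _ := Finset.card_union_le _ _
    _ ≤ (nbhd G y ∩ nbhd G z).card + 3 := add_le_add Finset.card_image_le Finset.card_le_three

lemma sum_ncard_Yset_inter_le_of_common_vertex {x y : V} {K : ℕ}
    (hK : ∀ z, s(x, z) ∈ H → y ≠ z → (nbhd G y ∩ nbhd G z).card ≤ K) :
    ∑ f ∈ (H.erase s(x, y)).filter (x ∈ ·), (Yset O G s(x, y) ∩ Yset O G f).ncard ≤
      degF H x * (K + 3) := by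
  have hterm : ∀ f ∈ (H.erase s(x, y)).filter (x ∈ ·),
      (Yset O G s(x, y) ∩ Yset O G f).ncard ≤ K + 3 := by
    intro f hf
    obtain ⟨hf, z, rfl⟩ := Finset.mem_filter.1 hf
    obtain ⟨hne, hfH⟩ := Finset.mem_erase.1 hf
    have hyz : y ≠ z := fun h => hne (h ▸ rfl)
    exact (ncard_Yset_inter_le_card_nbhd_inter_add_three hyz).trans (by gcongr; exact hK z hfH hyz)
  calc _ ≤ ((H.erase s(x, y)).filter (x ∈ ·)).card * (K + 3) :=
        Finset.sum_le_card_nsmul _ _ _ hterm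
    _ ≤ (H.filter (x ∈ ·)).card * (K + 3) := by gcongr; exact Finset.erase_subset _ _
    _ = degF H x * (K + 3) := by rw [card_filter_mem_eq_degF]

lemma sum_ncard_Yset_inter_le_of_disjoint {x y : V} (he : s(x, y) ∈ H) :
    ∑ f ∈ H.filter (fun f => ∀ v ∈ s(x, y), v ∉ f), (Yset O G s(x, y) ∩ Yset O G f).ncard ≤
      2 * (degF (induce G (verts H)) x * degF (induce G (verts H)) y) := by
  set F := induce G (verts H)
  let pairs (a b : V) : Finset (Σ _ : Sym2 V, Sym2 V) :=
    (nbhd F b ×ˢ nbhd F a).image fun p => ⟨s(p.1, p.2), s(a, p.1)⟩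
  have hpairs (a b : V) : (pairs a b).card ≤ degF F b * degF F a :=
    Finset.card_image_le.trans (Finset.card_product _ _).le
  have mem_pairs {a b c d : V} (he : s(a, b) ∈ H) (hf : s(c, d) ∈ H) (hbc : s(b, c) ∈ G)
      (had : s(a, d) ∈ G) : ⟨s(c, d), s(a, c)⟩ ∈ pairs a b := by
    have hc : c ∈ nbhd F b :=
      mem_nbhd.2 (mk_mem_induce.2 ⟨hbc, right_mem_verts he, left_mem_verts hf⟩)
    have hd : d ∈ nbhd F a :=
      mem_nbhd.2 (mk_mem_induce.2 ⟨had, left_mem_verts he, right_mem_verts hf⟩)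
    exact Finset.mem_image.2 ⟨(c, d), Finset.mk_mem_product hc hd, rfl⟩
  have hsub : (H.filter fun f => ∀ v ∈ s(x, y), v ∉ f).sigma
      (fun f => (Yset O G s(x, y) ∩ Yset O G f).toFinset) ⊆ pairs x y ∪ pairs y x := by
    rintro ⟨f, k⟩ hfk
    simp only [Finset.mem_sigma, Finset.mem_filter, Set.mem_toFinset] at hfk
    obtain ⟨⟨hfH, hdisj⟩, hke, hkf⟩ := hfk
    obtain ⟨a, b, c, d, hab, rfl, rfl, hbc, had⟩ :=
      exists_of_mem_Yset_inter_of_disjoint hdisj hke hkf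
    have hmem := mem_pairs (hab ▸ he) hfH hbc had
    rcases Sym2.eq_iff.1 hab with ⟨rfl, rfl⟩ | ⟨rfl, rfl⟩
    · exact Finset.mem_union_left _ hmem
    · exact Finset.mem_union_right _ hmem
  calc _ = ((H.filter fun f => ∀ v ∈ s(x, y), v ∉ f).sigma
          (fun f => (Yset O G s(x, y) ∩ Yset O G f).toFinset)).card := by
        simp only [Finset.card_sigma, Set.ncard_eq_toFinset_card']
    _ ≤ (pairs x y ∪ pairs y x).card := Finset.card_le_card hsub
    _ ≤ (pairs x y).card + (pairs y x).card := Finset.card_union_le _ _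
    _ ≤ degF F y * degF F x + degF F x * degF F y := add_le_add (hpairs x y) (hpairs y x)
    _ = 2 * (degF F x * degF F y) := by ring

theorem sum_ncard_Yset_inter_le {K : ℕ} {e : Sym2 V} (he : e ∈ H)
    (hK : ∀ x y z, s(x, y) ∈ H → s(x, z) ∈ H → y ≠ z → (nbhd G y ∩ nbhd G z).card ≤ K) :
    ∑ f ∈ H.erase e, (Yset O G e ∩ Yset O G f).ncard ≤
      2 * maxDeg H * (K + 3) + 2 * maxDeg (induce G (verts H)) ^ 2 := by
  induction e with | _ x y
  set F := induce G (verts H)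
  let A (v : V) : Finset (Sym2 V) := (H.erase s(x, y)).filter (v ∈ ·)
  let D : Finset (Sym2 V) := H.filter fun f => ∀ v ∈ s(x, y), v ∉ f
  let Y (f : Sym2 V) : ℕ := (Yset O G s(x, y) ∩ Yset O G f).ncard
  have hcover : H.erase s(x, y) ⊆ A x ∪ A y ∪ D := by
    intro f hf
    simp only [A, D, Finset.mem_union, Finset.mem_filter, Sym2.mem_iff, forall_eq_or_imp,
      forall_eq]
    have hfH := Finset.mem_of_mem_erase hf
    tauto
  have hx : ∑ f ∈ A x, Y f ≤ maxDeg H * (K + 3) :=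
    (sum_ncard_Yset_inter_le_of_common_vertex (hK x y · he)).trans
      (by gcongr; exact degF_le_maxDeg H x)
  have hy : ∑ f ∈ A y, Y f ≤ maxDeg H * (K + 3) := by
    simp only [A, Y, Sym2.eq_swap (a := x)] at he ⊢
    exact (sum_ncard_Yset_inter_le_of_common_vertex (hK y x · he)).trans
      (by gcongr; exact degF_le_maxDeg H y)
  have hD : ∑ f ∈ D, Y f ≤ 2 * (maxDeg F * maxDeg F) :=
    (sum_ncard_Yset_inter_le_of_disjoint he).trans (by gcongr <;> exact degF_le_maxDeg F _)
  calc ∑ f ∈ H.erase s(x, y), Y f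
      ≤ ∑ f ∈ A x ∪ A y ∪ D, Y f := Finset.sum_le_sum_of_subset hcover
    _ ≤ ∑ f ∈ A x, Y f + ∑ f ∈ A y, Y f + ∑ f ∈ D, Y f := by
        have h₁ := Finset.sum_union_inter (s₁ := A x ∪ A y) (s₂ := D) (f := Y)
        have h₂ := Finset.sum_union_inter (s₁ := A x) (s₂ := A y) (f := Y)
        omega
    _ ≤ maxDeg H * (K + 3) + maxDeg H * (K + 3) + 2 * (maxDeg F * maxDeg F) := by gcongr
    _ = 2 * maxDeg H * (K + 3) + 2 * maxDeg F ^ 2 := by ring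

end Counting

lemma eventually_log_pow_add_const_le_rpow {ε : ℝ} (hε : 0 < ε) (k : ℕ) (C : ℝ) :
    ∀ᶠ x : ℝ in Filter.atTop, Real.log x ^ k + C ≤ x ^ ε := by
  have hlog : (fun x => Real.log x ^ k) =o[Filter.atTop] fun x : ℝ => x ^ ε := by
    simpa only [Real.rpow_natCast] using isLittleO_log_rpow_rpow_atTop (k : ℝ) hε
  have hconst : (fun _ => C) =o[Filter.atTop] fun x : ℝ => x ^ ε :=
    Asymptotics.isLittleO_const_left.2 <| .inr <|
      tendsto_norm_atTop_atTop.comp (tendsto_rpow_atTop hε)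
  filter_upwards [(hlog.add hconst).bound one_pos, Filter.eventually_ge_atTop 0] with x hx hx₀
  rw [one_mul, Real.norm_of_nonneg (Real.rpow_nonneg hx₀ ε)] at hx
  exact (le_abs_self _).trans hx

theorem sum_Yset_intersections_general {δ : ℝ} (hδ : 0 < δ) (k : ℕ) :
    ∃ n₀ : ℕ, ∀ n : ℕ, n₀ ≤ n →
      ∀ {V ι : Type*} [Fintype V] [DecidableEq V], Fintype.card V = n →
        ∀ (c : V → ι) (O : Set (Sym2 V)) (G H : Finset (Sym2 V)),
          Set.InjOn (Sym2.map c) H →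
          (∀ y z, c y ≠ c z → ((nbhd G y ∩ nbhd G z).card : ℝ) ≤ Real.log n ^ k) →
          (maxDeg H : ℝ) ≤ (n : ℝ) ^ (δ / 4) →
          (maxDeg (induce G (verts H)) : ℝ) ≤ (n : ℝ) ^ (δ / 4) →
          ∀ e ∈ H, (∑ f ∈ H.erase e, ((Yset O G e ∩ Yset O G f).ncard : ℝ)) ≤
            4 * (n : ℝ) ^ (δ / 2) := by
  obtain ⟨n₀, hn₀⟩ := Filter.eventually_atTop.1
    (eventually_log_pow_add_const_le_rpow (ε := δ / 4) (by positivity) k 3).natCast_atTop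
  refine ⟨n₀, fun n hn {V ι} _ _ _ c O G H hc hcodeg hH hG e he => ?_⟩
  set K := ⌊Real.log n ^ k⌋₊
  have hK : ∀ x y z, s(x, y) ∈ H → s(x, z) ∈ H → y ≠ z → (nbhd G y ∩ nbhd G z).card ≤ K := by
    refine fun x y z hxy hxz hyz => Nat.le_floor (hcodeg y z fun hcyz => hyz ?_)
    exact Sym2.congr_right.1 (hc hxy hxz (by simp only [Sym2.map_mk, hcyz]))
  have hKn : (K : ℝ) + 3 ≤ (n : ℝ) ^ (δ / 4) :=
    (add_le_add_left (Nat.floor_le (pow_nonneg (Real.log_natCast_nonneg n) k)) 3).trans (hn₀ n hn)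
  have hsum := (Nat.cast_le (α := ℝ)).2 (sum_ncard_Yset_inter_le (O := O) he hK)
  push_cast at hsum
  calc _ ≤ 2 * (maxDeg H : ℝ) * (K + 3) + 2 * (maxDeg (induce G (verts H)) : ℝ) ^ 2 := hsum
    _ ≤ 2 * (n : ℝ) ^ (δ / 4) * (n : ℝ) ^ (δ / 4) + 2 * ((n : ℝ) ^ (δ / 4)) ^ 2 := by gcongr
    _ = 4 * ((n : ℝ) ^ (δ / 4)) ^ 2 := by ring
    _ = 4 * (n : ℝ) ^ (δ / 2) := by
        rw [← Real.rpow_mul_natCast n.cast_nonneg]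
        ring_nf

/-- **Observation 5.3 of the paper.**
Fix `δ ∈ (0,1/8)`.  For all large `n`: let `[n]` be partitioned into parts (the fibres of
`c`), and let `O, G'` be graphs with `O ∩ G' = ∅` such that `O` has no edge inside a part
and at most one edge between any two parts, and `|N_{G'}(y) ∩ N_{G'}(z)| ≤ (log n)^{10} − 2`
for `y, z` in distinct parts.  If `H ⊆ O` satisfies `Δ(H) ≤ n^{δ/4}` and
`Δ(G'[V(H)]) ≤ n^{δ/4}`, then for every `e ∈ H`,
`Σ_{f ∈ H, f ≠ e} |𝒴(e) ∩ 𝒴(f)| ≤ 8·n^{δ/2}`. -/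
theorem sum_Yset_intersections :
    ∀ δ : ℝ, 0 < δ → δ < 1 / 8 →
      ∃ n₀ : ℕ, ∀ n : ℕ, n₀ ≤ n →
        ∀ (c : Fin n → ℕ) (O G' : Finset (Sym2 (Fin n))),
          O ∩ G' = ∅ →
          (∀ f ∈ O, ∀ x y : Fin n, f = s(x, y) → c x ≠ c y) →
          (∀ f ∈ O, ∀ g ∈ O, Sym2.map c f = Sym2.map c g → f = g) →
          (∀ y z : Fin n, c y ≠ c z →
            (((Finset.univ.filter fun w => s(y, w) ∈ G' ∧ s(z, w) ∈ G').card : ℝ))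
              ≤ (Real.log n) ^ 10 - 2) →
          ∀ H : Finset (Sym2 (Fin n)), H ⊆ O →
            (maxDeg H : ℝ) ≤ (n : ℝ) ^ (δ / 4) →
            (maxDeg (induce G' (verts H)) : ℝ) ≤ (n : ℝ) ^ (δ / 4) →
            ∀ e ∈ H,
              (∑ f ∈ H.erase e,
                  ((Yset (↑O : Set (Sym2 (Fin n))) (↑G' : Set (Sym2 (Fin n))) e ∩
                      Yset (↑O : Set (Sym2 (Fin n))) (↑G' : Set (Sym2 (Fin n))) f).ncard : ℝ))
                ≤ 8 * (n : ℝ) ^ (δ / 2) := by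
  intro δ hδ _
  obtain ⟨n₀, h⟩ := sum_Yset_intersections_general hδ 10
  exact ⟨n₀, fun n hn c O G' _ _ hO hcodeg H hHO hH hG e he =>
    (h n hn (Fintype.card_fin n) c O G' H (fun f hf g hg => hO f (hHO hf) g (hHO hg))
      (fun y z hyz => by rw [nbhd_inter_nbhd]; linarith [hcodeg y z hyz]) hH hG e he).trans
      (by gcongr; norm_num)⟩

end Stmt6
end

section
/- Let O be a graph on a finite vertex set V, let G' be a further graph on V, let D ≥ 0, and let H ⊆ O be a subgraph with Δ(H) ≤ D. Define the hypergraph edge families ℋ₁ = { {f} : f ∈ 𝒴(e) for some e ∈ H } and ℋ₂ = ⋃_{e∈H} 𝒳(e). Then: (i) the number of pairs (σ, τ) ∈ ℋ₁ × ℋ₂ with σ ∩ τ ≠ ∅ is at most 2·D·|ℋ₁|; and (ii) the number of pairs (σ, τ) ∈ ℋ₂ × ℋ₂ with σ ∩ τ ≠ ∅ is at most 6·D·|ℋ₂|. -/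
open scoped Classical

namespace Stmt7

variable {V : Type*}

/-- `e`, `f`, `g` are the three edges of a triangle.  (With this parametrization the
predicate is symmetric in `f` and `g`.) -/
def FormTriangle (e f g : Sym2 V) : Prop :=
  ∃ x y z : V, x ≠ y ∧ x ≠ z ∧ y ≠ z ∧ e = s(x, y) ∧ f = s(x, z) ∧ g = s(y, z)

/-- `𝒳(e)`: the set of unordered pairs `{f, g} ⊆ O` such that `e, f, g` form an open
triangle. -/
def openTrianglePairs (O : Set (Sym2 V)) (e : Sym2 V) : Set (Sym2 (Sym2 V)) :=
  {p | ∃ f g : Sym2 V, p = s(f, g) ∧ f ∈ O ∧ g ∈ O ∧ FormTriangle e f g}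

/-- `e` and `f ∈ O` span a clopen triangle: the third edge of the triangle lies in `G'`. -/
def SpanClopen (O G' : Set (Sym2 V)) (e f : Sym2 V) : Prop :=
  f ∈ O ∧ ∃ g ∈ G', FormTriangle e f g

/-- `𝒴(e) = {f ∈ O : e, f span a clopen triangle} ∪ {e}`. -/
def Yset (O G' : Set (Sym2 V)) (e : Sym2 V) : Set (Sym2 V) :=
  {f | SpanClopen O G' e f} ∪ {e}

/-- The neighbourhood of `x` in the graph (edge set) `H`. -/
def nbhd (H : Set (Sym2 V)) (x : V) : Set V := {y | s(x, y) ∈ H}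

/-- `ℋ₁`: the edges appearing in some `𝒴(e)`, `e ∈ H` (the singleton hyperedges). -/
def H1 (O G' H : Set (Sym2 V)) : Set (Sym2 V) :=
  {f | ∃ e ∈ H, f ∈ Yset O G' e}

/-- `ℋ₂ = ⋃_{e ∈ H} 𝒳(e)` (the hyperedges which are pairs of edges). -/
def H2 (O H : Set (Sym2 V)) : Set (Sym2 (Sym2 V)) :=
  {τ | ∃ e ∈ H, τ ∈ openTrianglePairs O e}

/-! A pair in `ℋ₂` containing the edge `ab` consists of two edges of a triangle `abz` whose third
edge, `az` or `bz`, lies in `H`; the pair is determined by which of the two it is and by `z`. So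
`ab` lies in at most `deg_H a + deg_H b ≤ 2D` pairs of `ℋ₂`, and a pair `σ` of edges meets at most
`4D` of them. Summing these bounds over `σ` gives both counts, the second even with `4D`. -/

section Counting

variable {α β : Type*}

lemma encard_setOf_mem_and_rel_le {A : Set α} {R : α → β → Prop} {k : ℕ∞}
    (hk : ∀ a ∈ A, {b | R a b}.encard ≤ k) :
    {q : α × β | q.1 ∈ A ∧ R q.1 q.2}.encard ≤ k * A.encard := by
  have fibers : {q : α × β | q.1 ∈ A ∧ R q.1 q.2} = ⋃ a ∈ A, Prod.mk a '' {b | R a b} := by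
    ext ⟨a, b⟩
    simp [and_comm]
  rw [fibers]
  rcases A.finite_or_infinite with hA | hA
  · lift A to Finset α using hA
    calc (⋃ a ∈ A, Prod.mk a '' {b | R a b}).encard
        ≤ ∑ a ∈ A, (Prod.mk a '' {b | R a b}).encard := A.set_encard_biUnion_le _
      _ ≤ A.card • k := Finset.sum_le_card_nsmul _ _ _ fun a ha =>
          (Set.encard_image_le _ _).trans (hk a ha)
      _ = k * (A : Set α).encard := by rw [Set.encard_coe_eq_coe_finsetCard, nsmul_eq_mul, mul_comm]
  · rcases eq_or_ne k 0 with rfl | hk₀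
    · have fiber_empty : ∀ a ∈ A, {b | R a b} = ∅ := by simpa using hk
      simp +contextual [fiber_empty]
    · simp [hA.encard_eq, ENat.mul_top hk₀]

lemma encard_setOf_mem_and_exists_mem_le {T : Set (Sym2 α)} {k : ℕ∞}
    (hk : ∀ a, {τ | τ ∈ T ∧ a ∈ τ}.encard ≤ k) (σ : Sym2 α) :
    {τ | τ ∈ T ∧ ∃ a, a ∈ σ ∧ a ∈ τ}.encard ≤ 2 * k := by
  induction σ with | _ a b
  have split : {τ | τ ∈ T ∧ ∃ c, c ∈ s(a, b) ∧ c ∈ τ} =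
      {τ | τ ∈ T ∧ a ∈ τ} ∪ {τ | τ ∈ T ∧ b ∈ τ} := by
    ext τ
    simp [and_or_left]
  rw [split, two_mul]
  exact (Set.encard_union_le _ _).trans (add_le_add (hk a) (hk b))

lemma cast_ncard_le_mul_ncard_of_encard_le {R : Type*} [Semiring R] [PartialOrder R]
    [IsOrderedRing R] {s : Set α} {t : Set β} (ht : t.Finite) {k : ℕ} {C : R} (hkC : k ≤ C)
    (h : s.encard ≤ k * t.encard) : (s.ncard : R) ≤ C * t.ncard := by
  have h_nat : s.ncard ≤ k * t.ncard := by
    rw [← ht.cast_ncard_eq] at h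
    norm_cast at h
    exact (Set.encard_le_coe_iff_finite_ncard_le.mp h).2
  calc (s.ncard : R) ≤ (k * t.ncard : ℕ) := Nat.mono_cast h_nat
    _ = k * t.ncard := Nat.cast_mul _ _
    _ ≤ C * t.ncard := by gcongr

end Counting

lemma setOf_mem_H2_and_edge_mem_subset (O H : Set (Sym2 V)) (a b : V) :
    {τ | τ ∈ H2 O H ∧ s(a, b) ∈ τ} ⊆
      (fun z => s(s(a, b), s(b, z))) '' nbhd H a ∪
        (fun z => s(s(a, b), s(a, z))) '' nbhd H b := by
  rintro _ ⟨⟨_, he, f, g, rfl, -, -, x, y, z, -, -, -, rfl, rfl, rfl⟩, hab⟩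
  have he' : s(y, x) ∈ H := Sym2.eq_swap (a := x) ▸ he
  simp only [Sym2.mem_iff, Sym2.eq_iff] at hab
  rcases hab with (⟨rfl, rfl⟩ | ⟨rfl, rfl⟩) | (⟨rfl, rfl⟩ | ⟨rfl, rfl⟩)
  · exact Or.inl ⟨y, he, by simp [Sym2.eq_swap]⟩
  · exact Or.inr ⟨y, he, by simp [Sym2.eq_swap]⟩
  · exact Or.inl ⟨x, he', by simp [Sym2.eq_swap]⟩
  · exact Or.inr ⟨x, he', by simp [Sym2.eq_swap]⟩

lemma encard_setOf_mem_H2_and_edge_mem_le (O H : Set (Sym2 V)) (a b : V) :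
    {τ | τ ∈ H2 O H ∧ s(a, b) ∈ τ}.encard ≤ (nbhd H a).encard + (nbhd H b).encard :=
  calc {τ | τ ∈ H2 O H ∧ s(a, b) ∈ τ}.encard
      ≤ _ := Set.encard_le_encard (setOf_mem_H2_and_edge_mem_subset O H a b)
    _ ≤ _ := Set.encard_union_le _ _
    _ ≤ _ := add_le_add (Set.encard_image_le _ _) (Set.encard_image_le _ _)

theorem hypergraph_intersection_counts_general (O G' H : Set (Sym2 V)) {D : ℕ∞}
    (hΔ : ∀ x : V, (nbhd H x).encard ≤ D) :
    {q : Sym2 V × Sym2 (Sym2 V) |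
        q.1 ∈ H1 O G' H ∧ q.2 ∈ H2 O H ∧ q.1 ∈ q.2}.encard
      ≤ 2 * D * (H1 O G' H).encard ∧
    {q : Sym2 (Sym2 V) × Sym2 (Sym2 V) |
        q.1 ∈ H2 O H ∧ q.2 ∈ H2 O H ∧ ∃ g, g ∈ q.1 ∧ g ∈ q.2}.encard
      ≤ 4 * D * (H2 O H).encard := by
  have edge_degree_le (f : Sym2 V) : {τ | τ ∈ H2 O H ∧ f ∈ τ}.encard ≤ 2 * D := by
    induction f with | _ a b
    rw [two_mul]
    exact (encard_setOf_mem_H2_and_edge_mem_le O H a b).trans (add_le_add (hΔ a) (hΔ b))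
  have pair_degree_le (σ : Sym2 (Sym2 V)) :
      {τ | τ ∈ H2 O H ∧ ∃ g, g ∈ σ ∧ g ∈ τ}.encard ≤ 4 * D := by
    convert encard_setOf_mem_and_exists_mem_le edge_degree_le σ using 1
    ring
  exact ⟨encard_setOf_mem_and_rel_le fun f _ => edge_degree_le f,
    encard_setOf_mem_and_rel_le fun σ _ => pair_degree_le σ⟩

/-- **Observation 5.4 of the paper.**
If `H ⊆ O` has maximum degree at most `D`, then the number of pairs
`(σ, τ) ∈ ℋ₁ × ℋ₂` sharing an edge is at most `2·D·|ℋ₁|`, and the number of pairs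
`(σ, τ) ∈ ℋ₂ × ℋ₂` sharing an edge is at most `6·D·|ℋ₂|`. -/
theorem hypergraph_intersection_counts [Fintype V]
    (O G' H : Set (Sym2 V)) (hHO : H ⊆ O) (D : ℝ) (hD : 0 ≤ D)
    (hΔ : ∀ x : V, ((nbhd H x).ncard : ℝ) ≤ D) :
    (({q : Sym2 V × Sym2 (Sym2 V) |
          q.1 ∈ H1 O G' H ∧ q.2 ∈ H2 O H ∧ q.1 ∈ q.2}).ncard : ℝ)
        ≤ 2 * D * ((H1 O G' H).ncard : ℝ) ∧
    (({q : Sym2 (Sym2 V) × Sym2 (Sym2 V) |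
          q.1 ∈ H2 O H ∧ q.2 ∈ H2 O H ∧ ∃ g, g ∈ q.1 ∧ g ∈ q.2}).ncard : ℝ)
        ≤ 6 * D * ((H2 O H).ncard : ℝ) := by
  have floor_le : (⌊D⌋₊ : ℝ) ≤ D := Nat.floor_le hD
  obtain ⟨h₁, h₂⟩ := hypergraph_intersection_counts_general O G' H (D := ⌊D⌋₊) fun x =>
    Set.encard_le_coe_iff_finite_ncard_le.mpr ⟨Set.toFinite _, Nat.le_floor (hΔ x)⟩
  exact ⟨cast_ncard_le_mul_ncard_of_encard_le (k := 2 * ⌊D⌋₊) (Set.toFinite _)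
      (by push_cast; linarith) (mod_cast h₁),
    cast_ncard_le_mul_ncard_of_encard_le (k := 4 * ⌊D⌋₊) (Set.toFinite _)
      (by push_cast; linarith) (mod_cast h₂)⟩

end Stmt7
end

section
/- Fix β ∈ (0,1). There exists n₀ = n₀(β) such that for all n ≥ n₀, all integers k with 1 ≤ k ≤ n, and every set I with |I| = k, the family Λ(I) of all sets of the form I^{(2)} \ (S₁^{(2)} ∪ ⋯ ∪ S_ℓ^{(2)}), where ℓ ≥ 0 and S₁,…,S_ℓ ⊆ I satisfy |S_i| ≥ n^{2β} for every i and Σ_i |S_i| ≤ 2·k·n^{β}, has size |Λ(I)| ≤ 2^{k·n^{2β}}. -/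
open scoped Classical

namespace Stmt8

/-- `S^{(2)}`: the unordered pairs of distinct elements of `S`, encoded as the
2-element subsets of `S`. -/
def pairs {α : Type*} (S : Finset α) : Finset (Finset α) :=
  Finset.powersetCard 2 S

/-- The family `Λ(I)` of "potential cores": all sets of the form
`I^{(2)} \ (S₁^{(2)} ∪ ⋯ ∪ S_ℓ^{(2)})` with each `Sᵢ ⊆ I`, `|Sᵢ| ≥ n^{2β}`, and
`Σᵢ |Sᵢ| ≤ 2·k·n^{β}`. -/
noncomputable def Lambda {α : Type*} (n k : ℕ) (β : ℝ) (I : Finset α) :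
    Set (Finset (Finset α)) :=
  {C | ∃ (l : ℕ) (S : Fin l → Finset α),
        (∀ i, S i ⊆ I ∧ (n : ℝ) ^ (2 * β) ≤ ((S i).card : ℝ)) ∧
        (∑ i, ((S i).card : ℝ)) ≤ 2 * k * (n : ℝ) ^ β ∧
        C = pairs I \ Finset.univ.biUnion fun i => pairs (S i)}

/-!
The family `S₁, …, S_ℓ` is recorded by its incidence set `{(i, v) | v ∈ Sᵢ}`, from which the
corresponding member of `Λ(I)` can be read off. Its size is `Σ |Sᵢ| ≤ M := ⌊2 k n ^ β⌋`, and since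
the `Sᵢ` are nonempty also `ℓ ≤ M`, so it is an at most `M`-element subset of a set of size `M k`,
of which there are at most `(M k + 1) ^ M`. For `k` polynomial in `n`, the base `M k + 1` is
eventually below `2 ^ (n ^ β / 2)`, and `(2 ^ (n ^ β / 2)) ^ (2 k n ^ β) = 2 ^ (k n ^ (2 β))`.
-/

section

open Asymptotics Filter Finset

universe u

variable {α : Type*}

lemma sum_range_choose_le_add_one_pow (N m : ℕ) :
    ∑ i ∈ range (m + 1), N.choose i ≤ (N + 1) ^ m := by
  rw [add_pow]
  refine sum_le_sum fun i hi => ?_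
  have hmi : 0 < m.choose i := Nat.choose_pos (mem_range_succ_iff.1 hi)
  calc N.choose i ≤ N ^ i := Nat.choose_le_pow N i
    _ ≤ N ^ i * 1 ^ (m - i) * m.choose i := by
      simpa using Nat.le_mul_of_pos_right (N ^ i) hmi

lemma card_powerset_filter_card_le (s : Finset α) (m : ℕ) :
    #{t ∈ s.powerset | #t ≤ m} ≤ (#s + 1) ^ m := by
  have hsub : ({t ∈ s.powerset | #t ≤ m} : Finset (Finset α)) ⊆
      (range (m + 1)).biUnion fun i => s.powersetCard i := by
    intro t ht
    simpa [mem_powersetCard, Nat.lt_succ_iff, and_comm] using ht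
  calc #{t ∈ s.powerset | #t ≤ m}
      ≤ ∑ i ∈ range (m + 1), #(s.powersetCard i) := (card_le_card hsub).trans card_biUnion_le
    _ = ∑ i ∈ range (m + 1), (#s).choose i := by simp only [card_powersetCard]
    _ ≤ (#s + 1) ^ m := sum_range_choose_le_add_one_pow _ _

lemma card_le_sum_card {ι : Type*} [Fintype ι] {S : ι → Finset α} (hS : ∀ i, (S i).Nonempty) :
    Fintype.card ι ≤ ∑ i, #(S i) := by
  simpa using card_nsmul_le_sum univ (fun i => #(S i)) 1 fun i _ => (hS i).card_pos

/-- The incidence set `{(i, v) | v ∈ Sᵢ}` of a finite family of sets, which encodes the family.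
The indices are natural numbers so that families of different lengths are encoded in one type. -/
noncomputable def incidences {l : ℕ} (S : Fin l → Finset α) : Finset (ℕ × α) :=
  univ.biUnion fun i : Fin l => {(i : ℕ)} ×ˢ S i

/-- The pairs in `I` lying in no fibre `{v | (i, v) ∈ F}`: this decodes the incidence set `F` of a
family to the member `I^{(2)} \ (S₁^{(2)} ∪ ⋯ ∪ S_ℓ^{(2)})` of `Λ(I)`. -/
noncomputable def uncoveredPairs (I : Finset α) (F : Finset (ℕ × α)) : Finset (Finset α) :=
  {p ∈ pairs I | ¬ ∃ i, {i} ×ˢ p ⊆ F}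

section Incidences

variable {l : ℕ} (S : Fin l → Finset α)

lemma mem_incidences {j : ℕ} {v : α} :
    (j, v) ∈ incidences S ↔ ∃ i : Fin l, (i : ℕ) = j ∧ v ∈ S i := by
  simp [incidences, eq_comm, and_comm]

lemma card_incidences_le : #(incidences S) ≤ ∑ i, #(S i) :=
  card_biUnion_le.trans_eq <| by simp only [card_product, card_singleton, one_mul]

lemma incidences_subset {I : Finset α} {m : ℕ} (hS : ∀ i, S i ⊆ I) (hl : l ≤ m) :
    incidences S ⊆ range m ×ˢ I := by
  rintro ⟨j, v⟩ hjv
  obtain ⟨i, rfl, hv⟩ := (mem_incidences S).1 hjv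
  exact mem_product.2 ⟨mem_range.2 (i.2.trans_le hl), hS i hv⟩

lemma exists_singleton_product_subset_incidences {p : Finset α} (hp : p.Nonempty) :
    (∃ j, {j} ×ˢ p ⊆ incidences S) ↔ ∃ i, p ⊆ S i := by
  constructor
  · rintro ⟨j, hj⟩
    have hmem : ∀ v ∈ p, ∃ i : Fin l, (i : ℕ) = j ∧ v ∈ S i := fun v hv =>
      (mem_incidences S).1 (hj (mk_mem_product (mem_singleton_self j) hv))
    obtain ⟨v, hv⟩ := hp
    obtain ⟨i, rfl, -⟩ := hmem v hv
    refine ⟨i, fun w hw => ?_⟩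
    obtain ⟨i', hi', hw'⟩ := hmem w hw
    rwa [Fin.ext hi'] at hw'
  · rintro ⟨i, hi⟩
    exact ⟨i, (product_subset_product_right hi).trans
      (subset_biUnion_of_mem (fun i : Fin l => {(i : ℕ)} ×ˢ S i) (mem_univ i))⟩

lemma uncoveredPairs_incidences (I : Finset α) :
    uncoveredPairs I (incidences S) = pairs I \ univ.biUnion fun i => pairs (S i) := by
  ext p
  rw [uncoveredPairs, mem_filter, Finset.mem_sdiff]
  refine and_congr_right fun hpI => ?_
  have hp : #p = 2 := (mem_powersetCard.1 hpI).2
  have hne : p.Nonempty := card_pos.1 (hp ▸ two_pos)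
  simp only [exists_singleton_product_subset_incidences S hne, pairs, mem_biUnion, mem_univ,
    true_and, mem_powersetCard, hp, and_true]

end Incidences

lemma Lambda_subset_image_uncoveredPairs {n : ℕ} (hn : 0 < n) (k : ℕ) (β : ℝ) (I : Finset α) :
    Lambda n k β I ⊆
      ({F ∈ (range ⌊2 * k * (n : ℝ) ^ β⌋₊ ×ˢ I).powerset | #F ≤ ⌊2 * k * (n : ℝ) ^ β⌋₊} :
        Finset (Finset (ℕ × α))).image (uncoveredPairs I) := by
  rintro _ ⟨l, S, hS, hsum, rfl⟩
  have hcard : ∑ i, #(S i) ≤ ⌊2 * k * (n : ℝ) ^ β⌋₊ := Nat.le_floor (by exact_mod_cast hsum)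
  have hnonempty : ∀ i, (S i).Nonempty := fun i =>
    card_pos.1 <| by exact_mod_cast (by positivity : (0 : ℝ) < n ^ (2 * β)).trans_le (hS i).2
  have hl : l ≤ ⌊2 * k * (n : ℝ) ^ β⌋₊ := by
    simpa using (card_le_sum_card hnonempty).trans hcard
  have hsubset := incidences_subset S (fun i => (hS i).1) hl
  exact mem_image.2 ⟨incidences S, mem_filter.2
    ⟨mem_powerset.2 hsubset, (card_incidences_le S).trans hcard⟩, uncoveredPairs_incidences S I⟩

lemma ncard_Lambda_le {n : ℕ} (hn : 0 < n) (k : ℕ) (β : ℝ) (I : Finset α) :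
    (Lambda n k β I).ncard ≤
      (⌊2 * k * (n : ℝ) ^ β⌋₊ * #I + 1) ^ ⌊2 * k * (n : ℝ) ^ β⌋₊ := by
  have hsubset := Lambda_subset_image_uncoveredPairs hn k β I
  set M := ⌊2 * k * (n : ℝ) ^ β⌋₊
  set codes : Finset (Finset (ℕ × α)) := {F ∈ (range M ×ˢ I).powerset | #F ≤ M}
  calc (Lambda n k β I).ncard
      ≤ #(codes.image (uncoveredPairs I)) :=
        (Set.ncard_le_ncard hsubset (finite_toSet _)).trans_eq (Set.ncard_coe_finset _)
    _ ≤ #codes := card_image_le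
    _ ≤ (#(range M ×ˢ I) + 1) ^ M := card_powerset_filter_card_le _ _
    _ = (M * #I + 1) ^ M := by rw [card_product, card_range]

lemma ncard_Lambda_le_two_rpow {n : ℕ} (hn : 0 < n) {k : ℕ} {β : ℝ} {I : Finset α} (hI : #I = k)
    (hbase : 2 * k * (n : ℝ) ^ β * k + 1 ≤ 2 ^ ((n : ℝ) ^ β / 2)) :
    ((Lambda n k β I).ncard : ℝ) ≤ 2 ^ ((k : ℝ) * (n : ℝ) ^ (2 * β)) := by
  have hfloor : (⌊2 * k * (n : ℝ) ^ β⌋₊ : ℝ) ≤ 2 * k * (n : ℝ) ^ β := Nat.floor_le (by positivity)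
  have hncard := hI ▸ ncard_Lambda_le hn k β I
  set M := ⌊2 * k * (n : ℝ) ^ β⌋₊
  calc ((Lambda n k β I).ncard : ℝ)
      ≤ (M * k + 1) ^ M := by exact_mod_cast hncard
    _ ≤ (2 ^ ((n : ℝ) ^ β / 2)) ^ M := by
      gcongr
      exact le_trans (by gcongr) hbase
    _ = 2 ^ ((n : ℝ) ^ β / 2 * M) := (Real.rpow_mul_natCast zero_le_two _ _).symm
    _ ≤ 2 ^ ((n : ℝ) ^ β / 2 * (2 * k * (n : ℝ) ^ β)) := by
      gcongr
      exact one_le_two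
    _ = 2 ^ ((k : ℝ) * (n : ℝ) ^ (2 * β)) := by
      rw [two_mul β, Real.rpow_add (by positivity)]
      ring_nf

lemma isLittleO_rpow_rpow_mul_rpow (a : ℝ) {b c β : ℝ} (hb : 1 < b) (hc : 0 < c)
    (hβ : 0 < β) : (fun x : ℝ => x ^ a) =o[atTop] fun x => b ^ (c * x ^ β) := by
  have hexp : (fun x : ℝ => (x ^ β) ^ (a / β)) =o[atTop]
      fun x => Real.exp (Real.log b * c * x ^ β) :=
    (isLittleO_rpow_exp_pos_mul_atTop (a / β) (mul_pos (Real.log_pos hb) hc)).comp_tendsto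
      (tendsto_rpow_atTop hβ)
  refine hexp.congr' ?_ (.of_forall fun x => ?_)
  · filter_upwards [eventually_ge_atTop 0] with x hx
    rw [← Real.rpow_mul hx, mul_div_cancel₀ a hβ.ne']
  · simp only [Real.rpow_def_of_pos (zero_lt_one.trans hb), mul_assoc]

lemma eventually_mul_rpow_add_one_le_rpow (C a : ℝ) {b c β : ℝ} (hb : 1 < b) (hc : 0 < c)
    (hβ : 0 < β) : ∀ᶠ x : ℝ in atTop, C * x ^ a + 1 ≤ b ^ (c * x ^ β) := by
  have hlittleO : (fun x : ℝ => C * x ^ a + x ^ (0 : ℝ)) =o[atTop] fun x => b ^ (c * x ^ β) :=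
    ((isLittleO_rpow_rpow_mul_rpow a hb hc hβ).const_mul_left C).add
      (isLittleO_rpow_rpow_mul_rpow 0 hb hc hβ)
  filter_upwards [hlittleO.bound one_pos] with x hx
  rw [Real.rpow_zero, one_mul, Real.norm_of_nonneg (Real.rpow_nonneg (by positivity) _)] at hx
  exact (le_abs_self _).trans hx

theorem Lambda_card_bound_general {β : ℝ} (hβ : 0 < β) (A : ℝ) :
    ∀ᶠ n : ℕ in atTop, ∀ k : ℕ, (k : ℝ) ≤ (n : ℝ) ^ A →
      ∀ (α : Type u) (I : Finset α), #I = k →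
        ((Lambda n k β I).ncard : ℝ) ≤ 2 ^ ((k : ℝ) * (n : ℝ) ^ (2 * β)) := by
  have hgrowth := tendsto_natCast_atTop_atTop.eventually
    (eventually_mul_rpow_add_one_le_rpow 2 (A + β + A) one_lt_two one_half_pos hβ)
  filter_upwards [hgrowth, eventually_gt_atTop 0] with n hn hn0 k hk α I hI
  refine ncard_Lambda_le_two_rpow hn0 hI ?_
  calc 2 * k * (n : ℝ) ^ β * k + 1
      ≤ 2 * (n : ℝ) ^ A * (n : ℝ) ^ β * (n : ℝ) ^ A + 1 := by gcongr
    _ = 2 * (n : ℝ) ^ (A + β + A) + 1 := by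
      rw [Real.rpow_add (by positivity), Real.rpow_add (by positivity)]
      ring
    _ ≤ 2 ^ (1 / 2 * (n : ℝ) ^ β) := hn
    _ = 2 ^ ((n : ℝ) ^ β / 2) := by rw [one_div_mul_eq_div]

end

/-- **Observation 8.1 of the paper.**  For fixed `β ∈ (0,1)` and all large `n`,
for every `1 ≤ k ≤ n` and every set `I` of size `k`, `|Λ(I)| ≤ 2^{k·n^{2β}}`. -/
theorem Lambda_card_bound :
    ∀ β : ℝ, 0 < β → β < 1 →
      ∃ n₀ : ℕ, ∀ n : ℕ, n₀ ≤ n →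
        ∀ k : ℕ, 1 ≤ k → k ≤ n →
          ∀ (α : Type) (I : Finset α), I.card = k →
            ((Lambda n k β I).ncard : ℝ) ≤ 2 ^ ((k : ℝ) * (n : ℝ) ^ (2 * β)) := by
  intro β hβ _
  obtain ⟨n₀, h⟩ := Filter.eventually_atTop.1 (Lambda_card_bound_general hβ 1)
  exact ⟨n₀, fun n hn k _ hk => h n hn k (by simpa using hk)⟩

end Stmt8
end

section
/- Let n, k be positive integers, let β > 0, let G' be a graph on vertex set [n], let I ⊆ [n] with |I| = k, and let L' ⊆ L ⊆ [n]. Suppose that the number of edges of G' with one endpoint in L and the other in I is at most k·n^{β}, and that |N_{G'}(x) ∩ I| ≤ k·n^{−2β} for every x ∈ L \ L'. Define C_L = I^{(2)} \ ⋃_{x∈L} (N_{G'}(x))^{(2)} and C_{L'} = I^{(2)} \ ⋃_{x∈L'} (N_{G'}(x))^{(2)}. Then |C_L| ≥ |C_{L'}| − 2·k²·n^{−β}. -/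
/-!
A pair of `C_{L'}` that is not in `C_L` lies in `N(x) ∩ I` for some `x ∈ L \ L'`, so the loss is at
most `∑ |N(x) ∩ I|² / 2` over these `x`. One factor `|N(x) ∩ I|` is bounded by the maximal degree
`d` into `I`; the other sums to at most twice the number `m` of edges between `L` and `I`, since an
edge inside `L ∩ I` is seen from both of its ends. The loss is thus at most `d m`, which for
`d = k n^{-2β}` and `m = k n^β` is `k² n^{-β}`.
-/

open scoped Classical

namespace Stmt9

/-- `S^{(2)}`: the unordered pairs of distinct elements of `S`, encoded as the
2-element subsets of `S`. -/
def pairs {α : Type*} (S : Finset α) : Finset (Finset α) :=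
  Finset.powersetCard 2 S

/-- The neighbourhood of `x` in the graph (edge set) `G`. -/
noncomputable def nbr {n : ℕ} (G : Finset (Sym2 (Fin n))) (x : Fin n) : Finset (Fin n) :=
  Finset.univ.filter fun y => s(x, y) ∈ G

/-- The core of `I` with respect to a set `L` of vertices:
`C_L = I^{(2)} \ ⋃_{x ∈ L} (N_{G'}(x))^{(2)}`. -/
noncomputable def core {n : ℕ} (G' : Finset (Sym2 (Fin n))) (I L : Finset (Fin n)) :
    Finset (Finset (Fin n)) :=
  pairs I \ L.biUnion fun x => pairs (nbr G' x)

section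

open Finset

theorem card_pairs_le_sq_div_two {α : Type*} (S : Finset α) :
    (#(pairs S) : ℝ) ≤ (#S : ℝ) ^ 2 / 2 := by
  simpa [pairs] using Nat.choose_le_pow_div (α := ℝ) 2 #S

theorem card_le_two_mul_card_image_sym2Mk {α : Type*} [DecidableEq α] (A : Finset (α × α)) :
    #A ≤ 2 * #(A.image fun p => s(p.1, p.2)) := by
  refine card_le_mul_card_image A 2 fun e _ => ?_
  induction e with
  | _ a b =>
    have hfiber : {p ∈ A | s(p.1, p.2) = s(a, b)} ⊆ {(a, b), (b, a)} := by
      rintro ⟨x, y⟩ hxy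
      simpa using (mem_filter.mp hxy).2
    exact (card_le_card hfiber).trans card_le_two

variable {n : ℕ} (G : Finset (Sym2 (Fin n)))

/-- The set of edges of `G` with one end in `L` and the other in `I`; being a set of unordered
pairs, it contains an edge inside `L ∩ I` only once. -/
def edgesBetween (L I : Finset (Fin n)) : Finset (Sym2 (Fin n)) :=
  G.filter fun e => ∃ x y : Fin n, e = s(x, y) ∧ x ∈ L ∧ y ∈ I

theorem edgesBetween_mono_left {S L : Finset (Fin n)} (hSL : S ⊆ L) (I : Finset (Fin n)) :
    edgesBetween G S I ⊆ edgesBetween G L I :=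
  monotone_filter_right G fun _ _ ⟨x, y, he, hx, hy⟩ => ⟨x, y, he, hSL hx, hy⟩

theorem sum_card_nbr_inter_le (L I : Finset (Fin n)) :
    ∑ x ∈ L, #(nbr G x ∩ I) ≤ 2 * #(edgesBetween G L I) := by
  let incidences : Finset (Fin n × Fin n) := {p ∈ L ×ˢ I | s(p.1, p.2) ∈ G}
  have hsum : ∑ x ∈ L, #(nbr G x ∩ I) = #incidences := by
    simp only [incidences, card_filter, sum_product]
    refine sum_congr rfl fun x _ => ?_
    rw [← card_filter, nbr, filter_inter, univ_inter]
  have himage : incidences.image (fun p => s(p.1, p.2)) ⊆ edgesBetween G L I := by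
    simp only [incidences, image_subset_iff, mem_filter, mem_product, edgesBetween]
    rintro ⟨x, y⟩ ⟨⟨hx, hy⟩, hxy⟩
    exact ⟨hxy, x, y, rfl, hx, hy⟩
  calc ∑ x ∈ L, #(nbr G x ∩ I) = #incidences := hsum
    _ ≤ 2 * #(incidences.image fun p => s(p.1, p.2)) := card_le_two_mul_card_image_sym2Mk _
    _ ≤ 2 * #(edgesBetween G L I) := by gcongr

variable (I L L' : Finset (Fin n))

theorem core_sdiff_core_subset :
    core G I L' \ core G I L ⊆ (L \ L').biUnion fun x => pairs (nbr G x ∩ I) := by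
  intro p hp
  simp only [core, pairs, mem_sdiff, mem_biUnion, mem_powersetCard, subset_inter_iff] at hp ⊢
  obtain ⟨⟨⟨hpI, hcard⟩, hpL'⟩, hpL⟩ := hp
  obtain ⟨x, hxL, hpx, -⟩ : ∃ x ∈ L, p ⊆ nbr G x ∧ #p = 2 := by
    by_contra h
    exact hpL ⟨⟨hpI, hcard⟩, h⟩
  exact ⟨x, ⟨hxL, fun hxL' => hpL' ⟨x, hxL', hpx, hcard⟩⟩, ⟨hpx, hpI⟩, hcard⟩

theorem card_core_le_card_core_add_sum :
    #(core G I L') ≤ #(core G I L) + ∑ x ∈ L \ L', #(pairs (nbr G x ∩ I)) :=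
  calc #(core G I L') ≤ #(core G I L' \ core G I L) + #(core G I L) :=
        card_le_card_sdiff_add_card
    _ ≤ ∑ x ∈ L \ L', #(pairs (nbr G x ∩ I)) + #(core G I L) := by
        gcongr
        exact (card_le_card (core_sdiff_core_subset G I L L')).trans card_biUnion_le
    _ = #(core G I L) + ∑ x ∈ L \ L', #(pairs (nbr G x ∩ I)) := add_comm _ _

variable {G I L L'}

theorem sum_card_pairs_nbr_inter_le {S : Finset (Fin n)} {d : ℝ} (hd : 0 ≤ d)
    (hdeg : ∀ x ∈ S, (#(nbr G x ∩ I) : ℝ) ≤ d) :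
    ∑ x ∈ S, (#(pairs (nbr G x ∩ I)) : ℝ) ≤ d * #(edgesBetween G S I) :=
  calc ∑ x ∈ S, (#(pairs (nbr G x ∩ I)) : ℝ)
      ≤ ∑ x ∈ S, d / 2 * (#(nbr G x ∩ I) : ℝ) := by
        refine sum_le_sum fun x hx => (card_pairs_le_sq_div_two _).trans ?_
        rw [sq, mul_div_right_comm]
        gcongr
        exact hdeg x hx
    _ = d / 2 * ((∑ x ∈ S, #(nbr G x ∩ I) : ℕ) : ℝ) := by rw [← mul_sum, Nat.cast_sum]
    _ ≤ d / 2 * ((2 * #(edgesBetween G S I) : ℕ) : ℝ) := by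
        gcongr
        exact sum_card_nbr_inter_le G S I
    _ = d * #(edgesBetween G S I) := by push_cast; ring

theorem core_comparison_general {d m : ℝ} (hd : 0 ≤ d)
    (hedges : (#(edgesBetween G L I) : ℝ) ≤ m)
    (hdeg : ∀ x ∈ L \ L', (#(nbr G x ∩ I) : ℝ) ≤ d) :
    (#(core G I L') : ℝ) - d * m ≤ #(core G I L) := by
  have hloss : ∑ x ∈ L \ L', (#(pairs (nbr G x ∩ I)) : ℝ) ≤ d * m :=
    calc ∑ x ∈ L \ L', (#(pairs (nbr G x ∩ I)) : ℝ)
        ≤ d * #(edgesBetween G (L \ L') I) := sum_card_pairs_nbr_inter_le hd hdeg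
      _ ≤ d * #(edgesBetween G L I) := by
          gcongr
          exact edgesBetween_mono_left G sdiff_subset I
      _ ≤ d * m := by gcongr
  have hcard : (#(core G I L') : ℝ)
      ≤ #(core G I L) + ∑ x ∈ L \ L', (#(pairs (nbr G x ∩ I)) : ℝ) := by
    exact_mod_cast card_core_le_card_core_add_sum G I L L'
  linarith

end

theorem rpow_neg_two_mul_mul_rpow {x : ℝ} (hx : 0 < x) (β : ℝ) :
    x ^ (-(2 * β)) * x ^ β = x ^ (-β) := by
  rw [← Real.rpow_add hx]
  ring_nf

/-- **Lemma 9.4 of the paper.**  If `e(G'[L, I]) ≤ k·n^{β}` and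
`|N_{G'}(x) ∩ I| ≤ k·n^{−2β}` for all `x ∈ L \ L'`, then
`|C_L| ≥ |C_{L'}| − 2k²n^{−β}`. -/
theorem core_comparison (n k : ℕ) (hn : 0 < n) (hk : 0 < k) (β : ℝ) (hβ : 0 < β)
    (G' : Finset (Sym2 (Fin n))) (I L L' : Finset (Fin n))
    (hI : I.card = k) (hL'L : L' ⊆ L)
    (hedges :
      (((G'.filter fun e => ∃ x y : Fin n, e = s(x, y) ∧ x ∈ L ∧ y ∈ I).card : ℝ))
        ≤ k * (n : ℝ) ^ β)
    (hdeg : ∀ x ∈ L \ L', ((nbr G' x ∩ I).card : ℝ) ≤ k * (n : ℝ) ^ (-(2 * β))) :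
    ((core G' I L').card : ℝ) - 2 * k ^ 2 * (n : ℝ) ^ (-β)
      ≤ ((core G' I L).card : ℝ) := by
  have hbound : k * (n : ℝ) ^ (-(2 * β)) * (k * (n : ℝ) ^ β) ≤ 2 * k ^ 2 * (n : ℝ) ^ (-β) := by
    rw [mul_mul_mul_comm, rpow_neg_two_mul_mul_rpow (Nat.cast_pos.mpr hn), ← sq]
    gcongr
    exact le_mul_of_one_le_left (sq_nonneg _) one_le_two
  exact (sub_le_sub_left hbound _).trans (core_comparison_general (by positivity) hedges hdeg)

end Stmt9
end

section
/- Let n, r, k, ℓ be positive integers with ℓ ≤ k, and let [n] be partitioned into parts V₁,…,V_{m}, each of size r. Let π(I) denote the set of indices j such that I ∩ V_j ≠ ∅. Then the number of k-element subsets I ⊆ [n] with |π(I)| = ℓ is at most C(n, ℓ) · C(r·ℓ, k − ℓ), where C(a,b) denotes the binomial coefficient. -/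
open scoped Classical

/-!
A set `I` meeting exactly `ℓ` parts contains a transversal `S` of the parts it meets, with `ℓ`
points. The other `k - ℓ` points of `I` lie in the union of these parts, which has `r * ℓ` points,
so there are at most `(r * ℓ).choose (k - ℓ)` ways to extend a given `S` to such an `I`.
-/

section

open Finset

variable {α β : Type*} [DecidableEq β] {f : α → β}

theorem card_filter_mem_le_mul {s : Finset α} {t : Finset β} {r : ℕ}
    (hr : ∀ b ∈ t, #{x ∈ s | f x = b} ≤ r) : #{x ∈ s | f x ∈ t} ≤ r * #t := by
  refine card_le_mul_card_image_of_maps_to (fun x hx ↦ (mem_filter.mp hx).2) r fun b hb ↦ ?_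
  exact (card_le_card <| filter_subset_filter _ <| filter_subset _ s).trans (hr b hb)

theorem exists_subset_image_eq_card_eq (f : α → β) (I : Finset α) :
    ∃ S ⊆ I, S.image f = I.image f ∧ #S = #(I.image f) := by
  have surjOn : Set.SurjOn f I (I.image f) := by
    rw [coe_image]
    exact Set.surjOn_image f I
  obtain ⟨S, hSI, injOn, image_eq⟩ := exists_subset_injOn_image_eq_of_surjOn _ _ surjOn
  exact ⟨S, mod_cast hSI, image_eq, by rw [← image_eq, card_image_of_injOn injOn]⟩

theorem filter_card_image_eq_subset_biUnion [DecidableEq α] (f : α → β) (s : Finset α)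
    (k ℓ : ℕ) :
    {I ∈ powersetCard k s | #(I.image f) = ℓ} ⊆
      (powersetCard ℓ s).biUnion fun S ↦
        (powersetCard (k - ℓ) {x ∈ s | f x ∈ S.image f}).image (S ∪ ·) := by
  intro I hI
  obtain ⟨hI, hIℓ⟩ := mem_filter.mp hI
  obtain ⟨hIs, hIk⟩ := mem_powersetCard.mp hI
  obtain ⟨S, hSI, image_eq, card_eq⟩ := exists_subset_image_eq_card_eq f I
  have hSℓ : #S = ℓ := card_eq.trans hIℓ
  have rest_subset : I \ S ⊆ {x ∈ s | f x ∈ S.image f} := fun x hx ↦ by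
    have hxI : x ∈ I := sdiff_subset hx
    exact mem_filter.mpr ⟨hIs hxI, image_eq ▸ mem_image_of_mem f hxI⟩
  have card_rest : #(I \ S) = k - ℓ := by rw [card_sdiff_of_subset hSI, hIk, hSℓ]
  exact mem_biUnion.mpr ⟨S, mem_powersetCard.mpr ⟨hSI.trans hIs, hSℓ⟩,
    mem_image.mpr ⟨I \ S, mem_powersetCard.mpr ⟨rest_subset, card_rest⟩,
      union_sdiff_of_subset hSI⟩⟩

theorem count_sets_by_projection_general {s : Finset α} {r : ℕ}
    (hr : ∀ b, #{x ∈ s | f x = b} ≤ r) (k ℓ : ℕ) :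
    #{I ∈ powersetCard k s | #(I.image f) = ℓ} ≤ (#s).choose ℓ * (r * ℓ).choose (k - ℓ) := by
  have card_parts_le {S : Finset α} (hS : #S = ℓ) : #{x ∈ s | f x ∈ S.image f} ≤ r * ℓ :=
    calc
      #{x ∈ s | f x ∈ S.image f} ≤ r * #(S.image f) := card_filter_mem_le_mul fun b _ ↦ hr b
      _ ≤ r * ℓ := Nat.mul_le_mul_left r (hS ▸ card_image_le)
  calc
    #{I ∈ powersetCard k s | #(I.image f) = ℓ}
      ≤ #((powersetCard ℓ s).biUnion fun S ↦
          (powersetCard (k - ℓ) {x ∈ s | f x ∈ S.image f}).image (S ∪ ·)) :=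
      card_le_card (filter_card_image_eq_subset_biUnion f s k ℓ)
    _ ≤ #(powersetCard ℓ s) * (r * ℓ).choose (k - ℓ) := by
      refine card_biUnion_le_card_mul _ _ _ fun S hS ↦ card_image_le.trans ?_
      rw [card_powersetCard]
      exact Nat.choose_le_choose _ (card_parts_le (mem_powersetCard.mp hS).2)
    _ = (#s).choose ℓ * (r * ℓ).choose (k - ℓ) := by rw [card_powersetCard]

end

/-- **The counting bound from the proof of Theorem 3.1.**
If `[n]` is partitioned into parts of size `r` (the fibres of `P`), then the number of
`k`-element subsets `I ⊆ [n]` meeting exactly `ℓ` parts is at most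
`C(n, ℓ)·C(r·ℓ, k − ℓ)`. -/
theorem count_sets_by_projection (n r k ℓ m : ℕ)
    (hn : 0 < n) (hr : 0 < r) (hk : 0 < k) (hℓ : 0 < ℓ) (hℓk : ℓ ≤ k)
    (P : Fin n → Fin m)
    (hparts : ∀ j : Fin m, (Finset.univ.filter fun x => P x = j).card = r) :
    ((Finset.powersetCard k (Finset.univ : Finset (Fin n))).filter
        (fun I => (I.image P).card = ℓ)).card
      ≤ Nat.choose n ℓ * Nat.choose (r * ℓ) (k - ℓ) := by
  simpa only [Finset.card_univ, Fintype.card_fin] using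
    count_sets_by_projection_general (fun j ↦ (hparts j).le) k ℓ
end

section
/- Let V be a finite vertex set, let A and B be graphs on V with A ∩ B = ∅ and A triangle-free, and let C ⊆ B be maximal (under inclusion) such that A ∪ C is triangle-free; set M = A ∪ C. Let I ⊆ V and let e = xy ∈ B with x, y ∈ I be such that for every vertex v ∉ I it is not the case that both xv ∈ A ∪ B and yv ∈ A ∪ B. Then I is not an independent set of M; that is, M contains an edge with both endpoints in I. -/
namespace Stmt13

/-- A graph (identified with its edge set) is triangle-free if no three of its edges
form a triangle. -/
def TriangleFree {V : Type*} (H : Set (Sym2 V)) : Prop :=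
  ¬ ∃ x y z : V, x ≠ y ∧ x ≠ z ∧ y ≠ z ∧
      s(x, y) ∈ H ∧ s(x, z) ∈ H ∧ s(y, z) ∈ H

theorem TriangleFree.exists_common_neighbor {V : Type*} {H : Set (Sym2 V)} {e : Sym2 V}
    (hH : TriangleFree H) (hins : ¬ TriangleFree (insert e H)) :
    ∃ v ∉ e, ∀ u ∈ e, s(u, v) ∈ H := by
  have opposite_vertex {a b c : V} (hab : s(a, b) = e) (hac : a ≠ c) (hbc : b ≠ c)
      (hacH : s(a, c) ∈ insert e H) (hbcH : s(b, c) ∈ insert e H) :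
      ∃ v ∉ e, ∀ u ∈ e, s(u, v) ∈ H := by
    have hc : c ∉ e := by simp [← hab, hac.symm, hbc.symm]
    have mem_of_insert {u : V} (hu : s(u, c) ∈ insert e H) : s(u, c) ∈ H :=
      hu.resolve_left fun h => hc (h ▸ Sym2.mem_mk_right u c)
    refine ⟨c, hc, ?_⟩
    rw [← hab, Sym2.ball]
    exact ⟨mem_of_insert hacH, mem_of_insert hbcH⟩
  obtain ⟨p, q, r, hpq, hpr, hqr, hpqH, hprH, hqrH⟩ := not_not.mp hins
  by_cases hpqe : s(p, q) = e
  · exact opposite_vertex hpqe hpr hqr hprH hqrH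
  by_cases hpre : s(p, r) = e
  · exact opposite_vertex hpre hpq hqr.symm hpqH (Sym2.eq_swap ▸ hqrH)
  by_cases hqre : s(q, r) = e
  · exact opposite_vertex hqre hpq.symm hpr.symm (Sym2.eq_swap ▸ hpqH) (Sym2.eq_swap ▸ hprH)
  exact absurd ⟨p, q, r, hpq, hpr, hqr, hpqH.resolve_left hpqe, hprH.resolve_left hpre,
    hqrH.resolve_left hqre⟩ hH

theorem exists_common_neighbor_of_maximal {V : Type*} {A B C : Set (Sym2 V)} {e : Sym2 V}
    (hC : Maximal (fun D => D ⊆ B ∧ TriangleFree (A ∪ D)) C) (heB : e ∈ B) (heC : e ∉ C) :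
    ∃ v ∉ e, ∀ u ∈ e, s(u, v) ∈ A ∪ C := by
  refine hC.prop.2.exists_common_neighbor fun h => heC ?_
  rw [← Set.union_insert] at h
  exact hC.mem_of_prop_insert ⟨Set.insert_subset heB hC.prop.1, h⟩

/-- If `xy ∉ C`, then by maximality `xy` closes a triangle with two edges of `A ∪ C ⊆ A ∪ B`,
which forces the third vertex into `I`. -/
theorem not_independent_of_maximal_cleaning_general {V : Type*} {A B C : Set (Sym2 V)}
    (hC : Maximal (fun D => D ⊆ B ∧ TriangleFree (A ∪ D)) C)
    {I : Set V} {x y : V} (hxy : x ≠ y) (hyI : y ∈ I) (heB : s(x, y) ∈ B)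
    (hclosed : ∀ v : V, v ∉ I → ¬ (s(x, v) ∈ A ∪ B ∧ s(y, v) ∈ A ∪ B)) :
    ∃ w ∈ I, x ≠ w ∧ s(x, w) ∈ A ∪ C := by
  by_cases heC : s(x, y) ∈ C
  · exact ⟨y, hyI, hxy, Or.inr heC⟩
  obtain ⟨v, hve, hv⟩ := exists_common_neighbor_of_maximal hC heB heC
  obtain ⟨hxv, hyv⟩ := Sym2.ball.mp hv
  have hsub : A ∪ C ⊆ A ∪ B := Set.union_subset_union_right A hC.prop.1
  have hvI : v ∈ I := by_contra fun h => hclosed v h ⟨hsub hxv, hsub hyv⟩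
  have hxv_ne : x ≠ v := by
    rintro rfl
    exact hve (Sym2.mem_mk_left x y)
  exact ⟨v, hvI, hxv_ne, hxv⟩

/-- **Claim 9.6 of the paper.**
Let `A`, `B` be disjoint graphs on a finite vertex set with `A` triangle-free, and let
`C ⊆ B` be maximal such that `M = A ∪ C` is triangle-free.  If `e = xy ∈ B` has both
endpoints in `I`, and no vertex `v ∉ I` satisfies both `xv ∈ A ∪ B` and `yv ∈ A ∪ B`,
then `I` is not independent in `M`: some edge of `M` has both (distinct) endpoints
in `I`. -/
theorem not_independent_of_maximal_cleaning {V : Type*} [Fintype V]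
    (A B C : Set (Sym2 V)) (hAB : A ∩ B = ∅) (hA : TriangleFree A)
    (hCB : C ⊆ B) (hAC : TriangleFree (A ∪ C))
    (hmax : ∀ C', C ⊆ C' → C' ⊆ B → TriangleFree (A ∪ C') → C' = C)
    (I : Set V) (x y : V) (hxy : x ≠ y) (hxI : x ∈ I) (hyI : y ∈ I)
    (heB : s(x, y) ∈ B)
    (hclosed : ∀ v : V, v ∉ I → ¬ (s(x, v) ∈ A ∪ B ∧ s(y, v) ∈ A ∪ B)) :
    ∃ u w : V, u ≠ w ∧ u ∈ I ∧ w ∈ I ∧ s(u, w) ∈ A ∪ C := by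
  obtain ⟨w, hwI, hxw, hxwM⟩ := not_independent_of_maximal_cleaning_general
    ⟨⟨hCB, hAC⟩, fun D hD hCD => (hmax D hCD hD.1 hD.2).le⟩ hxy hyI heB hclosed
  exact ⟨x, w, hxw, hxI, hwI, hxwM⟩

end Stmt13
end
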